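/- (Korn–Maxwell–Sobolev at p = 1) Let 𝔸 be an elliptic first-order homogeneous operator on ℝ³ with matrix representative A. Then there is c > 0 such that ‖F‖_{L^{3/2}(ℝ³)} ≤ c(‖A[F]‖_{L^{3/2}(ℝ³)} + ‖curl F‖_{L¹(ℝ³)}) for all F ∈ C_c^∞(ℝ³; ℝ^{3×3}). -/

import Mathlib

open MeasureTheory
open scoped ENNReal

noncomputable def pd (j : Fin 3) (f : (Fin 3 → ℝ) → ℝ) (x : Fin 3 → ℝ) : ℝ :=
  fderiv ℝ f x (Pi.single j 1)

/-- The row-wise curl of a matrix field `F : ℝ³ → ℝ^{3×3}`. -/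
noncomputable def mcurl (F : (Fin 3 → ℝ) → Fin 3 → Fin 3 → ℝ) (x : Fin 3 → ℝ) :
    Fin 3 → Fin 3 → ℝ :=
  fun i => ![pd 1 (fun y => F y i 2) x - pd 2 (fun y => F y i 1) x,
             pd 2 (fun y => F y i 0) x - pd 0 (fun y => F y i 2) x,
             pd 0 (fun y => F y i 1) x - pd 1 (fun y => F y i 0) x]

/-- Ellipticity of the operator induced by `A`. -/
def IsElliptic {N : ℕ} (A : (Fin 3 → Fin 3 → ℝ) →ₗ[ℝ] (Fin N → ℝ)) : Prop :=
  ∀ ξ : Fin 3 → ℝ, ξ ≠ 0 →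
    Function.Injective (fun v : Fin 3 → ℝ => A (fun i j => v i * ξ j))


open MeasureTheory
open scoped ENNReal

/-- dyadic cube of generation `k` and index `n`. -/
def dyC (k : ℤ) (n : Fin 3 → ℤ) : Set (Fin 3 → ℝ) :=
  {y | ∀ i, ⌊(2:ℝ) ^ k * y i⌋ = n i}

lemma dyC_eq_pi (k : ℤ) (n : Fin 3 → ℤ) :
    dyC k n = Set.pi Set.univ (fun i => Set.Ico ((n i : ℝ) * (2:ℝ) ^ (-k)) (((n i : ℝ) + 1) * (2:ℝ) ^ (-k))) := by
  ext y
  simp only [dyC, Set.mem_ofPred_eq, Set.mem_pi, Set.mem_univ, true_implies, Set.mem_Ico]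
  refine forall_congr' fun i => ?_
  have h2 : (0:ℝ) < 2 ^ k := by positivity
  rw [Int.floor_eq_iff, zpow_neg, ← div_eq_mul_inv, ← div_eq_mul_inv, div_le_iff₀ h2, lt_div_iff₀ h2,
    mul_comm (y i)]

lemma measurableSet_dyC (k : ℤ) (n : Fin 3 → ℤ) : MeasurableSet (dyC k n) := by
  rw [dyC_eq_pi]
  exact MeasurableSet.univ_pi fun i => measurableSet_Ico

lemma volume_dyC (k : ℤ) (n : Fin 3 → ℤ) :
    volume (dyC k n) = ENNReal.ofReal ((2:ℝ) ^ (-k)) ^ 3 := by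
  rw [dyC_eq_pi, Real.volume_pi_Ico]
  have : ∀ i, ((n i : ℝ) + 1) * (2:ℝ) ^ (-k) - (n i : ℝ) * (2:ℝ) ^ (-k) = (2:ℝ) ^ (-k) := by
    intro i; ring
  simp only [this, Finset.prod_const, Finset.card_univ, Fintype.card_fin]

lemma dyC_step (k : ℤ) (x y : ℝ) (h : ⌊(2:ℝ) ^ (k+1) * x⌋ = ⌊(2:ℝ) ^ (k+1) * y⌋) :
    ⌊(2:ℝ) ^ k * x⌋ = ⌊(2:ℝ) ^ k * y⌋ := by
  have e : ∀ z : ℝ, ⌊(2:ℝ) ^ k * z⌋ = ⌊(2:ℝ) ^ (k+1) * z⌋ / 2 := by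
    intro z
    have := Int.floor_div_natCast ((2:ℝ) ^ (k+1) * z) 2
    have h2 : ((2:ℕ):ℤ) = 2 := rfl
    rw [h2] at this
    rw [← this]
    congr 1
    rw [zpow_add₀ (by norm_num)]
    push_cast
    ring
  rw [e, e, h]

lemma dyC_nest (m k : ℤ) (hmk : m ≤ k) (x y : ℝ) (h : ⌊(2:ℝ) ^ k * x⌋ = ⌊(2:ℝ) ^ k * y⌋) :
    ⌊(2:ℝ) ^ m * x⌋ = ⌊(2:ℝ) ^ m * y⌋ := by
  obtain ⟨d, rfl⟩ : ∃ d : ℕ, k = m + d := ⟨(k - m).toNat, by omega⟩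
  clear hmk
  induction d with
  | zero => simpa using h
  | succ d ih =>
    apply ih
    apply dyC_step
    convert h using 4 <;> push_cast <;> ring

lemma dyC_sub_ball (k : ℤ) (n : Fin 3 → ℤ) {y : Fin 3 → ℝ} (hy : y ∈ dyC k n) :
    ‖y - (fun i => (n i : ℝ) * (2:ℝ) ^ (-k))‖ ≤ (2:ℝ) ^ (-k) := by
  rw [dyC_eq_pi] at hy
  rw [pi_norm_le_iff_of_nonneg (by positivity)]
  intro i
  have := hy i (Set.mem_univ _)
  simp only [Set.mem_Ico] at this
  rw [Pi.sub_apply, Real.norm_eq_abs, abs_le]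
  constructor
  · have : (0:ℝ) < 2 ^ (-k) := by positivity
    linarith
  · linarith

lemma cz_decomp (f : (Fin 3 → ℝ) → ℝ) (hc : Continuous f) (hi : Integrable f) (l : ℝ≥0∞)
    (hl : l ≠ 0) (hl' : l ≠ ⊤) :
    ∃ (S : Set (ℤ × (Fin 3 → ℤ))),
      (S.PairwiseDisjoint (fun s => dyC s.1 s.2)) ∧
      (∀ s ∈ S, l * volume (dyC s.1 s.2) ≤ ∫⁻ x in dyC s.1 s.2, ‖f x‖ₑ) ∧
      (∀ s ∈ S, ∫⁻ x in dyC s.1 s.2, ‖f x‖ₑ ≤ 8 * l * volume (dyC s.1 s.2)) ∧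
      (∀ x, (∀ s ∈ S, x ∉ dyC s.1 s.2) → ‖f x‖ₑ ≤ l) := by
  classical
  let heavy : ℤ → (Fin 3 → ℤ) → Prop := fun k n =>
    l * volume (dyC k n) < ∫⁻ x in dyC k n, ‖f x‖ₑ
  let ix : ℤ → (Fin 3 → ℝ) → (Fin 3 → ℤ) := fun k x i => ⌊(2:ℝ) ^ k * x i⌋
  have hmem : ∀ k x, x ∈ dyC k (ix k x) := fun k x i => rfl
  have hix : ∀ k n x, x ∈ dyC k n → ix k x = n := fun k n x hx => funext hx
  have hnest : ∀ m k x y, m ≤ k → ix k x = ix k y → ix m x = ix m y := by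
    intro m k x y hmk h
    funext i
    exact dyC_nest m k hmk _ _ (congrFun h i)
  refine ⟨{s | heavy s.1 s.2 ∧ ∀ m < s.1, ∀ x ∈ dyC s.1 s.2, ¬ heavy m (ix m x)}, ?_, ?_, ?_, ?_⟩
  · rintro ⟨k, n⟩ hs ⟨k', n'⟩ hs' hne
    rw [Function.onFun, Set.disjoint_left]
    intro x hx hx'
    dsimp only at hx hx'
    rcases lt_trichotomy k k' with h | h | h
    · apply hs'.2 k h x hx'
      rw [hix _ _ _ hx]; exact hs.1
    · subst h
      apply hne
      rw [← hix _ _ _ hx, ← hix _ _ _ hx']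
    · apply hs.2 k' h x hx
      rw [hix _ _ _ hx']; exact hs'.1
  · rintro ⟨k, n⟩ hs
    exact hs.1.le
  · rintro ⟨k, n⟩ hs
    have hne : (dyC k n).Nonempty := by
      apply nonempty_of_measure_ne_zero (μ := volume)
      rw [volume_dyC]
      have : (0:ℝ) < 2 ^ (-k) := by positivity
      exact pow_ne_zero _ (ENNReal.ofReal_pos.2 this).ne'
    obtain ⟨x, hx⟩ := hne
    have h1 := hs.2 (k-1) (by simp) x hx
    simp only [heavy, not_lt] at h1
    have hsub : dyC k n ⊆ dyC (k-1) (ix (k-1) x) := by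
      intro y hy
      have : ix (k-1) y = ix (k-1) x := hnest _ k _ _ (by omega) (by rw [hix _ _ _ hx, hix _ _ _ hy])
      rw [← this]; exact hmem _ _
    calc _ ≤ ∫⁻ x in dyC (k-1) (ix (k-1) x), ‖f x‖ₑ := lintegral_mono_set hsub
      _ ≤ _ := h1
      _ = _ := by
        rw [volume_dyC, volume_dyC]
        have : (2:ℝ) ^ (-(k-1)) = 2 * 2 ^ (-k) := by
          rw [show -(k-1) = 1 + -k by ring, zpow_add₀ (by norm_num)]; simp
        rw [this, ENNReal.ofReal_mul (by norm_num), mul_pow]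
        rw [show ENNReal.ofReal 2 = 2 by simp]
        rw [mul_left_comm, ← mul_assoc]
        norm_num
  · intro x hx
    by_contra hcon
    rw [not_le] at hcon
    -- some heavy cube
    have hex : ∃ k, heavy k (ix k x) := by
      have hopen : IsOpen {y | l < ‖f y‖ₑ} := isOpen_lt continuous_const (by fun_prop)
      obtain ⟨ε, hε, hball⟩ := Metric.isOpen_iff.1 hopen x hcon
      obtain ⟨k, hk⟩ : ∃ k : ℕ, (2:ℝ) ^ (-(k:ℤ)) < ε / 2 := by
        obtain ⟨k, hk⟩ := exists_pow_lt_of_lt_one (half_pos hε) (by norm_num : (1/2:ℝ) < 1)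
        refine ⟨k, ?_⟩
        simpa [zpow_neg] using hk
      refine ⟨k, ?_⟩
      have hsub : dyC k (ix k x) ⊆ {y | l < ‖f y‖ₑ} := by
        intro y hy
        apply hball
        have h1 := dyC_sub_ball _ _ hy
        have h2 := dyC_sub_ball _ _ (hmem k x)
        rw [Metric.mem_ball, dist_eq_norm]
        calc ‖y - x‖ ≤ _ := norm_sub_le_norm_sub_add_norm_sub y _ x
          _ ≤ (2:ℝ) ^ (-(k:ℤ)) + (2:ℝ) ^ (-(k:ℤ)) := add_le_add h1 (by rw [norm_sub_rev]; exact h2)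
          _ < ε := by linarith
      simp only [heavy]
      rw [← setLIntegral_const]
      apply setLIntegral_strict_mono (measurableSet_dyC _ _) _ (by fun_prop)
      · rw [setLIntegral_const, volume_dyC]
        exact ENNReal.mul_ne_top hl' (by simp)
      · exact Filter.Eventually.of_forall hsub
      · rw [volume_dyC]
        have : (0:ℝ) < 2 ^ (-(k:ℤ)) := by positivity
        exact pow_ne_zero _ (ENNReal.ofReal_pos.2 this).ne'
    have hbdd : ∃ b : ℤ, ∀ k, heavy k (ix k x) → b ≤ k := by
      have hfin : (∫⁻ x, ‖f x‖ₑ) / l ≠ ⊤ := ENNReal.div_ne_top hi.2.ne hl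
      obtain ⟨M, hM⟩ := exists_nat_gt ((∫⁻ x, ‖f x‖ₑ) / l).toReal
      refine ⟨-(M:ℤ), fun k hk => ?_⟩
      by_contra hkM
      push Not at hkM
      simp only [heavy] at hk
      have h1 : l * volume (dyC k (ix k x)) < ∫⁻ x, ‖f x‖ₑ :=
        hk.trans_le (setLIntegral_le_lintegral _ _)
      rw [mul_comm, ← ENNReal.lt_div_iff_mul_lt (Or.inl hl) (Or.inl hl'), volume_dyC] at h1
      have h2 : ENNReal.ofReal M ≤ ENNReal.ofReal ((2:ℝ) ^ (-k)) ^ 3 := by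
        rw [← ENNReal.ofReal_pow (by positivity)]
        apply ENNReal.ofReal_le_ofReal
        have h3 : (M:ℝ) ≤ 2 ^ (-k) := by
          calc (M:ℝ) ≤ 2 ^ M := by exact_mod_cast (Nat.lt_two_pow_self).le
            _ = (2:ℝ) ^ (M:ℤ) := by simp
            _ ≤ _ := zpow_le_zpow_right₀ (by norm_num) (by omega)
        have h4 : (1:ℝ) ≤ 2 ^ (-k) := one_le_zpow₀ (by norm_num) (by omega)
        exact h3.trans (le_self_pow₀ h4 (by norm_num))
      have h5 := h2.trans_lt h1
      rw [ENNReal.ofReal_lt_iff_lt_toReal (by positivity) hfin] at h5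
      linarith
    obtain ⟨k, hk, hmin⟩ := Int.exists_least_of_bdd hbdd hex
    refine hx (k, ix k x) ⟨hk, ?_⟩ (hmem k x)
    intro m hm y hy hh
    have : ix m y = ix m x := hnest _ k _ _ (le_of_lt hm) (hix _ _ _ hy)
    rw [this] at hh
    have := hmin m hh
    dsimp only at hm
    omega

open MeasureTheory
open scoped ENNReal

/-- convolution on `ℝ³` -/
noncomputable def cv (K f : (Fin 3 → ℝ) → ℝ) (x : Fin 3 → ℝ) : ℝ := ∫ y, K (x - y) * f y

lemma cv_integrable {K f : (Fin 3 → ℝ) → ℝ} (hK : Continuous K) {M : ℝ} (hM : ∀ x, ‖K x‖ ≤ M)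
    (x : Fin 3 → ℝ) {μ : Measure (Fin 3 → ℝ)} (hf : Integrable f μ) :
    Integrable (fun y => K (x - y) * f y) μ := by
  apply hf.bdd_mul (c := M)
  · exact (by fun_prop : Continuous fun y => K (x - y)).aestronglyMeasurable
  · exact Filter.Eventually.of_forall fun y => hM _

lemma b_piece {K b : (Fin 3 → ℝ) → ℝ} (hK : Continuous K) {M : ℝ} (hM : ∀ x, ‖K x‖ ≤ M)
    {B : ℝ≥0∞}
    (hH : ∀ y, ∫⁻ x in {x | 2 * ‖y‖ ≤ ‖x‖}, ‖K (x - y) - K x‖ₑ ≤ B)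
    {Q : Set (Fin 3 → ℝ)} (hQ : MeasurableSet Q) {c : Fin 3 → ℝ} {r : ℝ}
    (hQc : ∀ y ∈ Q, ‖y - c‖ ≤ r) (hb : IntegrableOn b Q) (hb0 : ∫ y in Q, b y = 0) :
    ∫⁻ x in (Metric.ball c (2 * r))ᶜ, ‖∫ y in Q, K (x - y) * b y‖ₑ ≤ B * ∫⁻ y in Q, ‖b y‖ₑ := by
  have h1 : ∀ x, ‖∫ y in Q, K (x - y) * b y‖ₑ ≤ ∫⁻ y in Q, ‖K (x - y) - K (x - c)‖ₑ * ‖b y‖ₑ := by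
    intro x
    have : ∫ y in Q, K (x - y) * b y = ∫ y in Q, (K (x - y) - K (x - c)) * b y := by
      simp_rw [sub_mul]
      rw [integral_sub (cv_integrable hK hM x hb) (hb.const_mul _), integral_const_mul, hb0]
      simp
    rw [this]
    refine (enorm_integral_le_lintegral_enorm _).trans (le_of_eq ?_)
    simp_rw [enorm_mul]
  calc _ ≤ ∫⁻ x in (Metric.ball c (2 * r))ᶜ, ∫⁻ y in Q, ‖K (x - y) - K (x - c)‖ₑ * ‖b y‖ₑ :=
        lintegral_mono h1
    _ = ∫⁻ y in Q, ∫⁻ x in (Metric.ball c (2 * r))ᶜ, ‖K (x - y) - K (x - c)‖ₑ * ‖b y‖ₑ := by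
        apply lintegral_lintegral_swap
        refine AEMeasurable.mul (f := fun p : (Fin 3 → ℝ) × (Fin 3 → ℝ) =>
            ‖K (p.1 - p.2) - K (p.1 - c)‖ₑ) (g := fun p : (Fin 3 → ℝ) × (Fin 3 → ℝ) => ‖b p.2‖ₑ) ?_ ?_
        · exact (by fun_prop : Continuous fun p : (Fin 3 → ℝ) × (Fin 3 → ℝ) =>
            ‖K (p.1 - p.2) - K (p.1 - c)‖ₑ).aemeasurable
        · exact (hb.1.enorm).comp_snd
    _ ≤ ∫⁻ y in Q, B * ‖b y‖ₑ := by
        apply setLIntegral_mono' hQ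
        intro y hy
        rw [lintegral_mul_const _ (by fun_prop)]
        gcongr
        refine le_trans ?_ (hH (y - c))
        have hmeas : MeasurableSet {x : Fin 3 → ℝ | 2 * ‖y - c‖ ≤ ‖x‖} :=
          measurableSet_le (by fun_prop) (by fun_prop)
        rw [← lintegral_indicator hmeas, ← lintegral_indicator Metric.isOpen_ball.measurableSet.compl,
          ← lintegral_sub_right_eq_self (Set.indicator {x : Fin 3 → ℝ | 2 * ‖y - c‖ ≤ ‖x‖} _) c]
        apply lintegral_mono
        intro x
        simp only [Set.indicator]
        by_cases hx : x ∈ (Metric.ball c (2 * r))ᶜ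
        · have h2 : x - c ∈ {x : Fin 3 → ℝ | 2 * ‖y - c‖ ≤ ‖x‖} := by
            simp only [Set.mem_compl_iff, Metric.mem_ball, dist_eq_norm, not_lt] at hx
            have := hQc y hy
            simp only [Set.mem_ofPred_eq]
            linarith
          rw [if_pos hx, if_pos h2]
          simp
        · rw [if_neg hx]; exact zero_le
    _ = _ := by rw [lintegral_const_mul'' _ hb.1.enorm]

lemma cz_dist {K f : (Fin 3 → ℝ) → ℝ} (hK : Continuous K) {M : ℝ} (hM : ∀ x, ‖K x‖ ≤ M)
    {B : ℝ≥0∞}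
    (hL2 : ∀ g : (Fin 3 → ℝ) → ℝ, Integrable g → MemLp g 2 →
      ∫⁻ x, ‖cv K g x‖ₑ ^ 2 ≤ B * ∫⁻ x, ‖g x‖ₑ ^ 2)
    (hH : ∀ y, ∫⁻ x in {x | 2 * ‖y‖ ≤ ‖x‖}, ‖K (x - y) - K x‖ₑ ≤ B)
    (hc : Continuous f) (hi : Integrable f) (hf2 : MemLp f 2) (l : ℝ≥0∞) (hl : l ≠ 0) (hl' : l ≠ ⊤) :
    volume {x | l < ‖cv K f x‖ₑ} ≤
      4 * B * ((l ^ 2)⁻¹ * ∫⁻ x in {x | ‖f x‖ₑ ≤ l}, ‖f x‖ₑ ^ 2) +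
      (256 * B + 32 * B + 64) * (2 * (l⁻¹ * ∫⁻ x in {x | l / 2 < ‖f x‖ₑ}, ‖f x‖ₑ)) := by
  classical
  obtain ⟨S, hdisj, hlow, hup, hoff⟩ := cz_decomp f hc hi l hl hl'
  let Q : S → Set (Fin 3 → ℝ) := fun s => dyC s.1.1 s.1.2
  have hQm : ∀ s, MeasurableSet (Q s) := fun s => measurableSet_dyC _ _
  have hQd : Pairwise (Function.onFun Disjoint Q) := by
    intro s t hst
    exact hdisj s.2 t.2 (fun h => hst (Subtype.ext h))
  have hQv : ∀ s, volume (Q s) ≠ 0 := by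
    intro s
    simp only [Q, volume_dyC]
    have : (0:ℝ) < 2 ^ (-s.1.1) := by positivity
    exact pow_ne_zero _ (ENNReal.ofReal_pos.2 this).ne'
  have hQv' : ∀ s, volume (Q s) ≠ ⊤ := by
    intro s
    simp only [Q, volume_dyC]
    exact ENNReal.pow_ne_top ENNReal.ofReal_ne_top
  set Ω := ⋃ s, Q s with hΩ
  have hΩm : MeasurableSet Ω := MeasurableSet.iUnion hQm
  let a : S → ℝ := fun s => (volume (Q s)).toReal⁻¹ * ∫ x in Q s, f x
  let g : (Fin 3 → ℝ) → ℝ := fun x => if h : ∃ s, x ∈ Q s then a h.choose else f x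
  have hgQ : ∀ s, ∀ x ∈ Q s, g x = a s := by
    intro s x hx
    have h : ∃ s, x ∈ Q s := ⟨s, hx⟩
    have h2 : h.choose = s := by
      by_contra hne
      exact Set.disjoint_left.1 (hQd hne) h.choose_spec hx
    simp only [g]
    rw [dif_pos h, h2]
  have hgΩ : ∀ x ∉ Ω, g x = f x := by
    intro x hx
    simp only [g]
    rw [dif_neg]
    simpa [hΩ] using hx
  have hoff' : ∀ x ∉ Ω, ‖f x‖ₑ ≤ l := by
    intro x hx
    apply hoff
    intro s hs hxs
    exact hx (Set.mem_iUnion.2 ⟨⟨s, hs⟩, hxs⟩)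
  have ha1 : ∀ s, ‖a s‖ₑ * volume (Q s) ≤ ∫⁻ x in Q s, ‖f x‖ₑ := by
    intro s
    simp only [a, enorm_mul]
    have h1 : ‖(volume (Q s)).toReal⁻¹‖ₑ = (volume (Q s))⁻¹ := by
      rw [← ENNReal.toReal_inv, Real.enorm_eq_ofReal ENNReal.toReal_nonneg, ENNReal.ofReal_toReal]
      simpa using hQv s
    rw [h1, mul_comm, ← mul_assoc, ENNReal.mul_inv_cancel (hQv s) (hQv' s), one_mul]
    exact enorm_integral_le_lintegral_enorm _
  have ha2 : ∀ s, ‖a s‖ₑ ≤ 8 * l := by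
    intro s
    have := (ha1 s).trans (hup s.1 s.2)
    exact (ENNReal.mul_le_mul_iff_left (hQv s) (hQv' s)).1 this
  have hgm : AEStronglyMeasurable g volume := by
    rw [← Measure.restrict_univ (μ := volume), ← Set.union_compl_self Ω, aestronglyMeasurable_union_iff]
    constructor
    · rw [hΩ, aestronglyMeasurable_iUnion_iff]
      intro s
      exact (aestronglyMeasurable_const (b := a s)).congr
        ((ae_restrict_iff' (hQm s)).2 (Filter.Eventually.of_forall fun x hx => (hgQ s x hx).symm))
    · exact hc.aestronglyMeasurable.restrict.congr
        ((ae_restrict_iff' hΩm.compl).2 (Filter.Eventually.of_forall fun x hx => (hgΩ x hx).symm))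
  have hg1 : ∀ s, ∫⁻ x in Q s, ‖g x‖ₑ ≤ ∫⁻ x in Q s, ‖f x‖ₑ := by
    intro s
    rw [setLIntegral_congr_fun (hQm s) (fun x hx => by rw [hgQ s x hx]), setLIntegral_const]
    exact ha1 s
  have hgc : ∀ p : ℝ≥0∞ → ℝ≥0∞, ∫⁻ x in Ωᶜ, p ‖g x‖ₑ = ∫⁻ x in Ωᶜ, p ‖f x‖ₑ := fun p =>
    setLIntegral_congr_fun hΩm.compl (fun x hx => by rw [hgΩ x hx])
  have hgi : Integrable g := by
    refine ⟨hgm, ?_⟩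
    rw [HasFiniteIntegral, ← lintegral_add_compl _ hΩm, hgc (fun t => t), hΩ,
      lintegral_iUnion hQm hQd]
    refine lt_of_le_of_lt (add_le_add_left (ENNReal.tsum_le_tsum hg1) _) ?_
    rw [← lintegral_iUnion hQm hQd, ← hΩ, lintegral_add_compl _ hΩm]
    exact hi.2
  have hvΩ : volume Ω ≤ 2 * (l⁻¹ * ∫⁻ x in {x | l / 2 < ‖f x‖ₑ}, ‖f x‖ₑ) := by
    have hm : MeasurableSet {x | l / 2 < ‖f x‖ₑ} := measurableSet_lt measurable_const (by fun_prop)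
    have h1 : ∀ s, volume (Q s) ≤ 2 * (l⁻¹ * ∫⁻ x in Q s, {x | l / 2 < ‖f x‖ₑ}.indicator (fun x => ‖f x‖ₑ) x) := by
      intro s
      have h2 : ∫⁻ x in Q s, ‖f x‖ₑ ≤ (∫⁻ x in Q s, {x | l / 2 < ‖f x‖ₑ}.indicator (fun x => ‖f x‖ₑ) x)
          + l / 2 * volume (Q s) := by
        rw [← setLIntegral_const, ← lintegral_add_right _ measurable_const]
        apply lintegral_mono
        intro x
        simp only [Set.indicator, Set.mem_ofPred_eq]
        split_ifs with h
        · exact le_self_add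
        · simpa using h
      have h3 := (hlow s.1 s.2).trans h2
      have h4 : l * volume (Q s) = l / 2 * volume (Q s) + l / 2 * volume (Q s) := by
        rw [← add_mul, ENNReal.add_halves]
      change l * volume (Q s) ≤ _ at h3
      rw [h4] at h3
      have h5 : l / 2 * volume (Q s) ≠ ⊤ :=
        ENNReal.mul_ne_top (ENNReal.div_ne_top hl' (by simp)) (hQv' s)
      have h6 := (ENNReal.add_le_add_iff_right h5).1 h3
      calc volume (Q s) = 2 * (l⁻¹ * (l / 2 * volume (Q s))) := by
            rw [← mul_assoc, ← mul_assoc, ENNReal.div_eq_inv_mul]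
            rw [show 2 * l⁻¹ * (2⁻¹ * l) = (2 * 2⁻¹) * (l⁻¹ * l) by ring]
            rw [ENNReal.mul_inv_cancel (by simp) (by simp), ENNReal.inv_mul_cancel hl hl']
            simp
        _ ≤ _ := by gcongr
    rw [hΩ, measure_iUnion hQd hQm]
    refine (ENNReal.tsum_le_tsum h1).trans ?_
    rw [ENNReal.tsum_mul_left, ENNReal.tsum_mul_left, ← lintegral_iUnion hQm hQd]
    refine mul_le_mul_right (mul_le_mul_right ?_ _) _
    rw [← lintegral_indicator hm]
    exact setLIntegral_le_lintegral _ _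
  have hg2 : ∫⁻ x, ‖g x‖ₑ ^ 2 ≤ (∫⁻ x in {x | ‖f x‖ₑ ≤ l}, ‖f x‖ₑ ^ 2) + 64 * l ^ 2 * volume Ω := by
    rw [← lintegral_add_compl _ hΩm, hgc (fun t => t ^ 2), add_comm]
    apply add_le_add
    · exact lintegral_mono_set (fun x hx => hoff' x hx)
    · rw [← setLIntegral_const]
      apply setLIntegral_mono' hΩm
      intro x hx
      obtain ⟨s, hs⟩ := Set.mem_iUnion.1 hx
      rw [hgQ s x hs]
      calc ‖a s‖ₑ ^ 2 ≤ (8 * l) ^ 2 := by gcongr; exact ha2 s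
        _ = _ := by rw [mul_pow]; norm_num
  have hvΩt : volume Ω ≠ ⊤ := by
    refine ne_top_of_le_ne_top ?_ hvΩ
    refine ENNReal.mul_ne_top (by simp) (ENNReal.mul_ne_top (by simpa using hl) ?_)
    exact ne_top_of_le_ne_top hi.2.ne (setLIntegral_le_lintegral _ _)
  have hfi2 : ∫⁻ x, ‖f x‖ₑ ^ 2 ≠ ⊤ := by
    have := hf2.eLpNorm_lt_top
    have h := (eLpNorm_lt_top_iff_lintegral_rpow_enorm_lt_top (by norm_num) (by norm_num)).1 this
    simpa using h.ne
  have hgm2 : MemLp g 2 := by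
    refine ⟨hgm, ?_⟩
    rw [eLpNorm_lt_top_iff_lintegral_rpow_enorm_lt_top (by norm_num) (by norm_num)]
    simp only [ENNReal.toReal_ofNat, ENNReal.rpow_ofNat]
    refine lt_of_le_of_lt hg2 (ENNReal.add_lt_top.2 ⟨?_, ?_⟩)
    · exact lt_of_le_of_lt (setLIntegral_le_lintegral _ _) hfi2.lt_top
    · exact ENNReal.mul_lt_top (ENNReal.mul_lt_top (by simp) (ENNReal.pow_lt_top hl'.lt_top)) hvΩt.lt_top
  -- good part
  have hgood : volume {x | l / 2 ≤ ‖cv K g x‖ₑ} ≤ 4 * B * ((l ^ 2)⁻¹ * ∫⁻ x in {x | ‖f x‖ₑ ≤ l}, ‖f x‖ₑ ^ 2)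
      + 256 * B * volume Ω := by
    have h1 : (l / 2) ^ 2 * volume {x | (l / 2) ^ 2 ≤ ‖cv K g x‖ₑ ^ 2} ≤ ∫⁻ x, ‖cv K g x‖ₑ ^ 2 :=
      mul_meas_ge_le_lintegral₀ (by
        have : AEStronglyMeasurable (cv K g) volume := by
          apply AEStronglyMeasurable.integral_prod_right' (f := fun p : (Fin 3 → ℝ) × (Fin 3 → ℝ) => K (p.1 - p.2) * g p.2)
          apply AEStronglyMeasurable.mul
          · exact (by fun_prop : Continuous fun p : (Fin 3 → ℝ) × (Fin 3 → ℝ) =>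
              K (p.1 - p.2)).aestronglyMeasurable
          · exact hgm.comp_snd
        exact this.enorm.pow_const _) _
    have h2 : {x | (l / 2) ^ 2 ≤ ‖cv K g x‖ₑ ^ 2} = {x | l / 2 ≤ ‖cv K g x‖ₑ} := by
      ext x
      simp only [Set.mem_ofPred_eq]
      exact ENNReal.pow_le_pow_left_iff (by norm_num)
    rw [h2] at h1
    have h3 := h1.trans ((hL2 g hgi hgm2).trans (mul_le_mul_right hg2 _))
    have hl2 : l ^ 2 ≠ 0 := pow_ne_zero _ hl
    have hl2' : l ^ 2 ≠ ⊤ := ENNReal.pow_ne_top hl'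
    have h4 : 4 * (l ^ 2)⁻¹ * (l / 2) ^ 2 = 1 := by
      rw [ENNReal.div_eq_inv_mul, mul_pow]
      rw [show 4 * (l ^ 2)⁻¹ * ((2 : ℝ≥0∞)⁻¹ ^ 2 * l ^ 2) = (2 * 2⁻¹) ^ 2 * ((l ^ 2)⁻¹ * l ^ 2) by ring]
      rw [ENNReal.mul_inv_cancel (by simp) (by simp), ENNReal.inv_mul_cancel hl2 hl2']
      simp
    calc volume {x | l / 2 ≤ ‖cv K g x‖ₑ}
        = 4 * (l ^ 2)⁻¹ * ((l / 2) ^ 2 * volume {x | l / 2 ≤ ‖cv K g x‖ₑ}) := by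
          rw [← mul_assoc, h4, one_mul]
      _ ≤ 4 * (l ^ 2)⁻¹ * (B * ((∫⁻ x in {x | ‖f x‖ₑ ≤ l}, ‖f x‖ₑ ^ 2) + 64 * l ^ 2 * volume Ω)) := by
          gcongr
      _ = 4 * B * ((l ^ 2)⁻¹ * ∫⁻ x in {x | ‖f x‖ₑ ≤ l}, ‖f x‖ₑ ^ 2)
          + 256 * B * ((l ^ 2)⁻¹ * l ^ 2) * volume Ω := by ring
      _ = _ := by rw [ENNReal.inv_mul_cancel hl2 hl2', mul_one]
  -- bad part
  let b : (Fin 3 → ℝ) → ℝ := fun x => f x - g x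
  have hbi : Integrable b := hi.sub hgi
  have hb0 : ∀ s, ∫ y in Q s, b y = 0 := by
    intro s
    simp only [b]
    rw [integral_sub hi.integrableOn hgi.integrableOn,
      setIntegral_congr_fun (hQm s) (fun x hx => hgQ s x hx), setIntegral_const]
    simp only [a, smul_eq_mul, Measure.real]
    rw [mul_inv_cancel_left₀, sub_self]
    exact (ENNReal.toReal_pos (hQv s) (hQv' s)).ne'
  have hb1 : ∀ s, ∫⁻ y in Q s, ‖b y‖ₑ ≤ 16 * l * volume (Q s) := by
    intro s
    calc ∫⁻ y in Q s, ‖b y‖ₑ ≤ ∫⁻ y in Q s, (‖f y‖ₑ + ‖g y‖ₑ) := lintegral_mono fun y => enorm_sub_le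
      _ = (∫⁻ y in Q s, ‖f y‖ₑ) + ∫⁻ y in Q s, ‖g y‖ₑ := lintegral_add_left (by fun_prop) _
      _ ≤ 8 * l * volume (Q s) + 8 * l * volume (Q s) :=
        add_le_add (hup s.1 s.2) ((hg1 s).trans (hup s.1 s.2))
      _ = _ := by ring
  let c : S → (Fin 3 → ℝ) := fun s i => (s.1.2 i : ℝ) * (2:ℝ) ^ (-s.1.1)
  let r : S → ℝ := fun s => (2:ℝ) ^ (-s.1.1)
  have hr : ∀ s, 0 < r s := fun s => by simp only [r]; positivity
  set Ω' := ⋃ s, Metric.ball (c s) (2 * r s) with hΩ'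
  have hvΩ' : volume Ω' ≤ 64 * volume Ω := by
    rw [hΩ, measure_iUnion hQd hQm, ← ENNReal.tsum_mul_left]
    refine (measure_iUnion_le _).trans (ENNReal.tsum_le_tsum fun s => ?_)
    have h0 := hr s
    rw [Real.volume_pi_ball _ (by positivity)]
    simp only [Q, volume_dyC]
    simp only [Fintype.card_fin]
    rw [← ENNReal.ofReal_pow (by positivity)]
    rw [show (64 : ℝ≥0∞) = ENNReal.ofReal 64 by simp, ← ENNReal.ofReal_mul (by norm_num)]
    apply ENNReal.ofReal_le_ofReal
    simp only [r]
    apply le_of_eq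
    ring
  have hbadint : ∫⁻ x in Ω'ᶜ, ‖cv K b x‖ₑ ≤ 16 * l * B * volume Ω := by
    have h1 : ∀ x, ‖cv K b x‖ₑ ≤ ∑' s, ‖∫ y in Q s, K (x - y) * b y‖ₑ := by
      intro x
      have h2 : cv K b x = ∫ y in Ω, K (x - y) * b y := by
        rw [cv, setIntegral_eq_integral_of_forall_compl_eq_zero]
        intro y hy
        simp [b, hgΩ y hy]
      rw [h2, hΩ, integral_iUnion hQm hQd (cv_integrable hK hM x hbi).integrableOn]
      exact enorm_tsum_le_tsum_enorm
    calc ∫⁻ x in Ω'ᶜ, ‖cv K b x‖ₑ ≤ ∫⁻ x in Ω'ᶜ, ∑' s, ‖∫ y in Q s, K (x - y) * b y‖ₑ :=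
          lintegral_mono h1
      _ = ∑' s, ∫⁻ x in Ω'ᶜ, ‖∫ y in Q s, K (x - y) * b y‖ₑ := by
          apply lintegral_tsum
          intro s
          apply AEMeasurable.restrict
          apply AEStronglyMeasurable.enorm
          apply AEStronglyMeasurable.integral_prod_right' (f := fun p : (Fin 3 → ℝ) × (Fin 3 → ℝ) => K (p.1 - p.2) * b p.2)
          apply AEStronglyMeasurable.mul
          · exact (by fun_prop : Continuous fun p : (Fin 3 → ℝ) × (Fin 3 → ℝ) =>
              K (p.1 - p.2)).aestronglyMeasurable
          · exact hbi.1.restrict.comp_snd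
      _ ≤ ∑' s, ∫⁻ x in (Metric.ball (c s) (2 * r s))ᶜ, ‖∫ y in Q s, K (x - y) * b y‖ₑ := by
          refine ENNReal.tsum_le_tsum fun s => lintegral_mono_set ?_
          exact Set.compl_subset_compl.2 (Set.subset_iUnion (fun s => Metric.ball (c s) (2 * r s)) s)
      _ ≤ ∑' s, 16 * l * B * volume (Q s) := by
          refine ENNReal.tsum_le_tsum fun s => ?_
          refine (b_piece hK hM hH (hQm s) (fun y hy => dyC_sub_ball _ _ hy) hbi.integrableOn (hb0 s)).trans ?_
          calc B * ∫⁻ y in Q s, ‖b y‖ₑ ≤ B * (16 * l * volume (Q s)) := by gcongr; exact hb1 s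
            _ = _ := by ring
      _ = _ := by rw [ENNReal.tsum_mul_left, ← measure_iUnion hQd hQm]
  have hbad : volume ({x | l / 2 ≤ ‖cv K b x‖ₑ} ∩ Ω'ᶜ) ≤ 32 * B * volume Ω := by
    have hm : MeasurableSet Ω'ᶜ := (isOpen_iUnion fun s => Metric.isOpen_ball).measurableSet.compl
    rw [← Measure.restrict_apply' hm]
    have h1 : (l / 2) * volume.restrict Ω'ᶜ {x | l / 2 ≤ ‖cv K b x‖ₑ} ≤ ∫⁻ x in Ω'ᶜ, ‖cv K b x‖ₑ :=
      mul_meas_ge_le_lintegral₀ (by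
        have : AEStronglyMeasurable (cv K b) volume := by
          apply AEStronglyMeasurable.integral_prod_right' (f := fun p : (Fin 3 → ℝ) × (Fin 3 → ℝ) => K (p.1 - p.2) * b p.2)
          apply AEStronglyMeasurable.mul
          · exact (by fun_prop : Continuous fun p : (Fin 3 → ℝ) × (Fin 3 → ℝ) =>
              K (p.1 - p.2)).aestronglyMeasurable
          · exact hbi.1.comp_snd
        exact this.restrict.enorm) _
    have h3 := h1.trans hbadint
    have h4 : 2 * l⁻¹ * (l / 2) = 1 := by
      rw [ENNReal.div_eq_inv_mul]
      rw [show 2 * l⁻¹ * ((2 : ℝ≥0∞)⁻¹ * l) = (2 * 2⁻¹) * (l⁻¹ * l) by ring]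
      rw [ENNReal.mul_inv_cancel (by simp) (by simp), ENNReal.inv_mul_cancel hl hl']
      simp
    calc volume.restrict Ω'ᶜ {x | l / 2 ≤ ‖cv K b x‖ₑ}
        = 2 * l⁻¹ * ((l / 2) * volume.restrict Ω'ᶜ {x | l / 2 ≤ ‖cv K b x‖ₑ}) := by
          rw [← mul_assoc, h4, one_mul]
      _ ≤ 2 * l⁻¹ * (16 * l * B * volume Ω) := by gcongr
      _ = 32 * B * (l⁻¹ * l) * volume Ω := by ring
      _ = _ := by rw [ENNReal.inv_mul_cancel hl hl', mul_one]
  have hsub : {x | l < ‖cv K f x‖ₑ} ⊆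
      {x | l / 2 ≤ ‖cv K g x‖ₑ} ∪ (({x | l / 2 ≤ ‖cv K b x‖ₑ} ∩ Ω'ᶜ) ∪ Ω') := by
    intro x hx
    by_contra hcon
    simp only [Set.mem_union, Set.mem_inter_iff, Set.mem_ofPred_eq, not_or, not_and, not_le,
      Set.mem_compl_iff, not_not] at hcon
    obtain ⟨h1, h2, h3⟩ := hcon
    have h4 : ‖cv K b x‖ₑ < l / 2 := by
      by_contra h
      exact h3 (h2 (not_lt.1 h))
    have h5 : cv K f x = cv K g x + cv K b x := by
      simp only [cv]
      rw [← integral_add (cv_integrable hK hM x hgi) (cv_integrable hK hM x hbi)]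
      congr 1
      ext y
      simp only [b]; ring
    have h6 : ‖cv K f x‖ₑ < l := by
      rw [h5]
      refine (enorm_add_le _ _).trans_lt ?_
      rw [← ENNReal.add_halves l]
      exact ENNReal.add_lt_add h1 h4
    exact lt_irrefl _ (h6.trans hx)
  calc volume {x | l < ‖cv K f x‖ₑ} ≤ _ := measure_mono hsub
    _ ≤ volume {x | l / 2 ≤ ‖cv K g x‖ₑ} + (volume ({x | l / 2 ≤ ‖cv K b x‖ₑ} ∩ Ω'ᶜ) + volume Ω') :=
      (measure_union_le _ _).trans (add_le_add_right (measure_union_le _ _) _)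
    _ ≤ (4 * B * ((l ^ 2)⁻¹ * ∫⁻ x in {x | ‖f x‖ₑ ≤ l}, ‖f x‖ₑ ^ 2) + 256 * B * volume Ω) +
        (32 * B * volume Ω + 64 * volume Ω) := by gcongr
    _ = 4 * B * ((l ^ 2)⁻¹ * ∫⁻ x in {x | ‖f x‖ₑ ≤ l}, ‖f x‖ₑ ^ 2) + (256 * B + 32 * B + 64) * volume Ω := by
      ring
    _ ≤ _ := by gcongr

open MeasureTheory
open scoped ENNReal

lemma pw_one (a : ℝ) (ha : 0 ≤ a) :
    ∫⁻ t in Set.Ioi (0:ℝ), ENNReal.ofReal (t ^ ((1:ℝ)/2)) * (((ENNReal.ofReal t) ^ 2)⁻¹ *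
      (if ENNReal.ofReal a ≤ ENNReal.ofReal t then (ENNReal.ofReal a) ^ 2 else 0)) ≤
      2 * (ENNReal.ofReal a) ^ ((3:ℝ)/2) := by
  rcases ha.eq_or_lt with rfl | ha
  · simp
  have h1 : ∫⁻ t in Set.Ioi a, ENNReal.ofReal (t ^ (-(3:ℝ)/2)) = ENNReal.ofReal (2 * a ^ (-(1:ℝ)/2)) := by
    rw [← ofReal_integral_eq_lintegral_ofReal (integrableOn_Ioi_rpow_of_lt (by norm_num) ha),
      integral_Ioi_rpow_of_lt (by norm_num) ha]
    · congr 1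
      norm_num
      ring
    · refine (ae_restrict_iff' measurableSet_Ioi).2 (Filter.Eventually.of_forall fun t ht => ?_)
      have : 0 < t := ha.trans ht
      simp only [Pi.zero_apply]
      positivity
  calc _ ≤ ∫⁻ t in Set.Ioi (0:ℝ), (Set.Ici a).indicator (fun t => ENNReal.ofReal (a ^ 2) * ENNReal.ofReal (t ^ (-(3:ℝ)/2))) t := by
        apply setLIntegral_mono' measurableSet_Ioi
        intro t ht
        have ht' : 0 < t := ht
        split_ifs with h
        · rw [ENNReal.ofReal_le_ofReal_iff ht'.le] at h
          rw [Set.indicator_of_mem (show t ∈ Set.Ici a from h)]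
          rw [← ENNReal.ofReal_pow ht'.le, ← ENNReal.ofReal_inv_of_pos (by positivity),
            ← ENNReal.ofReal_pow ha.le, ← ENNReal.ofReal_mul (by positivity), ← ENNReal.ofReal_mul (by positivity),
            ← ENNReal.ofReal_mul (by positivity)]
          apply ENNReal.ofReal_le_ofReal
          have : t ^ (-(3:ℝ)/2) = t ^ ((1:ℝ)/2) * (t ^ 2)⁻¹ := by
            rw [← Real.rpow_natCast, ← Real.rpow_neg ht'.le, ← Real.rpow_add ht']
            norm_num
          rw [this]
          apply le_of_eq; ring
        · simp
    _ ≤ ∫⁻ t, (Set.Ici a).indicator (fun t => ENNReal.ofReal (a ^ 2) * ENNReal.ofReal (t ^ (-(3:ℝ)/2))) t :=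
        setLIntegral_le_lintegral _ _
    _ = ENNReal.ofReal (a ^ 2) * ENNReal.ofReal (2 * a ^ (-(1:ℝ)/2)) := by
        rw [lintegral_indicator measurableSet_Ici, lintegral_const_mul _ (by fun_prop),
          setLIntegral_congr Ioi_ae_eq_Ici.symm, h1]
    _ ≤ _ := by
        rw [← ENNReal.ofReal_mul (by positivity), ENNReal.ofReal_rpow_of_pos ha,
          show (2:ℝ≥0∞) = ENNReal.ofReal 2 by simp, ← ENNReal.ofReal_mul (by positivity)]
        apply ENNReal.ofReal_le_ofReal
        have : a ^ ((3:ℝ)/2) = a ^ 2 * a ^ (-(1:ℝ)/2) := by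
          rw [← Real.rpow_natCast, ← Real.rpow_add ha]
          norm_num
        rw [this]
        apply le_of_eq; ring

lemma pw_two (a : ℝ) (ha : 0 ≤ a) :
    ∫⁻ t in Set.Ioi (0:ℝ), ENNReal.ofReal (t ^ ((1:ℝ)/2)) * ((ENNReal.ofReal t)⁻¹ *
      (if ENNReal.ofReal t / 2 < ENNReal.ofReal a then (ENNReal.ofReal a) else 0)) ≤
      4 * (ENNReal.ofReal a) ^ ((3:ℝ)/2) := by
  rcases ha.eq_or_lt with rfl | ha
  · simp
  have h1 : ∫⁻ t in Set.Ioc 0 (2 * a), ENNReal.ofReal (t ^ (-(1:ℝ)/2)) = ENNReal.ofReal (2 * (2 * a) ^ ((1:ℝ)/2)) := by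
    have hi : IntervalIntegrable (fun t : ℝ => t ^ (-(1:ℝ)/2)) volume 0 (2 * a) :=
      intervalIntegral.intervalIntegrable_rpow' (by norm_num)
    rw [← ofReal_integral_eq_lintegral_ofReal
      ((intervalIntegrable_iff_integrableOn_Ioc_of_le (by positivity)).1 hi),
      ← intervalIntegral.integral_of_le (by positivity), integral_rpow (Or.inl (by norm_num))]
    · congr 1
      norm_num
      ring
    · refine (ae_restrict_iff' measurableSet_Ioc).2 (Filter.Eventually.of_forall fun t ht => ?_)
      have : 0 < t := ht.1
      simp only [Pi.zero_apply]
      positivity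
  calc _ ≤ ∫⁻ t in Set.Ioi (0:ℝ), (Set.Ioc 0 (2 * a)).indicator (fun t => ENNReal.ofReal a * ENNReal.ofReal (t ^ (-(1:ℝ)/2))) t := by
        apply setLIntegral_mono' measurableSet_Ioi
        intro t ht
        have ht' : 0 < t := ht
        split_ifs with h
        · rw [show ENNReal.ofReal t / 2 = ENNReal.ofReal (t / 2) by
            rw [ENNReal.ofReal_div_of_pos (by norm_num)]; simp, ENNReal.ofReal_lt_ofReal_iff ha] at h
          rw [Set.indicator_of_mem (show t ∈ Set.Ioc 0 (2 * a) from ⟨ht', by linarith⟩)]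
          rw [← ENNReal.ofReal_inv_of_pos (by positivity),
            ← ENNReal.ofReal_mul (by positivity), ← ENNReal.ofReal_mul (by positivity),
            ← ENNReal.ofReal_mul (by positivity)]
          apply ENNReal.ofReal_le_ofReal
          have : t ^ (-(1:ℝ)/2) = t ^ ((1:ℝ)/2) * t⁻¹ := by
            rw [← Real.rpow_neg_one, ← Real.rpow_add ht']
            norm_num
          rw [this]
          apply le_of_eq; ring
        · simp
    _ ≤ ∫⁻ t, (Set.Ioc 0 (2 * a)).indicator (fun t => ENNReal.ofReal a * ENNReal.ofReal (t ^ (-(1:ℝ)/2))) t :=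
        setLIntegral_le_lintegral _ _
    _ = ENNReal.ofReal a * ENNReal.ofReal (2 * (2 * a) ^ ((1:ℝ)/2)) := by
        rw [lintegral_indicator measurableSet_Ioc, lintegral_const_mul _ (by fun_prop), h1]
    _ ≤ _ := by
        rw [← ENNReal.ofReal_mul (by positivity), ENNReal.ofReal_rpow_of_pos ha,
          show (4:ℝ≥0∞) = ENNReal.ofReal 4 by simp, ← ENNReal.ofReal_mul (by positivity)]
        apply ENNReal.ofReal_le_ofReal
        have h2 : a ^ ((3:ℝ)/2) = a * a ^ ((1:ℝ)/2) := by
          nth_rewrite 2 [← Real.rpow_one a]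
          rw [← Real.rpow_add ha]
          norm_num
        rw [h2, Real.mul_rpow (by norm_num) ha.le]
        have h3 : (2:ℝ) ^ ((1:ℝ)/2) ≤ 2 := by
          calc (2:ℝ) ^ ((1:ℝ)/2) ≤ 2 ^ (1:ℝ) := Real.rpow_le_rpow_of_exponent_le (by norm_num) (by norm_num)
            _ = 2 := by simp
        have h4 : 0 ≤ a * a ^ ((1:ℝ)/2) := by positivity
        nlinarith

lemma cv_meas {K f : (Fin 3 → ℝ) → ℝ} (hK : Continuous K) (hf : AEStronglyMeasurable f volume) :
    AEStronglyMeasurable (cv K f) volume := by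
  apply AEStronglyMeasurable.integral_prod_right' (f := fun p : (Fin 3 → ℝ) × (Fin 3 → ℝ) => K (p.1 - p.2) * f p.2)
  apply AEStronglyMeasurable.mul
  · exact (by fun_prop : Continuous fun p : (Fin 3 → ℝ) × (Fin 3 → ℝ) =>
      K (p.1 - p.2)).aestronglyMeasurable
  · exact hf.comp_snd

theorem cz_threehalf {K f : (Fin 3 → ℝ) → ℝ} (hK : Continuous K) {M : ℝ} (hM : ∀ x, ‖K x‖ ≤ M)
    {B : ℝ≥0∞}
    (hL2 : ∀ g : (Fin 3 → ℝ) → ℝ, Integrable g → MemLp g 2 →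
      ∫⁻ x, ‖cv K g x‖ₑ ^ 2 ≤ B * ∫⁻ x, ‖g x‖ₑ ^ 2)
    (hH : ∀ y, ∫⁻ x in {x | 2 * ‖y‖ ≤ ‖x‖}, ‖K (x - y) - K x‖ₑ ≤ B)
    (hc : Continuous f) (hi : Integrable f) (hf2 : MemLp f 2) :
    ∫⁻ x, ‖cv K f x‖ₑ ^ ((3:ℝ)/2) ≤ (3504 * B + 768) * ∫⁻ x, ‖f x‖ₑ ^ ((3:ℝ)/2) := by
  have e1 : ∀ x, ‖cv K f x‖ₑ ^ ((3:ℝ)/2) = ENNReal.ofReal (|cv K f x| ^ ((3:ℝ)/2)) := by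
    intro x
    rw [Real.enorm_eq_ofReal_abs, ENNReal.ofReal_rpow_of_nonneg (abs_nonneg _) (by norm_num)]
  simp_rw [e1]
  rw [lintegral_rpow_eq_lintegral_meas_lt_mul volume (Filter.Eventually.of_forall fun x => abs_nonneg _)
    (by simpa using (cv_meas hK hi.1).norm.aemeasurable) (by norm_num)]
  have key : ∀ t ∈ Set.Ioi (0:ℝ), volume {x | t < |cv K f x|} * ENNReal.ofReal (t ^ ((3:ℝ)/2 - 1)) ≤
      4 * B * (∫⁻ x, ENNReal.ofReal (t ^ ((1:ℝ)/2)) * (((ENNReal.ofReal t) ^ 2)⁻¹ *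
        (if ENNReal.ofReal |f x| ≤ ENNReal.ofReal t then (ENNReal.ofReal |f x|) ^ 2 else 0))) +
      (576 * B + 128) * ∫⁻ x, ENNReal.ofReal (t ^ ((1:ℝ)/2)) * ((ENNReal.ofReal t)⁻¹ *
        (if ENNReal.ofReal t / 2 < ENNReal.ofReal |f x| then (ENNReal.ofReal |f x|) else 0)) := by
    intro t ht
    have ht' : 0 < t := ht
    have hset : {x | t < |cv K f x|} = {x | ENNReal.ofReal t < ‖cv K f x‖ₑ} := by
      ext x
      simp only [Set.mem_ofPred_eq]
      rw [Real.enorm_eq_ofReal_abs, ENNReal.ofReal_lt_ofReal_iff_of_nonneg ht'.le]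
    rw [hset]
    have h0 := cz_dist hK hM hL2 hH hc hi hf2 (ENNReal.ofReal t) (by simpa using ht') (by simp)
    rw [show (3:ℝ)/2 - 1 = 1/2 by norm_num]
    have hm1 : MeasurableSet {x | ‖f x‖ₑ ≤ ENNReal.ofReal t} := measurableSet_le (by fun_prop) (by fun_prop)
    have hm2 : MeasurableSet {x | ENNReal.ofReal t / 2 < ‖f x‖ₑ} := measurableSet_lt (by fun_prop) (by fun_prop)
    rw [← lintegral_indicator hm1, ← lintegral_indicator hm2] at h0
    rw [lintegral_const_mul' _ _ (by simp), lintegral_const_mul' _ _ (by simpa using ht'),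
      lintegral_const_mul' _ _ (by simp), lintegral_const_mul' _ _ (by simpa using ht')]
    simp_rw [← Real.enorm_eq_ofReal_abs]
    simp only [Set.indicator, Set.mem_ofPred_eq] at h0
    refine (mul_le_mul_left h0 _).trans (le_of_eq ?_)
    ring
  refine (mul_le_mul_right (setLIntegral_mono' measurableSet_Ioi key) _).trans ?_
  have hfm : Measurable fun x => ENNReal.ofReal |f x| := by fun_prop
  have hfm' : Measurable fun p : ℝ × (Fin 3 → ℝ) => ENNReal.ofReal |f p.2| := by fun_prop
  have mes1 : Measurable (Function.uncurry fun (t : ℝ) (x : Fin 3 → ℝ) => ENNReal.ofReal (t ^ ((1:ℝ)/2)) * (((ENNReal.ofReal t) ^ 2)⁻¹ *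
        (if ENNReal.ofReal |f x| ≤ ENNReal.ofReal t then (ENNReal.ofReal |f x|) ^ 2 else 0))) := by
    simp only [Function.uncurry_def]
    refine Measurable.mul (by fun_prop) (Measurable.mul (by fun_prop) ?_)
    exact Measurable.ite (measurableSet_le (by fun_prop) (by fun_prop)) (by fun_prop) (by fun_prop)
  have mes2 : Measurable (Function.uncurry fun (t : ℝ) (x : Fin 3 → ℝ) => ENNReal.ofReal (t ^ ((1:ℝ)/2)) * ((ENNReal.ofReal t)⁻¹ *
        (if ENNReal.ofReal t / 2 < ENNReal.ofReal |f x| then (ENNReal.ofReal |f x|) else 0))) := by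
    simp only [Function.uncurry_def]
    refine Measurable.mul (by fun_prop) (Measurable.mul (by fun_prop) ?_)
    exact Measurable.ite (measurableSet_lt (by fun_prop) (by fun_prop)) (by fun_prop) (by fun_prop)
  rw [lintegral_add_left (by
      apply Measurable.const_mul
      exact mes1.lintegral_prod_right),
    lintegral_const_mul _ (mes1.lintegral_prod_right), lintegral_const_mul _ (mes2.lintegral_prod_right),
    lintegral_lintegral_swap mes1.aemeasurable, lintegral_lintegral_swap mes2.aemeasurable]
  have i1 : ∀ x, ENNReal.ofReal |f x| = ‖f x‖ₑ := fun x => (Real.enorm_eq_ofReal_abs _).symm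
  have j1 := lintegral_mono (μ := (volume : Measure (Fin 3 → ℝ))) fun x => pw_one (|f x|) (abs_nonneg _)
  have j2 := lintegral_mono (μ := (volume : Measure (Fin 3 → ℝ))) fun x => pw_two (|f x|) (abs_nonneg _)
  rw [lintegral_const_mul' _ _ (by simp)] at j1 j2
  calc _ ≤ ENNReal.ofReal (3/2) * (4 * B * (2 * ∫⁻ x, ENNReal.ofReal |f x| ^ ((3:ℝ)/2)) +
        (576 * B + 128) * (4 * ∫⁻ x, ENNReal.ofReal |f x| ^ ((3:ℝ)/2))) := by gcongr
    _ = ENNReal.ofReal (3/2) * 2 * ((1156 * B + 256) * ∫⁻ x, ENNReal.ofReal |f x| ^ ((3:ℝ)/2)) := by ring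
    _ = 3 * ((1156 * B + 256) * ∫⁻ x, ENNReal.ofReal |f x| ^ ((3:ℝ)/2)) := by
        congr 1
        rw [show (2:ℝ≥0∞) = ENNReal.ofReal 2 by simp, ← ENNReal.ofReal_mul (by norm_num)]
        norm_num
    _ = (3468 * B + 768) * ∫⁻ x, ENNReal.ofReal |f x| ^ ((3:ℝ)/2) := by ring
    _ ≤ _ := by
        simp_rw [i1]
        gcongr
        norm_num

open MeasureTheory
open scoped ENNReal

/-- A Calderón–Zygmund convolution kernel with constant `B`. -/
structure CZK (K : (Fin 3 → ℝ) → ℝ) (B : ℝ≥0∞) : Prop where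
  cont : Continuous K
  bdd : ∃ M : ℝ, ∀ x, ‖K x‖ ≤ M
  int : Integrable K
  l2 : ∀ g : (Fin 3 → ℝ) → ℝ, Integrable g → MemLp g 2 →
      ∫⁻ x, ‖cv K g x‖ₑ ^ 2 ≤ B * ∫⁻ x, ‖g x‖ₑ ^ 2
  hor : ∀ y, ∫⁻ x in {x | 2 * ‖y‖ ≤ ‖x‖}, ‖K (x - y) - K x‖ₑ ≤ B

lemma cv_cont {K f : (Fin 3 → ℝ) → ℝ} (hK : Continuous K) {M : ℝ} (hM : ∀ x, ‖K x‖ ≤ M)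
    (hf : Integrable f) : Continuous (cv K f) := by
  apply continuous_of_dominated (bound := fun y => M * ‖f y‖)
  · intro x; exact (cv_integrable hK hM x hf).1
  · intro x
    refine Filter.Eventually.of_forall fun y => ?_
    rw [norm_mul]
    gcongr
    exact hM _
  · exact hf.norm.const_mul _
  · refine Filter.Eventually.of_forall fun y => ?_
    fun_prop

lemma cv_bdd {K f : (Fin 3 → ℝ) → ℝ} {M : ℝ} (hM : ∀ x, ‖K x‖ ≤ M)
    (hf : Integrable f) (x : Fin 3 → ℝ) : ‖cv K f x‖ ≤ M * ∫ y, ‖f y‖ := by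
  rw [← integral_const_mul]
  apply norm_integral_le_of_norm_le (hf.norm.const_mul _)
  refine Filter.Eventually.of_forall fun y => ?_
  rw [norm_mul]
  gcongr
  exact hM _

lemma cv_int {K f : (Fin 3 → ℝ) → ℝ} (hK : Integrable K)
    (hf : Integrable f) : Integrable (cv K f) := by
  have := hf.integrable_convolution (ContinuousLinearMap.mul ℝ ℝ) hK
  refine this.congr (Filter.Eventually.of_forall fun x => ?_)
  simp only [convolution, cv, ContinuousLinearMap.mul_apply']
  congr 1; ext y; ring

theorem cz_three {K G : (Fin 3 → ℝ) → ℝ} {B : ℝ≥0∞} (hK : CZK (fun x => K (-x)) B)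
    (hG : Integrable G) :
    ∫⁻ x, ‖cv K G x‖ₑ ^ (3:ℝ) ≤ (3504 * B + 768) ^ (2:ℝ) * ∫⁻ x, ‖G x‖ₑ ^ (3:ℝ) := by
  obtain ⟨M, hM⟩ := hK.bdd
  have hKc : Continuous K := by simpa [Function.comp_def] using hK.cont.comp continuous_neg
  have hKM : ∀ x, ‖K x‖ ≤ M := fun x => by simpa using hM (-x)
  have hKi : Integrable K := by simpa using hK.int.comp_neg
  set u := cv K G with hu
  have huc : Continuous u := cv_cont hKc hKM hG
  have hui : Integrable u := cv_int hKi hG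
  obtain ⟨U, hU⟩ : ∃ U : ℝ, ∀ x, ‖u x‖ ≤ U := ⟨_, cv_bdd hKM hG⟩
  let h : (Fin 3 → ℝ) → ℝ := fun x => |u x| * u x
  have hhc : Continuous h := by fun_prop
  have hhi : Integrable h := hui.bdd_mul (c := U) (by fun_prop)
    (Filter.Eventually.of_forall fun x => by simpa using hU x)
  have hh2 : MemLp h 2 := by
    rw [memLp_two_iff_integrable_sq hhi.1]
    have : Integrable (fun x => h x * h x) := by
      apply hhi.bdd_mul (c := U * U) hhi.1
      refine Filter.Eventually.of_forall fun x => ?_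
      simp only [h, norm_mul, norm_abs_eq_norm]
      have := hU x
      have h0 := norm_nonneg (u x)
      nlinarith
    simpa [sq] using this
  have main := cz_threehalf hK.cont hM hK.l2 hK.hor hhc hhi hh2
  set w := cv (fun x => K (-x)) h with hw
  have hsw : ∫ x, u x * h x = ∫ y, G y * w y := by
    have hI : Integrable (Function.uncurry fun x y => K (x - y) * G y * h x) (volume.prod volume) := by
      have h1 : Integrable (fun p : (Fin 3 → ℝ) × (Fin 3 → ℝ) => h p.1 * G p.2) (volume.prod volume) :=
        hhi.mul_prod hG
      have h2 := h1.bdd_mul (f := fun p : (Fin 3 → ℝ) × (Fin 3 → ℝ) => K (p.1 - p.2)) (c := M)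
        (by exact (by fun_prop : Continuous fun p : (Fin 3 → ℝ) × (Fin 3 → ℝ) => K (p.1 - p.2)).aestronglyMeasurable)
        (Filter.Eventually.of_forall fun p => hKM _)
      refine h2.congr (Filter.Eventually.of_forall fun p => ?_)
      simp only [Function.uncurry_def]; ring
    calc ∫ x, u x * h x = ∫ x, ∫ y, K (x - y) * G y * h x := by
          simp only [hu, cv, ← integral_mul_const]
      _ = ∫ y, ∫ x, K (x - y) * G y * h x := integral_integral_swap hI
      _ = ∫ y, G y * w y := by
          congr 1; ext y
          simp only [hw, cv, ← integral_const_mul]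
          congr 1; ext x
          rw [neg_sub]; ring
  have habs : ∀ t : ℝ, ‖|t|‖ₑ = ‖t‖ₑ := fun t => by simp [Real.enorm_eq_ofReal_abs]
  set X := ∫⁻ x, ‖u x‖ₑ ^ (3:ℝ) with hX
  have huh : ∀ x, ‖u x * h x‖ₑ = ‖u x‖ₑ ^ (3:ℝ) := by
    intro x
    simp only [h]
    rw [enorm_mul, enorm_mul, habs, show (3:ℝ) = ((3:ℕ):ℝ) by norm_num, ENNReal.rpow_natCast]
    ring
  have hXfin : X ≠ ⊤ := by
    have h1 : Integrable (fun x => u x * h x) := hhi.bdd_mul (c := U) hui.1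
      (Filter.Eventually.of_forall fun x => hU x)
    have := h1.2
    rw [HasFiniteIntegral] at this
    simp_rw [huh] at this
    exact this.ne
  have hhu : ∀ x, ‖h x‖ₑ ^ ((3:ℝ)/2) = ‖u x‖ₑ ^ (3:ℝ) := by
    intro x
    simp only [h]
    rw [enorm_mul, habs, ← sq, ← ENNReal.rpow_natCast, ← ENNReal.rpow_mul]
    norm_num
  simp_rw [hhu] at main
  have hXle : X ≤ ∫⁻ y, ‖G y‖ₑ * ‖w y‖ₑ := by
    have h1 : X = ENNReal.ofReal (∫ x, u x * h x) := by
      rw [ofReal_integral_eq_lintegral_ofReal]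
      · rw [hX]
        congr 1; ext x
        rw [← huh, Real.enorm_of_nonneg]
        simp only [h]
        nlinarith [abs_nonneg (u x), mul_self_nonneg (u x), mul_nonneg (abs_nonneg (u x)) (mul_self_nonneg (u x))]
      · exact hhi.bdd_mul (c := U) hui.1 (Filter.Eventually.of_forall fun x => hU x)
      · refine Filter.Eventually.of_forall fun x => ?_
        simp only [h, Pi.zero_apply]
        nlinarith [abs_nonneg (u x), mul_self_nonneg (u x), mul_nonneg (abs_nonneg (u x)) (mul_self_nonneg (u x))]
    rw [h1, hsw]
    refine (ENNReal.ofReal_le_ofReal (le_abs_self _)).trans ?_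
    rw [← Real.enorm_eq_ofReal_abs]
    refine (enorm_integral_le_lintegral_enorm _).trans (le_of_eq ?_)
    simp_rw [enorm_mul]
  have hwm : AEMeasurable (fun y => ‖w y‖ₑ) := (cv_meas hK.cont hhi.1).enorm
  have hol := ENNReal.lintegral_mul_le_Lp_mul_Lq volume (p := 3) (q := 3/2)
    (by rw [Real.holderConjugate_iff]; norm_num) hG.1.enorm hwm
  set D := 3504 * B + 768
  set g := ∫⁻ x, ‖G x‖ₑ ^ (3:ℝ) with hg
  have h5 : X ≤ g ^ ((1:ℝ)/3) * (D * X) ^ ((1:ℝ)/(3/2)) := by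
    refine hXle.trans (hol.trans ?_)
    gcongr
  by_cases hX0 : X = 0
  · rw [hX0]; exact zero_le
  -- cube
  have h6 : X ^ (3:ℝ) ≤ g * (D ^ (2:ℝ) * X ^ (2:ℝ)) := by
    calc X ^ (3:ℝ) ≤ (g ^ ((1:ℝ)/3) * (D * X) ^ ((1:ℝ)/(3/2))) ^ (3:ℝ) := by gcongr
      _ = _ := by
        rw [ENNReal.mul_rpow_of_nonneg _ _ (by norm_num), ← ENNReal.rpow_mul, ← ENNReal.rpow_mul,
          ← ENNReal.mul_rpow_of_nonneg _ _ (by norm_num)]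
        norm_num
  have hX2 : X ^ (2:ℝ) ≠ 0 := by simp [hX0]
  have hX2' : X ^ (2:ℝ) ≠ ⊤ := ENNReal.rpow_ne_top_of_nonneg (by norm_num) hXfin
  have h7 : X ^ (3:ℝ) = X * X ^ (2:ℝ) := by
    nth_rewrite 2 [← ENNReal.rpow_one X]
    rw [← ENNReal.rpow_add _ _ hX0 hXfin]
    norm_num
  rw [h7, ← mul_assoc] at h6
  have h8 := (ENNReal.mul_le_mul_iff_left hX2 hX2').1 h6
  rw [mul_comm]
  exact h8

open MeasureTheory
open scoped ENNReal

lemma scale_pi {n : ℕ} {g : (Fin n → ℝ) → ℝ≥0∞} (y : Fin n → ℝ) {e : ℝ} (he : 0 < e) :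
    ∫⁻ w, g (y + e • w) = ENNReal.ofReal ((e ^ n)⁻¹) * ∫⁻ w, g w := by
  have h1 : ∫⁻ w, g (y + e • w) = ∫⁻ w, g (y + w) ∂(Measure.map (e • ·) (volume : Measure (Fin n → ℝ))) :=
    (lintegral_map_equiv (fun w => g (y + w)) (MeasurableEquiv.smul₀ e he.ne')).symm
  rw [h1, Measure.map_addHaar_smul _ he.ne', lintegral_smul_measure, lintegral_add_left_eq_self (fun w => g w) y]
  simp only [Module.finrank_fintype_fun_eq_card, Fintype.card_fin, smul_eq_mul]
  rw [abs_of_pos (by positivity)]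

lemma scale2 {g : (Fin 2 → ℝ) → ℝ≥0∞} (y : Fin 2 → ℝ) {e : ℝ} (he : 0 < e) :
    ∫⁻ w, g (y + e • w) = ENNReal.ofReal (e ^ (-2:ℝ)) * ∫⁻ w, g w := by
  rw [scale_pi y he, Real.rpow_neg he.le]
  norm_num

lemma vol_Q2 : volume (Set.Icc (0 : Fin 2 → ℝ) 1) = 1 := by
  rw [Real.volume_Icc_pi]; simp

lemma avg_le {g : (Fin 2 → ℝ) → ℝ≥0∞} (hg : Measurable g) (y : Fin 2 → ℝ) {e : ℝ} (he : 0 < e) :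
    ∫⁻ w in Set.Icc (0 : Fin 2 → ℝ) 1, g (y + e • w) ≤
      ENNReal.ofReal (e ^ (-(2:ℝ)/3)) * (∫⁻ w, g w ^ (3:ℝ)) ^ ((1:ℝ)/3) := by
  have hol := ENNReal.lintegral_mul_le_Lp_mul_Lq (volume.restrict (Set.Icc (0 : Fin 2 → ℝ) 1)) (p := 3) (q := 3/2)
    (by rw [Real.holderConjugate_iff]; norm_num) (f := fun w => g (y + e • w)) (g := fun _ => 1)
    (by fun_prop) (by fun_prop)
  simp only [Pi.mul_apply, mul_one, ENNReal.one_rpow, lintegral_const, Measure.restrict_apply MeasurableSet.univ,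
    Set.univ_inter, vol_Q2] at hol
  refine hol.trans ?_
  calc _ ≤ (∫⁻ w, g (y + e • w) ^ (3:ℝ)) ^ ((1:ℝ)/3) := by
        gcongr; exact Measure.restrict_le_self
    _ = _ := by
        rw [scale2 (g := fun w => g w ^ (3:ℝ)) y he, ENNReal.mul_rpow_of_nonneg _ _ (by norm_num),
          ENNReal.ofReal_rpow_of_nonneg (by positivity) (by norm_num), ← Real.rpow_mul he.le]
        norm_num

lemma int_s : ∫⁻ s in Set.Ioc (0:ℝ) 1, ENNReal.ofReal (s ^ (-(2:ℝ)/3)) = 3 := by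
  rw [← ofReal_integral_eq_lintegral_ofReal]
  · rw [← intervalIntegral.integral_of_le zero_le_one, integral_rpow (by norm_num)]
    norm_num
  · rw [← IntegrableOn, ← intervalIntegrable_iff_integrableOn_Ioc_of_le zero_le_one]
    exact intervalIntegral.intervalIntegrable_rpow' (by norm_num)
  · refine (ae_restrict_iff' measurableSet_Ioc).2 (Filter.Eventually.of_forall fun s hs => ?_)
    exact Real.rpow_nonneg hs.1.le _

lemma diff_le {n : ℕ} {ψ : (Fin n → ℝ) → ℝ} (hψ : ContDiff ℝ 1 ψ) (y v : Fin n → ℝ) :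
    ‖ψ (y + v) - ψ y‖ₑ ≤ ∫⁻ s in Set.Ioc (0:ℝ) 1, ‖fderiv ℝ ψ (y + s • v)‖ₑ * ‖v‖ₑ := by
  have hc : Continuous (fderiv ℝ ψ) := hψ.continuous_fderiv (by norm_num)
  have hd : ∀ s : ℝ, HasDerivAt (fun s : ℝ => ψ (y + s • v)) (fderiv ℝ ψ (y + s • v) v) s := by
    intro s
    have h1 : HasFDerivAt ψ (fderiv ℝ ψ (y + s • v)) (y + s • v) :=
      (hψ.differentiable (by norm_num) _).hasFDerivAt
    have h2 : HasDerivAt (fun s : ℝ => y + s • v) v s := by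
      simpa using ((hasDerivAt_id s).smul_const v).const_add y
    exact h1.comp_hasDerivAt s h2
  have hcc : Continuous fun s : ℝ => fderiv ℝ ψ (y + s • v) v := by fun_prop
  have := intervalIntegral.integral_eq_sub_of_hasDerivAt (a := 0) (b := 1) (fun s _ => hd s)
    (hcc.intervalIntegrable _ _)
  simp only [one_smul, zero_smul, add_zero] at this
  rw [← this, intervalIntegral.integral_of_le zero_le_one]
  refine (enorm_integral_le_lintegral_enorm _).trans ?_
  gcongr with s
  exact ContinuousLinearMap.le_opENorm _ _

lemma osc_le {ψ : (Fin 2 → ℝ) → ℝ} (hψ : ContDiff ℝ 1 ψ) (y : Fin 2 → ℝ) {e : ℝ} (he : 0 < e) :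
    ∫⁻ w in Set.Icc (0 : Fin 2 → ℝ) 1, ‖ψ (y + e • w) - ψ y‖ₑ ≤
      3 * ENNReal.ofReal (e ^ ((1:ℝ)/3)) * (∫⁻ w, ‖fderiv ℝ ψ w‖ₑ ^ (3:ℝ)) ^ ((1:ℝ)/3) := by
  have hc : Continuous (fderiv ℝ ψ) := hψ.continuous_fderiv (by norm_num)
  set P := (∫⁻ w, ‖fderiv ℝ ψ w‖ₑ ^ (3:ℝ)) ^ ((1:ℝ)/3)
  calc _ ≤ ∫⁻ w in Set.Icc (0 : Fin 2 → ℝ) 1, ∫⁻ s in Set.Ioc (0:ℝ) 1,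
        ‖fderiv ℝ ψ (y + (s * e) • w)‖ₑ * ENNReal.ofReal e := by
        apply setLIntegral_mono' measurableSet_Icc
        intro w hw
        refine (diff_le hψ y (e • w)).trans ?_
        gcongr with s
        · rw [smul_smul]
        · rw [enorm_smul, Real.enorm_eq_ofReal he.le]
          apply mul_le_of_le_one_right zero_le
          have h1 : ‖w‖ ≤ 1 := by
            rw [pi_norm_le_iff_of_nonneg zero_le_one]
            intro i
            rw [Real.norm_of_nonneg (hw.1 i)]
            exact hw.2 i
          rw [← ofReal_norm]
          simpa using ENNReal.ofReal_le_ofReal h1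
    _ = ∫⁻ s in Set.Ioc (0:ℝ) 1, ∫⁻ w in Set.Icc (0 : Fin 2 → ℝ) 1,
        ‖fderiv ℝ ψ (y + (s * e) • w)‖ₑ * ENNReal.ofReal e := by
        apply lintegral_lintegral_swap
        apply Measurable.aemeasurable
        have : Continuous (Function.uncurry fun (w : Fin 2 → ℝ) (s : ℝ) => fderiv ℝ ψ (y + (s * e) • w)) := by
          fun_prop
        exact this.measurable.enorm.mul_const _
    _ ≤ ∫⁻ s in Set.Ioc (0:ℝ) 1, ENNReal.ofReal (s ^ (-(2:ℝ)/3)) * (ENNReal.ofReal (e ^ ((1:ℝ)/3)) * P) := by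
        apply setLIntegral_mono' measurableSet_Ioc
        intro s hs
        rw [lintegral_mul_const'  _ _ ENNReal.ofReal_ne_top]
        refine (mul_le_mul_left (avg_le hc.measurable.enorm y (mul_pos hs.1 he)) _).trans (le_of_eq ?_)
        rw [Real.mul_rpow hs.1.le he.le, ENNReal.ofReal_mul (Real.rpow_nonneg hs.1.le _)]
        have : ENNReal.ofReal (e ^ ((1:ℝ)/3)) = ENNReal.ofReal (e ^ (-(2:ℝ)/3)) * ENNReal.ofReal e := by
          rw [← ENNReal.ofReal_mul (by positivity)]
          nth_rewrite 3 [← Real.rpow_one e]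
          rw [← Real.rpow_add he]
          norm_num
        rw [this]; ring
    _ = _ := by
        rw [lintegral_mul_const _ (by fun_prop), int_s, mul_assoc]

open MeasureTheory
open scoped ENNReal

/-- insertion of a zero in slot `a` -/
noncomputable def insL (a : Fin 3) : (Fin 2 → ℝ) →L[ℝ] (Fin 3 → ℝ) :=
  LinearMap.toContinuousLinearMap
    { toFun := fun y => a.insertNth (α := fun _ => ℝ) 0 y
      map_add' := fun y z => by
        ext i; refine Fin.succAboveCases a ?_ (fun j => ?_) i <;> simp
      map_smul' := fun c y => by
        ext i; refine Fin.succAboveCases a ?_ (fun j => ?_) i <;> simp }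

noncomputable def sl (a : Fin 3) (t : ℝ) (y : Fin 2 → ℝ) : Fin 3 → ℝ := t • Pi.single a 1 + insL a y

lemma insL_apply (a : Fin 3) (y) : insL a y = a.insertNth (α := fun _ => ℝ) 0 y := rfl

lemma sl_eq (a : Fin 3) (t : ℝ) (y) : sl a t y = a.insertNth (α := fun _ => ℝ) t y := by
  ext i
  refine Fin.succAboveCases a ?_ (fun j => ?_) i <;> simp [sl, insL_apply]

lemma sl_same (a : Fin 3) (t : ℝ) (y) : sl a t y a = t := by simp [sl_eq]
lemma sl_succ (a : Fin 3) (t : ℝ) (y) (j) : sl a t y (a.succAbove j) = y j := by simp [sl_eq]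

lemma insL_single (a : Fin 3) (j : Fin 2) : insL a (Pi.single j 1) = Pi.single (a.succAbove j) 1 := by
  ext i
  refine Fin.succAboveCases a ?_ (fun k => ?_) i <;> simp [insL_apply, Pi.single_apply]

lemma insL_norm (a : Fin 3) (y) : ‖insL a y‖ ≤ ‖y‖ := by
  rw [pi_norm_le_iff_of_nonneg (norm_nonneg _)]
  intro i
  refine Fin.succAboveCases a ?_ (fun k => ?_) i
  · simp [insL_apply]
  · simpa [insL_apply] using norm_le_pi_norm y k

lemma sl_norm1 (a : Fin 3) (t : ℝ) (y) : ‖t‖ ≤ ‖sl a t y‖ := by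
  simpa [sl_same] using norm_le_pi_norm (sl a t y) a
lemma sl_norm2 (a : Fin 3) (t : ℝ) (y) : ‖y‖ ≤ ‖sl a t y‖ := by
  rw [pi_norm_le_iff_of_nonneg (norm_nonneg _)]
  intro i
  simpa [sl_succ] using norm_le_pi_norm (sl a t y) (a.succAbove i)

lemma sl_cont (a : Fin 3) : Continuous (fun p : ℝ × (Fin 2 → ℝ) => sl a p.1 p.2) := by
  unfold sl; fun_prop

lemma sl_cont2 (a : Fin 3) (t) : Continuous (sl a t) := by
  unfold sl; fun_prop

lemma sl_mp (a : Fin 3) : MeasurePreserving (fun p : ℝ × (Fin 2 → ℝ) => sl a p.1 p.2)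
    (volume.prod volume) volume := by
  have h := (volume_preserving_piFinSuccAbove (fun _ : Fin 3 => ℝ) a).symm
  have e : (fun p : ℝ × (Fin 2 → ℝ) => sl a p.1 p.2) = (MeasurableEquiv.piFinSuccAbove (fun _ => ℝ) a).symm := by
    ext p i
    rw [sl_eq]; rfl
  rw [e]; exact h

lemma sl_lint (a : Fin 3) {g : (Fin 3 → ℝ) → ℝ≥0∞} (hg : Measurable g) :
    ∫⁻ x, g x = ∫⁻ t, ∫⁻ y, g (sl a t y) := by
  rw [← (sl_mp a).lintegral_comp hg, lintegral_prod (fun p : ℝ × (Fin 2 → ℝ) => g (sl a p.1 p.2)) (hg.comp (sl_cont a).measurable).aemeasurable]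

lemma sl_int (a : Fin 3) {g : (Fin 3 → ℝ) → ℝ} (hg : Integrable g) :
    ∫ x, g x = ∫ t, ∫ y, g (sl a t y) := by
  have h := (volume_preserving_piFinSuccAbove (fun _ : Fin 3 => ℝ) a).symm
  have h2 := h.integral_comp' (g := g)
  have h3 : Integrable (fun p : ℝ × (Fin 2 → ℝ) => g (sl a p.1 p.2)) (volume.prod volume) :=
    (sl_mp a).integrable_comp_of_integrable hg
  rw [← h2]
  rw [← integral_prod _ h3]
  congr 1; ext p
  rw [sl_eq]; rfl

lemma sl_hcs (a : Fin 3) {g : (Fin 3 → ℝ) → ℝ} (hg : HasCompactSupport g) :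
    ∃ R : ℝ, ∀ t y, R < ‖t‖ ∨ R < ‖y‖ → g (sl a t y) = 0 := by
  obtain ⟨R, hR⟩ := hg.isCompact.isBounded.exists_norm_le
  refine ⟨R, fun t y h => ?_⟩
  by_contra hne
  have := hR _ (subset_tsupport _ hne)
  have h1 := sl_norm1 a t y
  have h2 := sl_norm2 a t y
  rcases h with h | h <;> linarith

lemma sl_hcs2 (a : Fin 3) {g : (Fin 3 → ℝ) → ℝ} (hg : HasCompactSupport g) (t) :
    HasCompactSupport fun y => g (sl a t y) := by
  obtain ⟨R, hR⟩ := sl_hcs a hg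
  refine HasCompactSupport.intro (isCompact_closedBall 0 R) fun y hy => hR _ _ (Or.inr ?_)
  simpa using hy
lemma sl_hcs1 (a : Fin 3) {g : (Fin 3 → ℝ) → ℝ} (hg : HasCompactSupport g) (y) :
    HasCompactSupport fun t => g (sl a t y) := by
  obtain ⟨R, hR⟩ := sl_hcs a hg
  refine HasCompactSupport.intro (isCompact_closedBall 0 R) fun t ht => hR _ _ (Or.inl ?_)
  simpa using ht
lemma sl_hcs3 (a : Fin 3) {g : (Fin 3 → ℝ) → ℝ} (hg : HasCompactSupport g) :
    HasCompactSupport fun p : ℝ × (Fin 2 → ℝ) => g (sl a p.1 p.2) := by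
  obtain ⟨R, hR⟩ := sl_hcs a hg
  refine HasCompactSupport.intro (isCompact_closedBall 0 R) fun p hp => hR _ _ ?_
  by_contra hcon
  push Not at hcon
  exact hp (by simpa [Prod.norm_def] using hcon)

lemma sl_fderiv1 (a : Fin 3) {g : (Fin 3 → ℝ) → ℝ} (hg : ContDiff ℝ 1 g) (t y) :
    HasDerivAt (fun t => g (sl a t y)) (fderiv ℝ g (sl a t y) (Pi.single a 1)) t := by
  have h1 : HasFDerivAt g (fderiv ℝ g (sl a t y)) (sl a t y) :=
    (hg.differentiable (by norm_num) _).hasFDerivAt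
  have h2 : HasDerivAt (fun s : ℝ => sl a s y) (Pi.single a 1) t := by
    simpa [sl] using ((hasDerivAt_id t).smul_const (Pi.single a (1:ℝ))).add_const (insL a y)
  exact h1.comp_hasDerivAt t h2

lemma sl_fderiv2 (a : Fin 3) {g : (Fin 3 → ℝ) → ℝ} (hg : ContDiff ℝ 1 g) (t y) :
    HasFDerivAt (fun y => g (sl a t y)) ((fderiv ℝ g (sl a t y)).comp (insL a)) y := by
  have h1 : HasFDerivAt g (fderiv ℝ g (sl a t y)) (sl a t y) :=
    (hg.differentiable (by norm_num) _).hasFDerivAt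
  have h2 : HasFDerivAt (sl a t) (insL a) y := by
    simpa [sl] using ((insL a).hasFDerivAt (x := y)).const_add (t • Pi.single a (1:ℝ))
  exact h1.comp y h2

lemma slice_id (a : Fin 3) {f : Fin 3 → (Fin 3 → ℝ) → ℝ} (hf : ∀ j, ContDiff ℝ 1 (f j))
    (hfc : ∀ j, HasCompactSupport (f j))
    (hdiv : ∀ x, ∑ j, fderiv ℝ (f j) x (Pi.single j 1) = 0)
    {ψ : (Fin 2 → ℝ) → ℝ} (hψ : ContDiff ℝ 1 ψ) (t : ℝ) :
    ∫ y, f a (sl a t y) * ψ y = ∫ s in Set.Iic t, ∫ y, ∑ j : Fin 2,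
      f (a.succAbove j) (sl a s y) * fderiv ℝ ψ y (Pi.single j 1) := by
  have hψ' : Continuous (fderiv ℝ ψ) := hψ.continuous_fderiv (by norm_num)
  have hf' : ∀ j, Continuous (fderiv ℝ (f j)) := fun j => (hf j).continuous_fderiv (by norm_num)
  let g : (Fin 3 → ℝ) → ℝ := fun x => fderiv ℝ (f a) x (Pi.single a 1)
  have hgc : Continuous g := by fun_prop
  have hgs : HasCompactSupport g := (hfc a).fderiv_apply (𝕜 := ℝ) _
  have h1 : ∀ y, f a (sl a t y) = ∫ s in Set.Iic t, g (sl a s y) := by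
    intro y
    have hd := sl_fderiv1 a (hf a) (y := y)
    have hcd : ContDiff ℝ 1 fun t => f a (sl a t y) := by
      have : ContDiff ℝ 1 fun t => sl a t y := by unfold sl; fun_prop
      exact (hf a).comp this
    rw [← HasCompactSupport.integral_Iic_deriv_eq hcd (sl_hcs1 a (hfc a) y) t]
    congr 1; ext s
    exact (hd s).deriv
  simp_rw [h1, ← integral_mul_const]
  rw [integral_integral_swap]
  · congr 1; ext s
    have h2 : ∀ y, g (sl a s y) * ψ y = - ∑ j : Fin 2,
        fderiv ℝ (f (a.succAbove j)) (sl a s y) (Pi.single (a.succAbove j) 1) * ψ y := by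
      intro y
      have := hdiv (sl a s y)
      rw [Fin.sum_univ_succAbove _ a] at this
      rw [← Finset.sum_mul, ← neg_mul]
      congr 1
      simp only [g]; linarith
    simp_rw [h2]
    have hI1 : ∀ j : Fin 2, Integrable fun y => fderiv ℝ (f (a.succAbove j)) (sl a s y) (Pi.single (a.succAbove j) 1) * ψ y := by
      intro j
      apply Continuous.integrable_of_hasCompactSupport
      · have := sl_cont2 a s
        have := hψ.continuous
        have := hf' (a.succAbove j)
        fun_prop
      · exact (sl_hcs2 a ((hfc (a.succAbove j)).fderiv_apply (𝕜 := ℝ) (Pi.single (a.succAbove j) 1)) s).mul_right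
    have hI2 : ∀ j : Fin 2, Integrable fun y => f (a.succAbove j) (sl a s y) * fderiv ℝ ψ y (Pi.single j 1) := by
      intro j
      apply Continuous.integrable_of_hasCompactSupport
      · have := sl_cont2 a s
        have := (hf (a.succAbove j)).continuous
        fun_prop
      · exact (sl_hcs2 a (hfc (a.succAbove j)) s).mul_right
    rw [integral_neg, integral_finsetSum _ fun j _ => hI1 j, integral_finsetSum _ fun j _ => hI2 j,
      ← Finset.sum_neg_distrib]
    refine Finset.sum_congr rfl fun j _ => ?_
    have hfd : ∀ y, fderiv ℝ (fun y => f (a.succAbove j) (sl a s y)) y (Pi.single j 1) =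
        fderiv ℝ (f (a.succAbove j)) (sl a s y) (Pi.single (a.succAbove j) 1) := by
      intro y
      rw [(sl_fderiv2 a (hf _) s y).fderiv]
      simp [insL_single]
    rw [integral_mul_fderiv_eq_neg_fderiv_mul_of_integrable]
    · simp_rw [hfd]
    · simp_rw [hfd]; exact hI1 j
    · exact hI2 j
    · apply Continuous.integrable_of_hasCompactSupport
      · have := sl_cont2 a s
        have := (hf (a.succAbove j)).continuous
        have := hψ.continuous
        fun_prop
      · exact (sl_hcs2 a (hfc (a.succAbove j)) s).mul_right
    · exact fun y _ => (sl_fderiv2 a (hf _) s y).differentiableAt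
    · exact fun y _ => hψ.differentiable (by norm_num) y
  · have hc : Continuous (Function.uncurry fun (y : Fin 2 → ℝ) (s : ℝ) => g (sl a s y) * ψ y) := by
      have := sl_cont a
      have := hψ.continuous
      unfold sl; fun_prop
    have hs : HasCompactSupport (Function.uncurry fun (y : Fin 2 → ℝ) (s : ℝ) => g (sl a s y) * ψ y) := by
      have := ((sl_hcs3 a hgs).comp_homeomorph (Homeomorph.prodComm (Fin 2 → ℝ) ℝ)).mul_right (f' := fun p => ψ p.1)
      exact this
    have h3 : Integrable (Function.uncurry fun (y : Fin 2 → ℝ) (s : ℝ) => g (sl a s y) * ψ y) (volume.prod volume) :=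
      hc.integrable_of_hasCompactSupport hs
    exact h3.mono_measure (Measure.prod_mono le_rfl Measure.restrict_le_self)

open MeasureTheory
open scoped ENNReal

lemma swap_one {Q : Set (Fin 2 → ℝ)} {S : (Fin 2 → ℝ) → ℝ≥0∞} (hS : Measurable S)
    {D : (Fin 2 → ℝ) → (Fin 2 → ℝ) → ℝ≥0∞} (hD : Measurable (Function.uncurry D)) {C : ℝ≥0∞}
    (hC : ∀ y, ∫⁻ w in Q, D w y ≤ C) :
    ∫⁻ w in Q, ∫⁻ y, S y * D w y ≤ C * ∫⁻ y, S y := by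
  have hm : Measurable fun p : (Fin 2 → ℝ) × (Fin 2 → ℝ) => S p.2 * Function.uncurry D p :=
    (hS.comp measurable_snd).mul hD
  rw [lintegral_lintegral_swap hm.aemeasurable, ← lintegral_const_mul _ hS]
  refine lintegral_mono fun y => ?_
  have h2 : Measurable fun w => D w y := hD.comp (measurable_id.prodMk measurable_const)
  simp only []
  rw [lintegral_const_mul _ h2, mul_comm]
  exact mul_le_mul_left (hC y) _

lemma swap_two {Q : Set (Fin 2 → ℝ)} {S : ℝ → (Fin 2 → ℝ) → ℝ≥0∞} (hS : Measurable (Function.uncurry S))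
    {D : (Fin 2 → ℝ) → (Fin 2 → ℝ) → ℝ≥0∞} (hD : Measurable (Function.uncurry D)) {C : ℝ≥0∞}
    (hC : ∀ y, ∫⁻ w in Q, D w y ≤ C) :
    ∫⁻ w in Q, ∫⁻ s, ∫⁻ y, S s y * D w y ≤ C * ∫⁻ s, ∫⁻ y, S s y := by
  have hm : Measurable fun p : ((Fin 2 → ℝ) × ℝ) × (Fin 2 → ℝ) =>
      Function.uncurry S (p.1.2, p.2) * Function.uncurry D (p.1.1, p.2) :=
    (hS.comp (by fun_prop)).mul (hD.comp (by fun_prop))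
  have hm2 := hm.lintegral_prod_right' (ν := (volume : Measure (Fin 2 → ℝ)))
  rw [lintegral_lintegral_swap hm2.aemeasurable]
  have hm3 : Measurable fun s => ∫⁻ y, S s y := hS.lintegral_prod_right'
  rw [← lintegral_const_mul _ hm3]
  refine lintegral_mono fun s => ?_
  exact swap_one (S := S s) (hS.comp (measurable_const.prodMk measurable_id)) hD hC

lemma slice_eps (a : Fin 3) {f : Fin 3 → (Fin 3 → ℝ) → ℝ} (hf : ∀ j, ContDiff ℝ 1 (f j))
    (hfc : ∀ j, HasCompactSupport (f j))
    (hdiv : ∀ x, ∑ j, fderiv ℝ (f j) x (Pi.single j 1) = 0)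
    {ψ : (Fin 2 → ℝ) → ℝ} (hψ : ContDiff ℝ 1 ψ) (t : ℝ) {e : ℝ} (he : 0 < e) :
    ‖∫ y, f a (sl a t y) * ψ y‖ₑ ≤
      (∫⁻ w, ‖fderiv ℝ ψ w‖ₑ ^ (3:ℝ)) ^ ((1:ℝ)/3) *
      (3 * ENNReal.ofReal (e ^ ((1:ℝ)/3)) * (∫⁻ y, ‖f a (sl a t y)‖ₑ) +
        ENNReal.ofReal (e ^ (-(2:ℝ)/3)) * ∫⁻ x, ∑ j, ‖f j x‖ₑ) := by
  have hψ' : Continuous (fderiv ℝ ψ) := hψ.continuous_fderiv (by norm_num)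
  have hψc := hψ.continuous
  have hfcc : ∀ j, Continuous (f j) := fun j => (hf j).continuous
  have hslc := sl_cont a
  have hslc2 := sl_cont2 a t
  set P := (∫⁻ w, ‖fderiv ℝ ψ w‖ₑ ^ (3:ℝ)) ^ ((1:ℝ)/3) with hP
  let Q := Set.Icc (0 : Fin 2 → ℝ) 1
  let S : ℝ → (Fin 2 → ℝ) → ℝ≥0∞ := fun s y => ∑ j : Fin 2, ‖f (a.succAbove j) (sl a s y)‖ₑ
  have hSm : Measurable (Function.uncurry S) := by
    apply Finset.measurable_sum
    intro j _
    exact ((hfcc _).comp hslc).measurable.enorm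
  have key : ∀ w, ‖∫ y, f a (sl a t y) * ψ y‖ₑ ≤
      (∫⁻ y, ‖f a (sl a t y)‖ₑ * ‖ψ (y + e • w) - ψ y‖ₑ) +
      ∫⁻ s, ∫⁻ y, S s y * ‖fderiv ℝ ψ (y + e • w)‖ₑ := by
    intro w
    have hw : ContDiff ℝ 1 fun y => ψ (y + e • w) := by
      have : ContDiff ℝ 1 fun y : Fin 2 → ℝ => y + e • w := by fun_prop
      exact hψ.comp this
    have hwc := hw.continuous
    have id := slice_id a hf hfc hdiv hw t
    have hi1 : Integrable fun y => f a (sl a t y) * ψ y :=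
      Continuous.integrable_of_hasCompactSupport (by have := hfcc a; fun_prop) (sl_hcs2 a (hfc a) t).mul_right
    have hi2 : Integrable fun y => f a (sl a t y) * ψ (y + e • w) :=
      Continuous.integrable_of_hasCompactSupport (by have := hfcc a; fun_prop) (sl_hcs2 a (hfc a) t).mul_right
    have hsplit : ∫ y, f a (sl a t y) * ψ y = (∫ y, f a (sl a t y) * ψ (y + e • w)) -
        ∫ y, f a (sl a t y) * (ψ (y + e • w) - ψ y) := by
      rw [← integral_sub hi2]
      · congr 1; ext y; ring
      · simp_rw [mul_sub]; exact hi2.sub hi1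
    rw [hsplit, add_comm]
    refine (enorm_sub_le).trans (add_le_add ?_ ?_)
    · rw [id]
      refine (enorm_integral_le_lintegral_enorm _).trans ?_
      refine (lintegral_mono' Measure.restrict_le_self le_rfl).trans ?_
      gcongr with s
      refine (enorm_integral_le_lintegral_enorm _).trans ?_
      gcongr with y
      rw [Finset.sum_mul]
      refine (enorm_sum_le _ _).trans ?_
      gcongr with j
      rw [enorm_mul]
      gcongr
      rw [fderiv_comp_add_right]
      refine (ContinuousLinearMap.le_opENorm _ _).trans ?_
      apply mul_le_of_le_one_right zero_le
      rw [← ofReal_norm, Pi.norm_single]; simp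
    · refine (enorm_integral_le_lintegral_enorm _).trans ?_
      simp_rw [enorm_mul]; exact le_rfl
  have hvol : ∀ c : ℝ≥0∞, ∫⁻ w in Q, c = c := by
    intro c
    rw [lintegral_const, Measure.restrict_apply MeasurableSet.univ, Set.univ_inter, vol_Q2, mul_one]
  have hfam : Measurable fun y => ‖f a (sl a t y)‖ₑ := ((hfcc a).comp hslc2).measurable.enorm
  let D : (Fin 2 → ℝ) → (Fin 2 → ℝ) → ℝ≥0∞ := fun w y => ‖ψ (y + e • w) - ψ y‖ₑ
  have hDm : Measurable (Function.uncurry D) :=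
    (by fun_prop : Continuous fun p : (Fin 2 → ℝ) × (Fin 2 → ℝ) => ψ (p.2 + e • p.1) - ψ p.2).measurable.enorm
  let D2 : (Fin 2 → ℝ) → (Fin 2 → ℝ) → ℝ≥0∞ := fun w y => ‖fderiv ℝ ψ (y + e • w)‖ₑ
  have hD2m : Measurable (Function.uncurry D2) :=
    (by fun_prop : Continuous fun p : (Fin 2 → ℝ) × (Fin 2 → ℝ) => fderiv ℝ ψ (p.2 + e • p.1)).measurable.enorm
  calc ‖∫ y, f a (sl a t y) * ψ y‖ₑ = ∫⁻ w in Q, ‖∫ y, f a (sl a t y) * ψ y‖ₑ := (hvol _).symm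
    _ ≤ ∫⁻ w in Q, ((∫⁻ y, ‖f a (sl a t y)‖ₑ * ‖ψ (y + e • w) - ψ y‖ₑ) +
      ∫⁻ s, ∫⁻ y, S s y * ‖fderiv ℝ ψ (y + e • w)‖ₑ) := lintegral_mono fun w => key w
    _ = (∫⁻ w in Q, ∫⁻ y, ‖f a (sl a t y)‖ₑ * ‖ψ (y + e • w) - ψ y‖ₑ) +
        ∫⁻ w in Q, ∫⁻ s, ∫⁻ y, S s y * ‖fderiv ℝ ψ (y + e • w)‖ₑ := by
        apply lintegral_add_left
        have hm : Measurable fun p : (Fin 2 → ℝ) × (Fin 2 → ℝ) => ‖f a (sl a t p.2)‖ₑ * D p.1 p.2 :=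
          (hfam.comp measurable_snd).mul hDm
        exact hm.lintegral_prod_right'
    _ ≤ (3 * ENNReal.ofReal (e ^ ((1:ℝ)/3)) * P) * (∫⁻ y, ‖f a (sl a t y)‖ₑ) +
        (ENNReal.ofReal (e ^ (-(2:ℝ)/3)) * P) * ∫⁻ s, ∫⁻ y, S s y := by
        refine add_le_add ?_ ?_
        · exact swap_one hfam hDm fun y => osc_le hψ y he
        · exact swap_two hSm hD2m fun y => avg_le (g := fun w => ‖fderiv ℝ ψ w‖ₑ) hψ'.measurable.enorm y he
    _ ≤ (3 * ENNReal.ofReal (e ^ ((1:ℝ)/3)) * P) * (∫⁻ y, ‖f a (sl a t y)‖ₑ) +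
        (ENNReal.ofReal (e ^ (-(2:ℝ)/3)) * P) * ∫⁻ x, ∑ j, ‖f j x‖ₑ := by
        refine add_le_add le_rfl (mul_le_mul_right ?_ _)
        rw [sl_lint a (by fun_prop)]
        refine lintegral_mono fun s => lintegral_mono fun y => ?_
        rw [Fin.sum_univ_succAbove (fun j => ‖f j (sl a s y)‖ₑ) a]
        exact le_add_self
    _ = _ := by ring

lemma slice_opt (a : Fin 3) {f : Fin 3 → (Fin 3 → ℝ) → ℝ} (hf : ∀ j, ContDiff ℝ 1 (f j))
    (hfc : ∀ j, HasCompactSupport (f j))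
    (hdiv : ∀ x, ∑ j, fderiv ℝ (f j) x (Pi.single j 1) = 0)
    {ψ : (Fin 2 → ℝ) → ℝ} (hψ : ContDiff ℝ 1 ψ) (t : ℝ)
    (hb0 : ∫⁻ x, ∑ j, ‖f j x‖ₑ ≠ 0) (hb1 : ∫⁻ x, ∑ j, ‖f j x‖ₑ ≠ ⊤) :
    ‖∫ y, f a (sl a t y) * ψ y‖ₑ ≤
      (∫⁻ w, ‖fderiv ℝ ψ w‖ₑ ^ (3:ℝ)) ^ ((1:ℝ)/3) *
      (4 * (∫⁻ x, ∑ j, ‖f j x‖ₑ) ^ ((1:ℝ)/3) * (∫⁻ y, ‖f a (sl a t y)‖ₑ) ^ ((2:ℝ)/3)) := by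
  have h := fun e (he : 0 < e) => slice_eps a hf hfc hdiv hψ t (e := e) he
  have hfi : Integrable fun y => f a (sl a t y) :=
    Continuous.integrable_of_hasCompactSupport ((hf a).continuous.comp (sl_cont2 a t)) (sl_hcs2 a (hfc a) t)
  set b := ∫⁻ x, ∑ j, ‖f j x‖ₑ
  have hcdef : ∃ c, c = ∫⁻ y, ‖f a (sl a t y)‖ₑ := ⟨_, rfl⟩
  obtain ⟨c, hc⟩ := hcdef
  simp only [← hc] at h ⊢
  by_cases hc0 : c = 0
  · have : (fun y => f a (sl a t y)) =ᵐ[volume] 0 := by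
      rw [hc, lintegral_eq_zero_iff' hfi.1.enorm] at hc0
      filter_upwards [hc0] with y hy
      simpa using hy
    have h2 : ∫ y, f a (sl a t y) * ψ y = 0 := by
      rw [← integral_zero (Fin 2 → ℝ) ℝ (μ := volume)]
      apply integral_congr_ae
      filter_upwards [this] with y hy
      simp at hy; simp [hy]
    rw [h2]; simp
  have hc1 : c ≠ ⊤ := hc ▸ hfi.2.ne
  clear_value b
  lift b to NNReal using hb1
  lift c to NNReal using hc1
  have hb' : 0 < b := by simpa [pos_iff_ne_zero] using hb0
  have hc' : 0 < c := by simpa [pos_iff_ne_zero] using hc0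
  refine (h (b / c : ℝ) (by positivity)).trans (le_of_eq ?_)
  congr 1
  have e1 : (b : ℝ≥0∞) = ENNReal.ofReal b := by simp
  have e2 : (c : ℝ≥0∞) = ENNReal.ofReal c := by simp
  have hbr : (0:ℝ) < b := hb'
  have hcr : (0:ℝ) < c := hc'
  generalize (b:ℝ) = x at *
  generalize (c:ℝ) = z at *
  rw [e1, e2, ENNReal.ofReal_rpow_of_pos hbr, ENNReal.ofReal_rpow_of_pos hcr]
  rw [show (3:ℝ≥0∞) = ENNReal.ofReal 3 by simp, show (4:ℝ≥0∞) = ENNReal.ofReal 4 by simp]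
  have p1 : (x / z) ^ ((1:ℝ)/3) * z = x ^ ((1:ℝ)/3) * z ^ ((2:ℝ)/3) := by
    rw [Real.div_rpow hbr.le hcr.le, show (2:ℝ)/3 = 1 - 1/3 by norm_num, Real.rpow_sub hcr, Real.rpow_one]
    field_simp
  have p2 : (x / z) ^ (-(2:ℝ)/3) * x = x ^ ((1:ℝ)/3) * z ^ ((2:ℝ)/3) := by
    rw [Real.div_rpow hbr.le hcr.le, show (1:ℝ)/3 = 1 + (-2/3) by norm_num, Real.rpow_add hbr, Real.rpow_one,
      show (-2:ℝ)/3 = -(2/3) by norm_num, Real.rpow_neg hcr.le]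
    field_simp
  rw [← ENNReal.ofReal_mul (by norm_num), ← ENNReal.ofReal_mul (by positivity), ← ENNReal.ofReal_mul (by positivity),
    ← ENNReal.ofReal_mul (by positivity), ← ENNReal.ofReal_mul (by positivity),
    ← ENNReal.ofReal_add (by positivity) (by positivity), p2, mul_assoc, p1]
  congr 1; ring

theorem van_schaftingen (a : Fin 3) {f : Fin 3 → (Fin 3 → ℝ) → ℝ} (hf : ∀ j, ContDiff ℝ 1 (f j))
    (hfc : ∀ j, HasCompactSupport (f j))
    (hdiv : ∀ x, ∑ j, fderiv ℝ (f j) x (Pi.single j 1) = 0)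
    {φ : (Fin 3 → ℝ) → ℝ} (hφ : ContDiff ℝ 1 φ) :
    ‖∫ x, f a x * φ x‖ₑ ≤ 4 * (∫⁻ x, ∑ j, ‖f j x‖ₑ) * (∫⁻ x, ‖fderiv ℝ φ x‖ₑ ^ (3:ℝ)) ^ ((1:ℝ)/3) := by
  have hfi : ∀ j, Integrable (f j) := fun j => (hf j).continuous.integrable_of_hasCompactSupport (hfc j)
  have hφ' : Continuous (fderiv ℝ φ) := hφ.continuous_fderiv (by norm_num)
  have hfm : Measurable (f a) := (hf a).continuous.measurable
  set b := ∫⁻ x, ∑ j, ‖f j x‖ₑ with hb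
  have hb1 : b ≠ ⊤ := by
    rw [hb, lintegral_finsetSum' _ fun j _ => (hfi j).1.enorm]
    exact (ENNReal.sum_lt_top.2 fun j _ => (hfi j).2).ne
  have hab : ∫⁻ x, ‖f a x‖ₑ ≤ b := by
    rw [hb]
    gcongr with x
    exact Finset.single_le_sum (f := fun j => ‖f j x‖ₑ) (fun _ _ => zero_le) (Finset.mem_univ a)
  by_cases hb0 : b = 0
  · have h0 : ∫⁻ x, ‖f a x‖ₑ = 0 := le_antisymm (hab.trans hb0.le) zero_le
    have : f a =ᵐ[volume] 0 := by
      rw [lintegral_eq_zero_iff' (hfi a).1.enorm] at h0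
      filter_upwards [h0] with y hy
      simpa using hy
    have h2 : ∫ x, f a x * φ x = 0 := by
      rw [← integral_zero (Fin 3 → ℝ) ℝ (μ := volume)]
      apply integral_congr_ae
      filter_upwards [this] with y hy
      simp [hy]
    rw [h2]; simp
  have hφi : Integrable fun x => f a x * φ x :=
    ((hf a).continuous.mul hφ.continuous).integrable_of_hasCompactSupport (hfc a).mul_right
  have hφt : ∀ t, ContDiff ℝ 1 fun y => φ (sl a t y) := by
    intro t
    have : ContDiff ℝ 1 (sl a t) := by unfold sl; fun_prop
    exact hφ.comp this
  rw [sl_int a hφi]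
  let p : ℝ → ℝ≥0∞ := fun t => (∫⁻ y, ‖fderiv ℝ φ (sl a t y)‖ₑ ^ (3:ℝ)) ^ ((1:ℝ)/3)
  let c : ℝ → ℝ≥0∞ := fun t => (∫⁻ y, ‖f a (sl a t y)‖ₑ) ^ ((2:ℝ)/3)
  have hpm0 : Measurable fun t => ∫⁻ y, ‖fderiv ℝ φ (sl a t y)‖ₑ ^ (3:ℝ) := by
    apply Measurable.lintegral_prod_right' (f := fun q : ℝ × (Fin 2 → ℝ) => ‖fderiv ℝ φ (sl a q.1 q.2)‖ₑ ^ (3:ℝ))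
    exact (hφ'.comp (sl_cont a)).measurable.enorm.pow_const _
  have hcm0 : Measurable fun t => ∫⁻ y, ‖f a (sl a t y)‖ₑ := by
    apply Measurable.lintegral_prod_right' (f := fun q : ℝ × (Fin 2 → ℝ) => ‖f a (sl a q.1 q.2)‖ₑ)
    exact (hfm.comp (sl_cont a).measurable).enorm
  have hpm : Measurable p := hpm0.pow_const _
  have hcm : Measurable c := hcm0.pow_const _
  have step : ∀ t, ‖∫ y, f a (sl a t y) * φ (sl a t y)‖ₑ ≤ 4 * b ^ ((1:ℝ)/3) * (p t * c t) := by
    intro t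
    refine (slice_opt a hf hfc hdiv (hφt t) t hb0 hb1).trans ?_
    calc _ ≤ p t * (4 * b ^ ((1:ℝ)/3) * c t) := by
          refine mul_le_mul_left ?_ _
          simp only [p]
          gcongr with y
          rw [(sl_fderiv2 a hφ t y).fderiv, ← ofReal_norm, ← ofReal_norm]
          apply ENNReal.ofReal_le_ofReal
          refine (ContinuousLinearMap.opNorm_comp_le _ _).trans ?_
          apply mul_le_of_le_one_right (norm_nonneg _)
          refine ContinuousLinearMap.opNorm_le_bound _ zero_le_one fun v => ?_
          simpa using insL_norm a v
      _ = _ := by ring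
  have hol := ENNReal.lintegral_mul_le_Lp_mul_Lq volume (p := 3) (q := 3/2)
    (by rw [Real.holderConjugate_iff]; norm_num) hpm.aemeasurable hcm.aemeasurable
  have e1 : ∀ t, p t ^ (3:ℝ) = ∫⁻ y, ‖fderiv ℝ φ (sl a t y)‖ₑ ^ (3:ℝ) := by
    intro t; simp only [p]; rw [← ENNReal.rpow_mul]; norm_num
  have e2 : ∀ t, c t ^ ((3:ℝ)/2) = ∫⁻ y, ‖f a (sl a t y)‖ₑ := by
    intro t; simp only [c]; rw [← ENNReal.rpow_mul]; norm_num
  simp_rw [e1, e2] at hol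
  rw [← sl_lint a (g := fun x => ‖fderiv ℝ φ x‖ₑ ^ (3:ℝ)) (hφ'.measurable.enorm.pow_const _),
    ← sl_lint a (g := fun x => ‖f a x‖ₑ) hfm.enorm] at hol
  calc _ ≤ ∫⁻ t, ‖∫ y, f a (sl a t y) * φ (sl a t y)‖ₑ := enorm_integral_le_lintegral_enorm _
    _ ≤ ∫⁻ t, 4 * b ^ ((1:ℝ)/3) * (p t * c t) := lintegral_mono step
    _ = 4 * b ^ ((1:ℝ)/3) * ∫⁻ t, p t * c t := lintegral_const_mul _ (hpm.mul hcm)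
    _ ≤ 4 * b ^ ((1:ℝ)/3) * ((∫⁻ x, ‖fderiv ℝ φ x‖ₑ ^ (3:ℝ)) ^ ((1:ℝ)/3) * b ^ ((2:ℝ)/3)) := by
        gcongr
        refine hol.trans ?_
        gcongr
        rw [show (1:ℝ) / (3/2) = 2/3 by norm_num]
        gcongr
    _ = 4 * (b ^ ((1:ℝ)/3) * b ^ ((2:ℝ)/3)) * (∫⁻ x, ‖fderiv ℝ φ x‖ₑ ^ (3:ℝ)) ^ ((1:ℝ)/3) := by ring
    _ = _ := by
        rw [← ENNReal.rpow_add _ _ hb0 hb1]; norm_num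

open MeasureTheory
open scoped ENNReal

open scoped FourierTransform SchwartzMap Convolution in
lemma schw_l2 {V : Type*} [NormedAddCommGroup V] [InnerProductSpace ℝ V] [FiniteDimensional ℝ V]
    [MeasurableSpace V] [BorelSpace V] (m g : 𝓢(V, ℂ)) {C : ℝ} (hm : ∀ ξ, ‖m ξ‖ ≤ C) :
    eLpNorm (fun x => ∫ y, (𝓕⁻ m) (x - y) * g y) 2 volume ≤ ENNReal.ofReal C * eLpNorm g 2 volume := by
  have hC : 0 ≤ C := (norm_nonneg _).trans (hm 0)
  set h := SchwartzMap.convolution (ContinuousLinearMap.mul ℂ ℂ) g (𝓕⁻ m) with hh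
  have e1 : (fun x => ∫ y, (𝓕⁻ m) (x - y) * g y) = h := by
    ext x
    rw [hh, SchwartzMap.convolution_apply, convolution]
    congr 1; ext y; simp [mul_comm]
  have e2 : ∀ ξ, 𝓕 h ξ = 𝓕 g ξ * m ξ := by
    intro ξ
    rw [hh, SchwartzMap.fourier_convolution]
    simp
  rw [e1]
  have n1 : ∀ u : 𝓢(V, ℂ), eLpNorm (𝓕 u : 𝓢(V, ℂ)) 2 volume = eLpNorm u 2 volume := by
    intro u
    have := SchwartzMap.norm_fourier_toL2_eq u
    rw [SchwartzMap.norm_toLp, SchwartzMap.norm_toLp] at this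
    exact (ENNReal.toReal_eq_toReal_iff' ((𝓕 u : 𝓢(V, ℂ)).eLpNorm_lt_top 2 volume).ne (u.eLpNorm_lt_top 2 volume).ne).1 this
  rw [← n1 h, ← n1 g]
  apply eLpNorm_le_mul_eLpNorm_of_ae_le_mul
  refine Filter.Eventually.of_forall fun ξ => ?_
  rw [e2, norm_mul, mul_comm]
  gcongr
  exact hm ξ

open scoped FourierTransform SchwartzMap Convolution in
lemma schw_l2' {V : Type*} [NormedAddCommGroup V] [InnerProductSpace ℝ V] [FiniteDimensional ℝ V]
    [MeasurableSpace V] [BorelSpace V] (m : 𝓢(V, ℂ)) {C : ℝ} (hm : ∀ ξ, ‖m ξ‖ ≤ C)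
    {g : V → ℂ} (hg : MemLp g 2 volume) :
    eLpNorm (fun x => ∫ y, (𝓕⁻ m) (x - y) * g y) 2 volume ≤ ENNReal.ofReal C * eLpNorm g 2 volume := by
  have hd := SchwartzMap.denseRange_toLpCLM (E := V) (F := ℂ) (p := 2) (μ := volume) (by simp)
  obtain ⟨s, hs, hlim⟩ := mem_closure_iff_seq_limit.1 (hd (hg.toLp g))
  choose u hu using hs
  have hκ : ∀ x, MemLp (fun y => starRingEnd ℂ ((𝓕⁻ m) (x - y))) 2 volume := by
    intro x
    have h1 : MemLp (𝓕⁻ m : 𝓢(V, ℂ)) 2 volume := SchwartzMap.memLp (𝓕⁻ m : 𝓢(V, ℂ)) 2 volume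
    have h2 : MemLp (fun y => (𝓕⁻ m) (x - y)) 2 volume :=
      h1.comp_measurePreserving (Measure.measurePreserving_sub_left volume x)
    exact h2.star
  have hin : ∀ x, ∀ w : Lp ℂ 2 (volume : Measure V), inner ℂ ((hκ x).toLp _) w = ∫ y, (𝓕⁻ m) (x - y) * w y := by
    intro x w
    rw [L2.inner_def]
    apply integral_congr_ae
    filter_upwards [(hκ x).coeFn_toLp] with y hy
    rw [hy]
    simp [mul_comm]
  have hpt : ∀ x, Filter.Tendsto (fun n => ∫ y, (𝓕⁻ m) (x - y) * u n y) Filter.atTop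
      (nhds (∫ y, (𝓕⁻ m) (x - y) * g y)) := by
    intro x
    have h1 : Filter.Tendsto (fun n => inner ℂ ((hκ x).toLp _) (s n)) Filter.atTop
        (nhds (inner ℂ ((hκ x).toLp _) (hg.toLp g))) := (Filter.Tendsto.inner tendsto_const_nhds hlim)
    simp_rw [hin] at h1
    convert h1 using 1
    · ext n
      apply integral_congr_ae
      rw [← hu]
      filter_upwards [SchwartzMap.coeFn_toLp (u n) 2 volume] with y hy
      rw [SchwartzMap.toLpCLM_apply, hy]
    · congr 1
      apply integral_congr_ae
      filter_upwards [hg.coeFn_toLp] with y hy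
      rw [hy]
  have hmeas : ∀ n, AEStronglyMeasurable (fun x => ∫ y, (𝓕⁻ m) (x - y) * u n y) volume := by
    intro n
    have : (fun x => ∫ y, (𝓕⁻ m) (x - y) * u n y) = SchwartzMap.convolution (ContinuousLinearMap.mul ℂ ℂ) (u n) (𝓕⁻ m) := by
      ext x
      rw [SchwartzMap.convolution_apply, convolution]
      congr 1; ext y; simp [mul_comm]
    rw [this]
    exact (SchwartzMap.continuous _).aestronglyMeasurable
  refine (Lp.eLpNorm_lim_le_liminf_eLpNorm hmeas _ (Filter.Eventually.of_forall hpt)).trans ?_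
  have hn : Filter.Tendsto (fun n => ENNReal.ofReal C * eLpNorm (u n) 2 volume) Filter.atTop
      (nhds (ENNReal.ofReal C * eLpNorm g 2 volume)) := by
    apply ENNReal.Tendsto.const_mul _ (Or.inr ENNReal.ofReal_ne_top)
    have h2 : Filter.Tendsto (fun n => ‖s n‖ₑ) Filter.atTop (nhds ‖hg.toLp g‖ₑ) := hlim.enorm
    rw [Lp.enorm_toLp] at h2
    convert h2 using 2 with n
    rw [← hu, SchwartzMap.toLpCLM_apply, SchwartzMap.toLp, Lp.enorm_toLp]
  rw [← hn.liminf_eq]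
  exact Filter.liminf_le_liminf (Filter.Eventually.of_forall fun n => schw_l2 m (u n) hm)

open MeasureTheory
open scoped ENNReal

lemma dy_sum : ∃ D : ℝ, 0 < D ∧ ∀ r : ℝ, 0 ≤ r → ∀ S : Finset ℤ,
    ∑ j ∈ S, min ((2:ℝ) ^ j * r) (1 / ((2:ℝ) ^ j * r)) ≤ D := by
  have hsum : Summable fun i : ℤ => 2 * ((1:ℝ)/2) ^ i.natAbs := by
    apply Summable.of_nat_of_neg
    · simpa using (summable_geometric_two).mul_left 2
    · simpa using (summable_geometric_two).mul_left 2
  refine ⟨(∑' i : ℤ, 2 * ((1:ℝ)/2) ^ i.natAbs) + 1, ?_, fun r hr S => ?_⟩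
  · have : 0 ≤ ∑' i : ℤ, 2 * ((1:ℝ)/2) ^ i.natAbs := tsum_nonneg fun i => by positivity
    linarith
  rcases hr.eq_or_lt with h0 | hpos
  · rw [← h0]
    have : 0 ≤ ∑' i : ℤ, 2 * ((1:ℝ)/2) ^ i.natAbs := tsum_nonneg fun i => by positivity
    simp only [mul_zero, div_zero, min_self, Finset.sum_const_zero]; linarith
  obtain ⟨n, hn1, hn2⟩ := exists_mem_Ico_zpow hpos (one_lt_two : (1:ℝ) < 2)
  have hterm : ∀ j : ℤ, min ((2:ℝ) ^ j * r) (1 / ((2:ℝ) ^ j * r)) ≤ 2 * ((1:ℝ)/2) ^ (j + n).natAbs := by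
    intro j
    rcases le_total 0 (j + n) with h | h
    · refine (min_le_right _ _).trans ?_
      have h1 : (2:ℝ) ^ (j + n) ≤ 2 ^ j * r := by
        rw [zpow_add₀ two_ne_zero]; gcongr
      have h2 : ((1:ℝ)/2) ^ (j + n).natAbs = 1 / (2:ℝ) ^ (j + n) := by
        rw [one_div, one_div, inv_pow, ← zpow_natCast, Int.natAbs_of_nonneg h]
      rw [h2]
      have h3 : 1 / ((2:ℝ) ^ j * r) ≤ 1 / (2:ℝ) ^ (j + n) := by
        apply one_div_le_one_div_of_le (by positivity) h1
      have h4 : 0 < 1 / (2:ℝ) ^ (j + n) := by positivity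
      linarith
    · refine (min_le_left _ _).trans ?_
      have h2 : ((1:ℝ)/2) ^ (j + n).natAbs = (2:ℝ) ^ (j + n) := by
        rw [one_div, inv_pow, ← zpow_natCast, Int.ofNat_natAbs_of_nonpos h, ← zpow_neg, neg_neg]
      rw [h2]
      calc (2:ℝ) ^ j * r ≤ 2 ^ j * 2 ^ (n + 1) := by gcongr
        _ = 2 * 2 ^ (j + n) := by
          rw [zpow_add₀ two_ne_zero, zpow_add₀ two_ne_zero]; simp; ring
  calc _ ≤ ∑ j ∈ S, 2 * ((1:ℝ)/2) ^ (j + n).natAbs := Finset.sum_le_sum fun j _ => hterm j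
    _ = ∑ i ∈ S.map (Equiv.addRight n).toEmbedding, 2 * ((1:ℝ)/2) ^ i.natAbs := by
        rw [Finset.sum_map]; rfl
    _ ≤ ∑' i : ℤ, 2 * ((1:ℝ)/2) ^ i.natAbs := hsum.sum_le_tsum _ fun i _ => by positivity
    _ ≤ _ := by linarith

open scoped SchwartzMap in
lemma schw_h1 (k : 𝓢(Fin 3 → ℝ, ℝ)) (y : Fin 3 → ℝ) :
    ∫⁻ x, ‖k (x - y) - k x‖ₑ ≤ (∫⁻ x, ‖fderiv ℝ k x‖ₑ) * ‖y‖ₑ := by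
  have hk : ContDiff ℝ 1 k := k.smooth 1
  have hc : Continuous (fderiv ℝ k) := hk.continuous_fderiv (by norm_num)
  calc _ ≤ ∫⁻ x, ∫⁻ s in Set.Ioc (0:ℝ) 1, ‖fderiv ℝ k (x + s • (-y))‖ₑ * ‖y‖ₑ := by
        refine lintegral_mono fun x => ?_
        have := diff_le hk x (-y)
        rwa [← sub_eq_add_neg, enorm_neg] at this
    _ = ∫⁻ s in Set.Ioc (0:ℝ) 1, ∫⁻ x, ‖fderiv ℝ k (x + s • (-y))‖ₑ * ‖y‖ₑ := by
        apply lintegral_lintegral_swap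
        have : Continuous (Function.uncurry fun (x : Fin 3 → ℝ) (s : ℝ) => fderiv ℝ k (x + s • (-y))) := by
          fun_prop
        exact (this.measurable.enorm.mul_const _).aemeasurable
    _ = ∫⁻ s in Set.Ioc (0:ℝ) 1, (∫⁻ x, ‖fderiv ℝ k x‖ₑ) * ‖y‖ₑ := by
        congr 1; ext s
        rw [lintegral_mul_const' _ _ enorm_ne_top, lintegral_add_right_eq_self (fun x => ‖fderiv ℝ k x‖ₑ)]
    _ = _ := by simp

open scoped SchwartzMap in
lemma schw_tail (k : 𝓢(Fin 3 → ℝ, ℝ)) {z : Fin 3 → ℝ} (hz : z ≠ 0) :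
    ∫⁻ x in {x | ‖z‖ ≤ ‖x‖}, ‖k x‖ₑ ≤ (∫⁻ x, ‖‖x‖ * k x‖ₑ) / ‖z‖ₑ := by
  rw [ENNReal.le_div_iff_mul_le (by simp [hz]) (by simp)]
  rw [← lintegral_mul_const' _ _ enorm_ne_top]
  refine le_trans ?_ (setLIntegral_le_lintegral {x | ‖z‖ ≤ ‖x‖} _)
  apply setLIntegral_mono' (measurableSet_le measurable_const measurable_norm)
  intro x hx
  rw [enorm_mul, mul_comm, enorm_norm]
  gcongr
  rw [← ofReal_norm, ← ofReal_norm]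
  exact ENNReal.ofReal_le_ofReal hx

open scoped SchwartzMap in
lemma schw_hor (k : 𝓢(Fin 3 → ℝ, ℝ)) : ∃ C : ℝ, 0 ≤ C ∧ ∀ z : Fin 3 → ℝ,
    ∫⁻ x in {x | 2 * ‖z‖ ≤ ‖x‖}, ‖k (x - z) - k x‖ₑ ≤ ENNReal.ofReal (C * min ‖z‖ (1 / ‖z‖)) := by
  have f1 : ∫⁻ x, ‖fderiv ℝ k x‖ₑ ≠ ⊤ := by
    have := (SchwartzMap.fderivCLM ℝ (Fin 3 → ℝ) ℝ k).integrable (μ := volume)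
    exact this.2.ne
  have f2 : ∫⁻ x, ‖‖x‖ * k x‖ₑ ≠ ⊤ := by
    have := SchwartzMap.integrable_pow_mul (volume : Measure (Fin 3 → ℝ)) k 1
    have h2 := this.2.ne
    convert h2 using 3 with x
    simp [enorm_mul]
  set a := ∫⁻ x, ‖fderiv ℝ k x‖ₑ
  set b := ∫⁻ x, ‖‖x‖ * k x‖ₑ
  refine ⟨max a.toReal (2 * b.toReal), by positivity, fun z => ?_⟩
  by_cases hz : z = 0
  · subst hz; simp
  have hz' : 0 < ‖z‖ := norm_pos_iff.2 hz
  rcases le_total ‖z‖ (1 / ‖z‖) with h | h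
  · rw [min_eq_left h]
    calc _ ≤ ∫⁻ x, ‖k (x - z) - k x‖ₑ := setLIntegral_le_lintegral _ _
      _ ≤ a * ‖z‖ₑ := schw_h1 k z
      _ = ENNReal.ofReal (a.toReal * ‖z‖) := by
        rw [ENNReal.ofReal_mul ENNReal.toReal_nonneg, ENNReal.ofReal_toReal f1, ofReal_norm]
      _ ≤ _ := by
        apply ENNReal.ofReal_le_ofReal
        gcongr
        exact le_max_left _ _
  · rw [min_eq_right h]
    have hms : MeasurableSet {x : Fin 3 → ℝ | 2 * ‖z‖ ≤ ‖x‖} := measurableSet_le measurable_const measurable_norm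
    calc _ ≤ ∫⁻ x in {x | 2 * ‖z‖ ≤ ‖x‖}, (‖k (x - z)‖ₑ + ‖k x‖ₑ) := lintegral_mono fun x => enorm_sub_le
      _ = (∫⁻ x in {x | 2 * ‖z‖ ≤ ‖x‖}, ‖k (x - z)‖ₑ) + ∫⁻ x in {x | 2 * ‖z‖ ≤ ‖x‖}, ‖k x‖ₑ := by
        apply lintegral_add_right
        exact k.continuous.measurable.enorm
      _ ≤ b / ‖z‖ₑ + b / ‖z‖ₑ := by
        refine add_le_add ?_ ?_
        · refine le_trans ?_ (schw_tail k hz)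
          rw [← lintegral_indicator hms, ← lintegral_indicator (measurableSet_le measurable_const measurable_norm)]
          rw [← lintegral_sub_right_eq_self (fun x => Set.indicator {x : Fin 3 → ℝ | ‖z‖ ≤ ‖x‖} (fun x => ‖k x‖ₑ) x) z]
          refine lintegral_mono fun x => ?_
          by_cases hx : 2 * ‖z‖ ≤ ‖x‖
          · rw [Set.indicator_of_mem (by exact hx), Set.indicator_of_mem]
            have := norm_sub_norm_le x z
            show ‖z‖ ≤ ‖x - z‖
            linarith
          · rw [Set.indicator_of_notMem (by exact hx)]; exact zero_le
        · refine le_trans (lintegral_mono_set ?_) (schw_tail k hz)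
          intro x hx
          have : 2 * ‖z‖ ≤ ‖x‖ := hx
          show ‖z‖ ≤ ‖x‖
          linarith
      _ = ENNReal.ofReal (2 * b.toReal * (1 / ‖z‖)) := by
        rw [← ENNReal.add_div, ← two_mul, mul_one_div, ENNReal.ofReal_div_of_pos hz', ENNReal.ofReal_mul two_pos.le,
          ENNReal.ofReal_toReal f2, ofReal_norm]
        simp
      _ ≤ _ := by
        apply ENNReal.ofReal_le_ofReal
        gcongr
        exact le_max_right _ _

lemma scale3 {g : (Fin 3 → ℝ) → ℝ≥0∞} {e : ℝ} (he : 0 < e) :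
    ENNReal.ofReal (e ^ 3) * ∫⁻ w, g (e • w) = ∫⁻ w, g w := by
  have := scale_pi (g := g) 0 he
  simp only [zero_add] at this
  rw [this, ← mul_assoc, ← ENNReal.ofReal_mul (by positivity)]
  rw [mul_inv_cancel₀ (by positivity)]; simp

open scoped SchwartzMap in
lemma schw_hor_sum (k : 𝓢(Fin 3 → ℝ, ℝ)) : ∃ B : ℝ≥0∞, B ≠ ⊤ ∧ ∀ (S : Finset ℤ) (y : Fin 3 → ℝ),
    ∫⁻ x in {x | 2 * ‖y‖ ≤ ‖x‖},
      ‖(∑ j ∈ S, (8:ℝ) ^ j * k ((2:ℝ) ^ j • (x - y))) - ∑ j ∈ S, (8:ℝ) ^ j * k ((2:ℝ) ^ j • x)‖ₑ ≤ B := by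
  obtain ⟨C, hC0, hC⟩ := schw_hor k
  obtain ⟨D, hD0, hD⟩ := dy_sum
  refine ⟨ENNReal.ofReal (C * D), ENNReal.ofReal_ne_top, fun S y => ?_⟩
  have hkc := k.continuous
  have hms : ∀ y : Fin 3 → ℝ, MeasurableSet {x : Fin 3 → ℝ | 2 * ‖y‖ ≤ ‖x‖} :=
    fun y => measurableSet_le measurable_const measurable_norm
  have term : ∀ j : ℤ, ∫⁻ x in {x | 2 * ‖y‖ ≤ ‖x‖},
      ‖(8:ℝ) ^ j * k ((2:ℝ) ^ j • (x - y)) - (8:ℝ) ^ j * k ((2:ℝ) ^ j • x)‖ₑ ≤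
      ENNReal.ofReal (C * min ((2:ℝ) ^ j * ‖y‖) (1 / ((2:ℝ) ^ j * ‖y‖))) := by
    intro j
    have h2 : (0:ℝ) < 2 ^ j := by positivity
    have hn : ‖(2:ℝ) ^ j • y‖ = (2:ℝ) ^ j * ‖y‖ := by rw [norm_smul, Real.norm_of_nonneg h2.le]
    have := hC ((2:ℝ) ^ j • y)
    rw [hn] at this
    refine le_trans (le_of_eq ?_) this
    rw [← hn, ← lintegral_indicator (hms _), ← lintegral_indicator (hms _),
      ← scale3 (g := Set.indicator {x : Fin 3 → ℝ | 2 * ‖(2:ℝ) ^ j • y‖ ≤ ‖x‖} fun x => ‖k (x - (2:ℝ) ^ j • y) - k x‖ₑ) h2, ← lintegral_const_mul' _ _ ENNReal.ofReal_ne_top]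
    congr 1; ext x
    have h8 : ((2:ℝ) ^ j) ^ 3 = 8 ^ j := by
      rw [← zpow_natCast, zpow_comm]; norm_num
    by_cases hx : 2 * ‖y‖ ≤ ‖x‖
    · rw [Set.indicator_of_mem (by exact hx), Set.indicator_of_mem, h8, ← mul_sub, enorm_mul, smul_sub,
        Real.enorm_of_nonneg (by positivity)]
      show 2 * ‖(2:ℝ) ^ j • y‖ ≤ ‖(2:ℝ) ^ j • x‖
      rw [norm_smul, norm_smul, mul_left_comm]
      gcongr
    · rw [Set.indicator_of_notMem (by exact hx), Set.indicator_of_notMem, mul_zero]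
      show ¬ 2 * ‖(2:ℝ) ^ j • y‖ ≤ ‖(2:ℝ) ^ j • x‖
      rw [norm_smul, norm_smul, mul_left_comm]
      contrapose! hx
      exact le_of_mul_le_mul_left hx (by rw [Real.norm_of_nonneg h2.le]; exact h2)
  calc _ ≤ ∫⁻ x in {x | 2 * ‖y‖ ≤ ‖x‖}, ∑ j ∈ S,
        ‖(8:ℝ) ^ j * k ((2:ℝ) ^ j • (x - y)) - (8:ℝ) ^ j * k ((2:ℝ) ^ j • x)‖ₑ := by
        refine lintegral_mono fun x => ?_
        simp only []
        rw [← Finset.sum_sub_distrib]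
        exact enorm_sum_le _ _
    _ = ∑ j ∈ S, ∫⁻ x in {x | 2 * ‖y‖ ≤ ‖x‖},
        ‖(8:ℝ) ^ j * k ((2:ℝ) ^ j • (x - y)) - (8:ℝ) ^ j * k ((2:ℝ) ^ j • x)‖ₑ := by
        apply lintegral_finsetSum
        intro j _
        have : Continuous fun x => (8:ℝ) ^ j * k ((2:ℝ) ^ j • (x - y)) - (8:ℝ) ^ j * k ((2:ℝ) ^ j • x) := by fun_prop
        exact this.measurable.enorm
    _ ≤ ∑ j ∈ S, ENNReal.ofReal (C * min ((2:ℝ) ^ j * ‖y‖) (1 / ((2:ℝ) ^ j * ‖y‖))) :=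
        Finset.sum_le_sum fun j _ => term j
    _ = ENNReal.ofReal (∑ j ∈ S, C * min ((2:ℝ) ^ j * ‖y‖) (1 / ((2:ℝ) ^ j * ‖y‖))) := by
        rw [ENNReal.ofReal_sum_of_nonneg]
        intro j _
        positivity
    _ ≤ _ := by
        apply ENNReal.ofReal_le_ofReal
        rw [← Finset.mul_sum]
        gcongr
        exact hD _ (norm_nonneg _) S

open MeasureTheory
open scoped ENNReal

open scoped FourierTransform SchwartzMap in
/-- The real kernel on `ℝ³` with (complex) symbol `m`. -/
noncomputable def rk (m : 𝓢(EuclideanSpace ℝ (Fin 3), ℂ)) : 𝓢(Fin 3 → ℝ, ℝ) :=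
  SchwartzMap.postcompCLM Complex.reCLM
    (SchwartzMap.compCLMOfContinuousLinearEquiv ℝ (EuclideanSpace.equiv (Fin 3) ℝ).symm (𝓕⁻ m))

open scoped FourierTransform SchwartzMap in
lemma rk_apply (m : 𝓢(EuclideanSpace ℝ (Fin 3), ℂ)) (x : Fin 3 → ℝ) :
    rk m x = ((𝓕⁻ m) (WithLp.toLp 2 x)).re := rfl

open scoped FourierTransform SchwartzMap in
lemma rk_add (m n : 𝓢(EuclideanSpace ℝ (Fin 3), ℂ)) : rk (m + n) = rk m + rk n := by
  ext x
  rw [SchwartzMap.add_apply, rk_apply, rk_apply, rk_apply, FourierTransform.fourierInv_add]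
  simp

open scoped FourierTransform SchwartzMap in
lemma rk_sub (m n : 𝓢(EuclideanSpace ℝ (Fin 3), ℂ)) : rk (m - n) = rk m - rk n := by
  have := rk_add (m - n) n
  rw [sub_add_cancel] at this
  rw [this]; simp

open scoped FourierTransform SchwartzMap in
lemma rk_smul (c : ℝ) (m : 𝓢(EuclideanSpace ℝ (Fin 3), ℂ)) : rk (c • m) = c • rk m := by
  ext x
  rw [SchwartzMap.smul_apply, rk_apply, rk_apply, FourierTransform.fourierInv_smul]
  simp

open scoped FourierTransform SchwartzMap in
lemma rk_sum {ι : Type*} (S : Finset ι) (m : ι → 𝓢(EuclideanSpace ℝ (Fin 3), ℂ)) :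
    rk (∑ i ∈ S, m i) = ∑ i ∈ S, rk (m i) := by
  classical
  induction S using Finset.induction_on with
  | empty =>
    have := rk_smul 0 0
    simpa using this
  | insert a s ha ih => rw [Finset.sum_insert ha, Finset.sum_insert ha, rk_add, ih]

open scoped FourierTransform SchwartzMap in
/-- dyadic dilation of a symbol -/
noncomputable def dil (j : ℤ) (m : 𝓢(EuclideanSpace ℝ (Fin 3), ℂ)) : 𝓢(EuclideanSpace ℝ (Fin 3), ℂ) :=
  SchwartzMap.compCLMOfContinuousLinearEquiv ℂ
    (ContinuousLinearEquiv.smulLeft (Units.mk0 ((2:ℝ) ^ (-j)) (by positivity))) m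

open scoped FourierTransform SchwartzMap in
lemma dil_apply (j : ℤ) (m : 𝓢(EuclideanSpace ℝ (Fin 3), ℂ)) (ξ) : dil j m ξ = m ((2:ℝ) ^ (-j) • ξ) := rfl

open scoped FourierTransform SchwartzMap in
lemma rk_dil (j : ℤ) (m : 𝓢(EuclideanSpace ℝ (Fin 3), ℂ)) (x) :
    rk (dil j m) x = (8:ℝ) ^ j * rk m ((2:ℝ) ^ j • x) := by
  rw [rk_apply, rk_apply, SchwartzMap.fourierInv_coe, SchwartzMap.fourierInv_coe, Real.fourierInv_eq', Real.fourierInv_eq']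
  have h2 : (0:ℝ) < 2 ^ j := by positivity
  have := Measure.integral_comp_inv_smul_of_nonneg (volume : Measure (EuclideanSpace ℝ (Fin 3)))
    (fun v => Complex.exp (((2 * Real.pi * inner ℝ v (WithLp.toLp 2 ((2:ℝ) ^ j • x)) : ℝ) : ℂ) * Complex.I) • m v) h2.le
  have h8 : ((2:ℝ) ^ j) ^ 3 = 8 ^ j := by
    rw [← zpow_natCast, zpow_comm]; norm_num
  simp only [finrank_euclideanSpace, Fintype.card_fin, h8] at this
  have e := congrArg Complex.re this
  rw [Complex.real_smul, Complex.re_ofReal_mul] at e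
  rw [← e]
  congr 2; ext v
  rw [dil_apply, zpow_neg]
  congr 4
  rw [WithLp.toLp_smul, inner_smul_left, inner_smul_right]
  simp
  field_simp

open scoped FourierTransform SchwartzMap in
noncomputable def negS (m : 𝓢(EuclideanSpace ℝ (Fin 3), ℂ)) : 𝓢(EuclideanSpace ℝ (Fin 3), ℂ) :=
  SchwartzMap.compCLMOfContinuousLinearEquiv ℂ (ContinuousLinearEquiv.neg ℝ) m

open scoped FourierTransform SchwartzMap in
lemma negS_apply (m : 𝓢(EuclideanSpace ℝ (Fin 3), ℂ)) (ξ) : negS m ξ = m (-ξ) := rfl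

open scoped FourierTransform SchwartzMap in
lemma rk_negS (m : 𝓢(EuclideanSpace ℝ (Fin 3), ℂ)) (x) : rk (negS m) x = rk m (-x) := by
  rw [rk_apply, rk_apply, SchwartzMap.fourierInv_coe, SchwartzMap.fourierInv_coe, Real.fourierInv_eq', Real.fourierInv_eq']
  rw [← integral_neg_eq_self]
  congr 2; ext v
  rw [negS_apply, neg_neg]
  simp

open scoped FourierTransform SchwartzMap in
/-- multiscale sum -/
noncomputable def msum (N : ℕ) (m : 𝓢(EuclideanSpace ℝ (Fin 3), ℂ)) : 𝓢(EuclideanSpace ℝ (Fin 3), ℂ) :=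
  ∑ j ∈ Finset.Icc (-(N:ℤ)) N, dil j m

open scoped FourierTransform SchwartzMap in
lemma schw_sum_apply {ι : Type*} (S : Finset ι) {E F : Type*} [NormedAddCommGroup E] [NormedSpace ℝ E]
    [NormedAddCommGroup F] [NormedSpace ℝ F] (m : ι → 𝓢(E, F)) (x : E) :
    (∑ i ∈ S, m i) x = ∑ i ∈ S, m i x := by
  classical
  induction S using Finset.induction_on with
  | empty => simp
  | insert a s ha ih => rw [Finset.sum_insert ha, Finset.sum_insert ha, SchwartzMap.add_apply, ih]

open scoped FourierTransform SchwartzMap in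
lemma msum_apply (N : ℕ) (m : 𝓢(EuclideanSpace ℝ (Fin 3), ℂ)) (ξ) :
    msum N m ξ = ∑ j ∈ Finset.Icc (-(N:ℤ)) N, m ((2:ℝ) ^ (-j) • ξ) := by
  rw [msum, schw_sum_apply]; rfl

open scoped FourierTransform SchwartzMap in
lemma rk_msum (N : ℕ) (m : 𝓢(EuclideanSpace ℝ (Fin 3), ℂ)) (x) :
    rk (msum N m) x = ∑ j ∈ Finset.Icc (-(N:ℤ)) N, (8:ℝ) ^ j * rk m ((2:ℝ) ^ j • x) := by
  rw [msum, rk_sum, schw_sum_apply]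
  simp_rw [rk_dil]

open scoped FourierTransform SchwartzMap in
lemma msum_bdd (m : 𝓢(EuclideanSpace ℝ (Fin 3), ℂ)) (h0 : m 0 = 0) :
    ∃ C : ℝ, 0 ≤ C ∧ ∀ N ξ, ‖msum N m ξ‖ ≤ C := by
  obtain ⟨D, hD0, hD⟩ := dy_sum
  obtain ⟨C1, hC1, hb1⟩ : ∃ C : ℝ, 0 ≤ C ∧ ∀ ξ, ‖m ξ‖ ≤ C * ‖ξ‖ := by
    obtain ⟨C, hC⟩ : ∃ C : ℝ, ∀ ξ, ‖fderiv ℝ m ξ‖ ≤ C := by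
      obtain ⟨C, hC⟩ := (SchwartzMap.fderivCLM ℝ _ _ m).decay 0 0
      refine ⟨C, fun ξ => ?_⟩
      simpa using hC.2 ξ
    refine ⟨C, (norm_nonneg _).trans (hC 0), fun ξ => ?_⟩
    have := Convex.norm_image_sub_le_of_norm_fderiv_le (𝕜 := ℝ) (f := m) (s := Set.univ) (x := 0) (y := ξ)
      (fun x _ => m.differentiableAt) (fun x _ => hC x) convex_univ trivial trivial
    simpa [h0] using this
  obtain ⟨C2, hC2, hb2⟩ : ∃ C : ℝ, 0 ≤ C ∧ ∀ ξ, ‖ξ‖ * ‖m ξ‖ ≤ C := by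
    obtain ⟨C, hC⟩ := m.decay 1 0
    refine ⟨C, hC.1.le, fun ξ => ?_⟩
    simpa using hC.2 ξ
  refine ⟨(C1 + C2) * D, by positivity, fun N ξ => ?_⟩
  rw [msum_apply]
  by_cases hξ : ξ = 0
  · subst hξ; simp [h0]; positivity
  have hξ' : 0 < ‖ξ‖ := norm_pos_iff.2 hξ
  calc _ ≤ ∑ j ∈ Finset.Icc (-(N:ℤ)) N, ‖m ((2:ℝ) ^ (-j) • ξ)‖ := norm_sum_le _ _
    _ ≤ ∑ j ∈ Finset.Icc (-(N:ℤ)) N, (C1 + C2) * min ((2:ℝ) ^ j * (1 / ‖ξ‖)) (1 / ((2:ℝ) ^ j * (1 / ‖ξ‖))) := by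
        refine Finset.sum_le_sum fun j _ => ?_
        have h2 : (0:ℝ) < 2 ^ j := by positivity
        have hn : ‖(2:ℝ) ^ (-j) • ξ‖ = ‖ξ‖ / (2:ℝ) ^ j := by
          rw [norm_smul, zpow_neg, norm_inv, Real.norm_of_nonneg h2.le, inv_mul_eq_div]
        have a1 := hb1 ((2:ℝ) ^ (-j) • ξ)
        have a2 := hb2 ((2:ℝ) ^ (-j) • ξ)
        rw [hn] at a1 a2
        rcases le_total ((2:ℝ) ^ j * (1 / ‖ξ‖)) (1 / ((2:ℝ) ^ j * (1 / ‖ξ‖))) with h | h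
        · rw [min_eq_left h]
          have : ‖m ((2:ℝ) ^ (-j) • ξ)‖ ≤ C2 * ((2:ℝ) ^ j * (1 / ‖ξ‖)) := by
            have e : ‖m ((2:ℝ) ^ (-j) • ξ)‖ = (‖ξ‖ / (2:ℝ) ^ j * ‖m ((2:ℝ) ^ (-j) • ξ)‖) * ((2:ℝ) ^ j * (1 / ‖ξ‖)) := by
              field_simp
            rw [e]; gcongr
          refine this.trans ?_
          gcongr
          linarith
        · rw [min_eq_right h]
          have : ‖m ((2:ℝ) ^ (-j) • ξ)‖ ≤ C1 * (1 / ((2:ℝ) ^ j * (1 / ‖ξ‖))) := by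
            refine a1.trans (le_of_eq ?_)
            field_simp
          refine this.trans ?_
          gcongr
          linarith
    _ ≤ _ := by
        rw [← Finset.mul_sum]
        gcongr
        exact hD _ (by positivity) _

open scoped FourierTransform SchwartzMap in
lemma rk_l2 (m : 𝓢(EuclideanSpace ℝ (Fin 3), ℂ)) {C : ℝ} (hm : ∀ ξ, ‖m ξ‖ ≤ C)
    {g : (Fin 3 → ℝ) → ℝ} (hg1 : Integrable g) (hg2 : MemLp g 2) :
    ∫⁻ x, ‖cv (rk m) g x‖ₑ ^ 2 ≤ ENNReal.ofReal C ^ 2 * ∫⁻ x, ‖g x‖ₑ ^ 2 := by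
  have hmp := PiLp.volume_preserving_toLp (Fin 3)
  have hmp' := PiLp.volume_preserving_ofLp (Fin 3)
  have hme : MeasurableEmbedding (WithLp.toLp 2 : (Fin 3 → ℝ) → EuclideanSpace ℝ (Fin 3)) :=
    (MeasurableEquiv.toLp 2 (Fin 3 → ℝ)).measurableEmbedding
  let G : EuclideanSpace ℝ (Fin 3) → ℂ := fun v => ((g (WithLp.ofLp v) : ℝ) : ℂ)
  have hG : MemLp G 2 := (hg2.comp_measurePreserving hmp').ofReal
  have hl := schw_l2' m hm hG
  set T : EuclideanSpace ℝ (Fin 3) → ℂ := fun x => ∫ y, (𝓕⁻ m) (x - y) * G y with hT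
  have hcv : ∀ x, ‖cv (rk m) g x‖ₑ ≤ ‖T (WithLp.toLp 2 x)‖ₑ := by
    intro x
    have hIntg : Integrable fun y => (𝓕⁻ m) (WithLp.toLp 2 x - WithLp.toLp 2 y) * ((g y : ℝ) : ℂ) := by
      obtain ⟨M, hM⟩ := (𝓕⁻ m : 𝓢(EuclideanSpace ℝ (Fin 3), ℂ)).decay 0 0
      apply hg1.ofReal.bdd_mul (c := M)
      · apply Continuous.aestronglyMeasurable
        have := (𝓕⁻ m : 𝓢(EuclideanSpace ℝ (Fin 3), ℂ)).continuous
        have h3 : Continuous (WithLp.toLp 2 : (Fin 3 → ℝ) → EuclideanSpace ℝ (Fin 3)) := PiLp.continuous_toLp 2 _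
        fun_prop
      · refine Filter.Eventually.of_forall fun y => ?_
        simpa using hM.2 (WithLp.toLp 2 x - WithLp.toLp 2 y)
    have e : cv (rk m) g x = (T (WithLp.toLp 2 x)).re := by
      have e1 : T (WithLp.toLp 2 x) = ∫ y, (𝓕⁻ m) (WithLp.toLp 2 x - WithLp.toLp 2 y) * ((g y : ℝ) : ℂ) := by
        rw [hT]
        simp only []
        rw [← hmp.integral_comp hme]
      have e2 := integral_re hIntg
      simp only [RCLike.re_to_complex] at e2
      rw [e1, ← e2, cv]
      congr 1; ext y
      rw [rk_apply, Complex.re_mul_ofReal, WithLp.toLp_sub]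
    rw [e, ← ofReal_norm, ← ofReal_norm]
    apply ENNReal.ofReal_le_ofReal
    exact Complex.abs_re_le_norm _
  have sq : ∀ {W : Type} [MeasureSpace W] {F : Type} [NormedAddCommGroup F] (u : W → F),
      eLpNorm u 2 volume ^ 2 = ∫⁻ x, ‖u x‖ₑ ^ 2 := by
    intro W _ F _ u
    have := eLpNorm_nnreal_pow_eq_lintegral (f := u) (μ := volume) (p := 2) (by norm_num)
    simpa using this
  calc _ ≤ ∫⁻ x, ‖T (WithLp.toLp 2 x)‖ₑ ^ 2 := by
        refine lintegral_mono fun x => ?_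
        have := hcv x
        gcongr
    _ = ∫⁻ v, ‖T v‖ₑ ^ 2 := hmp.lintegral_comp_emb hme (fun v => ‖T v‖ₑ ^ 2)
    _ = eLpNorm T 2 volume ^ 2 := (sq T).symm
    _ ≤ (ENNReal.ofReal C * eLpNorm G 2 volume) ^ 2 := by gcongr
    _ = ENNReal.ofReal C ^ 2 * ∫⁻ v, ‖G v‖ₑ ^ 2 := by rw [mul_pow, sq G]
    _ = ENNReal.ofReal C ^ 2 * ∫⁻ x, ‖g x‖ₑ ^ 2 := by
        rw [← hmp.lintegral_comp_emb hme (fun v => ‖G v‖ₑ ^ 2)]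
        congr 2; ext x
        simp [G, ← ofReal_norm]

open scoped FourierTransform SchwartzMap in
theorem czk_rk (m : 𝓢(EuclideanSpace ℝ (Fin 3), ℂ)) (h0 : m 0 = 0) :
    ∃ B : ℝ≥0∞, B ≠ ⊤ ∧ ∀ N, CZK (rk (msum N m)) B := by
  obtain ⟨C, hC0, hC⟩ := msum_bdd m h0
  obtain ⟨B, hB, hB2⟩ := schw_hor_sum (rk m)
  refine ⟨ENNReal.ofReal C ^ 2 + B, by simp [hB], fun N => ⟨(rk (msum N m)).continuous, ?_, (rk (msum N m)).integrable, ?_, ?_⟩⟩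
  · obtain ⟨M, hM⟩ := (rk (msum N m)).decay 0 0
    exact ⟨M, fun x => by simpa using hM.2 x⟩
  · intro g hg1 hg2
    refine (rk_l2 (msum N m) (hC N) hg1 hg2).trans ?_
    gcongr
    exact le_self_add
  · intro y
    simp_rw [rk_msum]
    exact (hB2 _ y).trans le_add_self

open scoped FourierTransform SchwartzMap in
theorem czk_rk_neg (m : 𝓢(EuclideanSpace ℝ (Fin 3), ℂ)) (h0 : m 0 = 0) :
    ∃ B : ℝ≥0∞, B ≠ ⊤ ∧ ∀ N, CZK (fun x => rk (msum N m) (-x)) B := by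
  obtain ⟨B, hB, h⟩ := czk_rk (negS m) (by simp [negS_apply, h0])
  refine ⟨B, hB, fun N => ?_⟩
  have : (fun x => rk (msum N m) (-x)) = rk (msum N (negS m)) := by
    ext x
    rw [rk_msum, rk_msum]
    refine Finset.sum_congr rfl fun j _ => ?_
    rw [rk_negS, smul_neg]
  rw [this]; exact h N

open MeasureTheory
open scoped ENNReal

open scoped FourierTransform SchwartzMap in
/-- multiplication of a symbol by `2πi ξ_c` -/
noncomputable def Dsym (c : Fin 3) (m : 𝓢(EuclideanSpace ℝ (Fin 3), ℂ)) : 𝓢(EuclideanSpace ℝ (Fin 3), ℂ) :=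
  (2 * Real.pi * Complex.I) • SchwartzMap.smulLeftCLM ℂ
    (fun ξ : EuclideanSpace ℝ (Fin 3) => inner ℝ ξ (WithLp.toLp 2 (Pi.single c (1:ℝ)))) m

open scoped FourierTransform SchwartzMap in
lemma Dsym_apply (c : Fin 3) (m : 𝓢(EuclideanSpace ℝ (Fin 3), ℂ)) (ξ) :
    Dsym c m ξ = 2 * Real.pi * Complex.I * (ξ c : ℝ) * m ξ := by
  rw [Dsym, smul_apply, SchwartzMap.smulLeftCLM_apply_apply (by fun_prop)]
  have : inner ℝ ξ (WithLp.toLp 2 (Pi.single c (1:ℝ))) = ξ c := by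
    simp [PiLp.inner_apply, Pi.single_apply]
  rw [this]
  simp [mul_assoc]

open scoped FourierTransform SchwartzMap in
lemma pd_rk (c : Fin 3) (m : 𝓢(EuclideanSpace ℝ (Fin 3), ℂ)) (x : Fin 3 → ℝ) :
    pd c (rk m) x = rk (Dsym c m) x := by
  have h := SchwartzMap.lineDerivOp_fourierInv_eq m (WithLp.toLp 2 (Pi.single c (1:ℝ)))
  rw [rk_apply, Dsym, ← h, SchwartzMap.lineDerivOp_apply_eq_fderiv, pd]
  have h1 : (rk m : (Fin 3 → ℝ) → ℝ) = fun x => Complex.reCLM ((𝓕⁻ m) ((EuclideanSpace.equiv (Fin 3) ℝ).symm x)) := rfl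
  rw [h1]
  have h2 : HasFDerivAt (𝓕⁻ m : 𝓢(EuclideanSpace ℝ (Fin 3), ℂ)) (fderiv ℝ (𝓕⁻ m : 𝓢(EuclideanSpace ℝ (Fin 3), ℂ)) (WithLp.toLp 2 x)) ((EuclideanSpace.equiv (Fin 3) ℝ).symm x) :=
    (𝓕⁻ m).differentiableAt.hasFDerivAt
  have h3 := Complex.reCLM.hasFDerivAt.comp x (h2.comp x (EuclideanSpace.equiv (Fin 3) ℝ).symm.hasFDerivAt)
  have h4 := h3.fderiv
  simp only [Function.comp_def] at h4
  rw [h4]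
  rfl

open scoped FourierTransform SchwartzMap in
/-- multiscale potential sum -/
noncomputable def lsum (N : ℕ) (m : 𝓢(EuclideanSpace ℝ (Fin 3), ℂ)) : 𝓢(EuclideanSpace ℝ (Fin 3), ℂ) :=
  ∑ j ∈ Finset.Icc (-(N:ℤ)) N, ((2:ℝ) ^ (-j)) • dil j m

open scoped FourierTransform SchwartzMap in
lemma Dsym_lsum (c : Fin 3) (N : ℕ) (m : 𝓢(EuclideanSpace ℝ (Fin 3), ℂ)) :
    Dsym c (lsum N m) = msum N (Dsym c m) := by
  ext ξ
  rw [Dsym_apply, msum_apply, lsum, schw_sum_apply, Finset.mul_sum]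
  refine Finset.sum_congr rfl fun j _ => ?_
  rw [Dsym_apply, smul_apply, dil_apply]
  simp
  ring

open scoped FourierTransform SchwartzMap in
lemma pd_rk_lsum (c : Fin 3) (N : ℕ) (m : 𝓢(EuclideanSpace ℝ (Fin 3), ℂ)) (x : Fin 3 → ℝ) :
    pd c (rk (lsum N m)) x = rk (msum N (Dsym c m)) x := by
  rw [pd_rk, Dsym_lsum]

/-- the curl, from the matrix of derivatives `D c d = ∂_c Φ_d` -/
def crl {α : Type*} [Sub α] (D : Fin 3 → Fin 3 → α) : Fin 3 → α :=
  ![D 1 2 - D 2 1, D 2 0 - D 0 2, D 0 1 - D 1 0]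

open scoped FourierTransform SchwartzMap in
/-- Cutting off a function smooth away from the origin gives a Schwartz function. -/
lemma cut_schwartz (ψ : 𝓢(EuclideanSpace ℝ (Fin 3), ℂ)) (hc : HasCompactSupport ψ) (h0 : (0 : EuclideanSpace ℝ (Fin 3)) ∉ tsupport ψ)
    (g : EuclideanSpace ℝ (Fin 3) → ℂ) (hg : ∀ ξ, ξ ≠ 0 → ContDiffAt ℝ (⊤ : ℕ∞) g ξ) :
    ∃ m : 𝓢(EuclideanSpace ℝ (Fin 3), ℂ), ∀ ξ, m ξ = ψ ξ * g ξ := by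
  have h1 : ContDiff ℝ (⊤ : ℕ∞) (fun ξ => ψ ξ * g ξ) := by
    rw [contDiff_iff_contDiffAt]
    intro ξ
    by_cases h : ξ ∈ tsupport ψ
    · have : ξ ≠ 0 := fun e => h0 (e ▸ h)
      exact (ψ.smooth _).contDiffAt.mul (hg ξ this)
    · refine (contDiffAt_const (c := (0:ℂ))).congr_of_eventuallyEq ?_
      have := notMem_tsupport_iff_eventuallyEq.1 h
      filter_upwards [this] with y hy
      simp [hy]
  have h2 : HasCompactSupport (fun ξ => ψ ξ * g ξ) := hc.mul_right
  exact ⟨h2.toSchwartzMap h1, fun ξ => rfl⟩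

open MeasureTheory
open scoped ENNReal

/-- the symbol `a(ξ)` of the operator -/
noncomputable def sal {n : ℕ} (B : Fin n → Fin 3 → Fin 3 → ℝ) (w : Fin n) (i : Fin 3)
    (ξ : EuclideanSpace ℝ (Fin 3)) : ℝ := ∑ j, B w i j * ξ j

/-- the matrix `a(ξ)ᵀ a(ξ)` -/
noncomputable def sMx {n : ℕ} (B : Fin n → Fin 3 → Fin 3 → ℝ) (ξ : EuclideanSpace ℝ (Fin 3)) :
    Matrix (Fin 3) (Fin 3) ℝ := Matrix.of fun i k => ∑ w, sal B w i ξ * sal B w k ξ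

lemma sal_smooth {n : ℕ} (B : Fin n → Fin 3 → Fin 3 → ℝ) (w : Fin n) (i : Fin 3) :
    ContDiff ℝ (⊤ : ℕ∞) (sal B w i) := by
  unfold sal
  fun_prop

lemma sMx_smooth {n : ℕ} (B : Fin n → Fin 3 → Fin 3 → ℝ) (i k : Fin 3) :
    ContDiff ℝ (⊤ : ℕ∞) (fun ξ => sMx B ξ i k) := by
  have := sal_smooth B
  simp only [sMx, Matrix.of_apply]
  fun_prop

lemma det_smooth {M : EuclideanSpace ℝ (Fin 3) → Matrix (Fin 3) (Fin 3) ℝ}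
    (h : ∀ i k, ContDiff ℝ (⊤ : ℕ∞) (fun ξ => M ξ i k)) : ContDiff ℝ (⊤ : ℕ∞) (fun ξ => (M ξ).det) := by
  simp only [Matrix.det_fin_three]
  fun_prop

lemma sMx_det {n : ℕ} (B : Fin n → Fin 3 → Fin 3 → ℝ) (ξ : EuclideanSpace ℝ (Fin 3))
    (hB : ∀ v : Fin 3 → ℝ, (∀ w, ∑ i, v i * sal B w i ξ = 0) → v = 0) : (sMx B ξ).det ≠ 0 := by
  intro hd
  obtain ⟨v, hv, hMv⟩ := Matrix.exists_mulVec_eq_zero_iff.2 hd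
  apply hv
  apply hB
  have h1 : ∑ w, (∑ i, v i * sal B w i ξ) ^ 2 = 0 := by
    have : ∑ i, v i * ((sMx B ξ).mulVec v) i = 0 := by simp [hMv]
    rw [← this]
    have e : ∀ w, (∑ i, v i * sal B w i ξ) ^ 2 = ∑ i, ∑ k, v i * (sal B w i ξ * sal B w k ξ * v k) := by
      intro w
      rw [sq, Finset.sum_mul_sum]
      exact Finset.sum_congr rfl fun i _ => Finset.sum_congr rfl fun j _ => by ring
    simp_rw [e]
    simp only [Matrix.mulVec, dotProduct, sMx, Matrix.of_apply, Finset.mul_sum, Finset.sum_mul]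
    rw [Finset.sum_comm]
    refine Finset.sum_congr rfl fun i _ => ?_
    rw [Finset.sum_comm]
  intro w
  have := (Finset.sum_eq_zero_iff_of_nonneg (fun w _ => sq_nonneg _)).1 h1 w (Finset.mem_univ _)
  exact pow_eq_zero_iff (two_ne_zero) |>.1 this

lemma sMx_inv_smooth {n : ℕ} (B : Fin n → Fin 3 → Fin 3 → ℝ) (i k : Fin 3) (ξ : EuclideanSpace ℝ (Fin 3))
    (hd : (sMx B ξ).det ≠ 0) : ContDiffAt ℝ (⊤ : ℕ∞) (fun ξ => (sMx B ξ)⁻¹ i k) ξ := by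
  have h1 : (fun ξ => (sMx B ξ)⁻¹ i k) = fun ξ => ((sMx B ξ).det)⁻¹ * ((sMx B ξ).updateRow k (Pi.single i 1)).det := by
    ext ξ
    rw [Matrix.inv_def, Matrix.smul_apply, Matrix.adjugate_apply, Ring.inverse_eq_inv', smul_eq_mul]
  rw [h1]
  refine ContDiffAt.mul (ContDiffAt.inv (det_smooth (sMx_smooth B)).contDiffAt hd) (det_smooth fun a b => ?_).contDiffAt
  simp only [Matrix.updateRow_apply]
  split_ifs
  · exact contDiff_const
  · exact sMx_smooth B a b

/-- the component `H` -/
noncomputable def sH {n : ℕ} (B : Fin n → Fin 3 → Fin 3 → ℝ) (a b : Fin 3) (w : Fin n)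
    (ξ : EuclideanSpace ℝ (Fin 3)) : ℝ := ∑ k, sal B w k ξ * ((sMx B ξ)⁻¹ k a * ξ b)

/-- the remainder `W` -/
noncomputable def sW {n : ℕ} (B : Fin n → Fin 3 → Fin 3 → ℝ) (a b i j : Fin 3)
    (ξ : EuclideanSpace ℝ (Fin 3)) : ℝ := (if i = a ∧ j = b then 1 else 0) - ∑ w, B w i j * sH B a b w ξ

lemma sW_orth {n : ℕ} (B : Fin n → Fin 3 → Fin 3 → ℝ) (a b i : Fin 3) (ξ : EuclideanSpace ℝ (Fin 3))
    (hd : (sMx B ξ).det ≠ 0) : ∑ j, sW B a b i j ξ * ξ j = 0 := by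
  have h1 : ∑ j, (∑ w, B w i j * sH B a b w ξ) * ξ j = ∑ w, sal B w i ξ * sH B a b w ξ := by
    simp only [sal, Finset.sum_mul]
    rw [Finset.sum_comm]
    refine Finset.sum_congr rfl fun i _ => Finset.sum_congr rfl fun j _ => by ring
  have h2 : ∑ w, sal B w i ξ * sH B a b w ξ = ∑ k, sMx B ξ i k * ((sMx B ξ)⁻¹ k a * ξ b) := by
    simp only [sH, sMx, Matrix.of_apply, Finset.mul_sum, Finset.sum_mul]
    rw [Finset.sum_comm]
    refine Finset.sum_congr rfl fun i _ => Finset.sum_congr rfl fun j _ => by ring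
  have h3 : ∑ k, sMx B ξ i k * ((sMx B ξ)⁻¹ k a * ξ b) = (if i = a then 1 else 0) * ξ b := by
    have : (sMx B ξ * (sMx B ξ)⁻¹) i a = (if i = a then 1 else 0) := by
      rw [Matrix.mul_nonsing_inv _ (isUnit_iff_ne_zero.2 hd), Matrix.one_apply]
    rw [← this, Matrix.mul_apply, Finset.sum_mul]
    exact Finset.sum_congr rfl fun j _ => by ring
  simp only [sW, sub_mul, Finset.sum_sub_distrib]
  rw [h1, h2, h3]
  by_cases h : i = a <;> simp [h]

lemma sH_smooth {n : ℕ} (B : Fin n → Fin 3 → Fin 3 → ℝ) (a b : Fin 3) (w : Fin n)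
    (ξ : EuclideanSpace ℝ (Fin 3)) (hd : (sMx B ξ).det ≠ 0) : ContDiffAt ℝ (⊤ : ℕ∞) (sH B a b w) ξ := by
  have h1 := fun i k => sMx_inv_smooth B i k ξ hd
  have h3 : ContDiffAt ℝ (⊤ : ℕ∞) (fun ξ : EuclideanSpace ℝ (Fin 3) => ξ b) ξ := by fun_prop
  exact ContDiffAt.sum fun k _ => (sal_smooth B w k).contDiffAt.mul ((h1 k a).mul h3)

lemma sW_smooth {n : ℕ} (B : Fin n → Fin 3 → Fin 3 → ℝ) (a b i j : Fin 3)
    (ξ : EuclideanSpace ℝ (Fin 3)) (hd : (sMx B ξ).det ≠ 0) : ContDiffAt ℝ (⊤ : ℕ∞) (sW B a b i j) ξ := by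
  unfold sW
  have h1 := fun w => sH_smooth B a b w ξ hd
  fun_prop

/-- the potential -/
noncomputable def sP {n : ℕ} (B : Fin n → Fin 3 → Fin 3 → ℝ) (a b i d : Fin 3)
    (ξ : EuclideanSpace ℝ (Fin 3)) : ℝ :=
  crl (fun p q => ξ p * sW B a b i q ξ) d / (2 * Real.pi * (ξ 0 ^ 2 + ξ 1 ^ 2 + ξ 2 ^ 2))

lemma nsq_ne {ξ : EuclideanSpace ℝ (Fin 3)} (h : ξ ≠ 0) : ξ 0 ^ 2 + ξ 1 ^ 2 + ξ 2 ^ 2 ≠ 0 := by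
  intro h0
  apply h
  ext i
  have a0 := sq_nonneg (ξ 0)
  have a1 := sq_nonneg (ξ 1)
  have a2 := sq_nonneg (ξ 2)
  have : ξ i ^ 2 = 0 := by fin_cases i <;> simp <;> nlinarith
  simpa using this

lemma sP_smooth {n : ℕ} (B : Fin n → Fin 3 → Fin 3 → ℝ) (a b i d : Fin 3)
    (ξ : EuclideanSpace ℝ (Fin 3)) (h0 : ξ ≠ 0) (hd : (sMx B ξ).det ≠ 0) :
    ContDiffAt ℝ (⊤ : ℕ∞) (sP B a b i d) ξ := by
  have h1 := fun q => sW_smooth B a b i q ξ hd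
  have h2 : 2 * Real.pi * (ξ 0 ^ 2 + ξ 1 ^ 2 + ξ 2 ^ 2) ≠ 0 := mul_ne_zero (by positivity) (nsq_ne h0)
  unfold sP
  refine ContDiffAt.div ?_ (by fun_prop) h2
  fin_cases d <;> simp [crl] <;> fun_prop

lemma sP_crl {n : ℕ} (B : Fin n → Fin 3 → Fin 3 → ℝ) (a b i j : Fin 3)
    (ξ : EuclideanSpace ℝ (Fin 3)) (h0 : ξ ≠ 0) (hd : (sMx B ξ).det ≠ 0) :
    sW B a b i j ξ = - (2 * Real.pi) * crl (fun c d => ξ c * sP B a b i d ξ) j := by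
  have h := sW_orth B a b i ξ hd
  have hn := nsq_ne h0
  have hp := Real.pi_pos.ne'
  rw [Fin.sum_univ_three] at h
  fin_cases j <;> simp [crl, sP] <;> field_simp <;> 
  [linear_combination ξ 0 * h; linear_combination ξ 1 * h; linear_combination ξ 2 * h]

open scoped FourierTransform SchwartzMap in
lemma symbols {n : ℕ} (B : Fin n → Fin 3 → Fin 3 → ℝ)
    (hB : ∀ ξ : EuclideanSpace ℝ (Fin 3), ξ ≠ 0 → ∀ v : Fin 3 → ℝ, (∀ w, ∑ i, v i * sal B w i ξ = 0) → v = 0)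
    (ψ : 𝓢(EuclideanSpace ℝ (Fin 3), ℂ)) (hc : HasCompactSupport ψ)
    (h0 : (0 : EuclideanSpace ℝ (Fin 3)) ∉ tsupport ψ) :
    ∃ (k : Fin 3 → Fin 3 → Fin n → 𝓢(EuclideanSpace ℝ (Fin 3), ℂ))
      (l : Fin 3 → Fin 3 → Fin 3 → Fin 3 → 𝓢(EuclideanSpace ℝ (Fin 3), ℂ)),
      (∀ a b w, k a b w 0 = 0) ∧ ∀ a b i j, (if i = a ∧ j = b then (1:ℝ) else 0) • ψ =
        ∑ w, B w i j • k a b w + crl (fun c d => Dsym c (l a b i d)) j := by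
  have hd : ∀ ξ : EuclideanSpace ℝ (Fin 3), ξ ≠ 0 → (sMx B ξ).det ≠ 0 := fun ξ hξ => sMx_det B ξ (hB ξ hξ)
  have hk : ∀ a b w, ∃ m : 𝓢(EuclideanSpace ℝ (Fin 3), ℂ), ∀ ξ, m ξ = ψ ξ * (sH B a b w ξ : ℂ) := fun a b w =>
    cut_schwartz ψ hc h0 _ fun ξ hξ => Complex.ofRealCLM.contDiff.contDiffAt.comp ξ (sH_smooth B a b w ξ (hd ξ hξ))
  have hl : ∀ a b i d, ∃ m : 𝓢(EuclideanSpace ℝ (Fin 3), ℂ), ∀ ξ, m ξ = ψ ξ * (Complex.I * (sP B a b i d ξ : ℂ)) := fun a b i d =>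
    cut_schwartz ψ hc h0 _ fun ξ hξ => contDiffAt_const.mul
      (Complex.ofRealCLM.contDiff.contDiffAt.comp ξ (sP_smooth B a b i d ξ hξ (hd ξ hξ)))
  choose k hk using hk
  choose l hl using hl
  have hψ0 : ψ 0 = 0 := image_eq_zero_of_notMem_tsupport h0
  refine ⟨k, l, fun a b w => by rw [hk, hψ0, zero_mul], fun a b i j => ?_⟩
  ext ξ
  rw [add_apply, schw_sum_apply]
  have e1 : ∀ w, (B w i j • k a b w) ξ = ψ ξ * ((B w i j * sH B a b w ξ : ℝ) : ℂ) := by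
    intro w; rw [smul_apply, hk]; simp; ring
  have e2 : (crl (fun c d => Dsym c (l a b i d)) j) ξ =
      ψ ξ * ((- (2 * Real.pi) * crl (fun c d => ξ c * sP B a b i d ξ) j : ℝ) : ℂ) := by
    fin_cases j <;> simp [crl, Dsym_apply, hl] <;> ring_nf <;> simp <;> ring
  rw [e2]
  simp_rw [e1]
  rw [← Finset.mul_sum, ← mul_add, smul_apply]
  by_cases hξ : ξ = 0
  · subst hξ; simp [hψ0]
  · rw [← sP_crl B a b i j ξ hξ (hd ξ hξ), sW]
    rw [← Complex.ofReal_sum, ← Complex.ofReal_add]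
    rw [add_sub_cancel, mul_comm]
    split_ifs <;> simp

open MeasureTheory
open scoped ENNReal

open scoped FourierTransform SchwartzMap in
lemma exists_eta : ∃ η : 𝓢(EuclideanSpace ℝ (Fin 3), ℂ), HasCompactSupport η ∧
    (∀ᶠ ξ in nhds 0, η ξ = 1) := by
  let f : ContDiffBump (0 : EuclideanSpace ℝ (Fin 3)) := ⟨1, 2, one_pos, one_lt_two⟩
  have h1 : ContDiff ℝ (⊤ : ℕ∞) (fun ξ => ((f ξ : ℝ) : ℂ)) := Complex.ofRealCLM.contDiff.comp f.contDiff
  have h2 : HasCompactSupport (fun ξ => ((f ξ : ℝ) : ℂ)) := f.hasCompactSupport.comp_left (g := fun x : ℝ => (x:ℂ)) (by simp)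
  refine ⟨h2.toSchwartzMap h1, h2, ?_⟩
  filter_upwards [f.eventuallyEq_one] with ξ hξ
  show ((f ξ : ℝ) : ℂ) = 1
  rw [hξ]; simp

open scoped FourierTransform SchwartzMap in
noncomputable def psi (η : 𝓢(EuclideanSpace ℝ (Fin 3), ℂ)) : 𝓢(EuclideanSpace ℝ (Fin 3), ℂ) := η - dil (-1) η

open scoped FourierTransform SchwartzMap in
lemma psi_compact {η : 𝓢(EuclideanSpace ℝ (Fin 3), ℂ)} (h : HasCompactSupport η) : HasCompactSupport (psi η) := by
  have h1 : HasCompactSupport (dil (-1) η) := h.comp_smul (c := (2:ℝ) ^ (- (-1 : ℤ))) (by positivity)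
  exact h.sub h1

open scoped FourierTransform SchwartzMap in
lemma psi_zero {η : 𝓢(EuclideanSpace ℝ (Fin 3), ℂ)} (h : ∀ᶠ ξ in nhds 0, η ξ = 1) :
    (0 : EuclideanSpace ℝ (Fin 3)) ∉ tsupport (psi η) := by
  rw [notMem_tsupport_iff_eventuallyEq]
  have h2 : Filter.Tendsto (fun ξ : EuclideanSpace ℝ (Fin 3) => (2:ℝ) ^ (- (-1 : ℤ)) • ξ) (nhds 0) (nhds 0) := by
    have : Continuous (fun ξ : EuclideanSpace ℝ (Fin 3) => (2:ℝ) ^ (- (-1 : ℤ)) • ξ) := by fun_prop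
    simpa using this.tendsto 0
  filter_upwards [h, h2.eventually h] with ξ a b
  show η ξ - dil (-1) η ξ = 0
  rw [dil_apply, a, b, sub_self]

open scoped FourierTransform SchwartzMap in
lemma msum_psi (η : 𝓢(EuclideanSpace ℝ (Fin 3), ℂ)) (N : ℕ) :
    msum N (psi η) = dil N η - dil (-N - 1) η := by
  have hd : ∀ j : ℤ, dil j (psi η) = dil j η - dil (j - 1) η := by
    intro j; ext ξ
    show η ((2:ℝ) ^ (-j) • ξ) - η ((2:ℝ) ^ (-(-1:ℤ)) • (2:ℝ) ^ (-j) • ξ) = η ((2:ℝ) ^ (-j) • ξ) - η ((2:ℝ) ^ (-(j-1)) • ξ)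
    rw [smul_smul, ← zpow_add₀ (by norm_num)]
    congr 4
    ring
  unfold msum
  simp_rw [hd]
  induction N with
  | zero => simp
  | succ N ih =>
    have : Finset.Icc (-((N + 1 : ℕ) : ℤ)) ((N + 1 : ℕ) : ℤ) =
        insert ((N:ℤ) + 1) (insert (-(N:ℤ) - 1) (Finset.Icc (-(N:ℤ)) N)) := by
      ext j; simp; omega
    rw [this, Finset.sum_insert (by simp; omega), Finset.sum_insert (by simp), ih]
    have e1 : (N:ℤ) + 1 - 1 = N := by ring
    have e2 : -((N + 1 : ℕ) : ℤ) - 1 = -(N:ℤ) - 1 - 1 := by push_cast; ring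
    have e3 : ((N + 1 : ℕ) : ℤ) = (N:ℤ) + 1 := by push_cast; ring
    rw [e1, e2, e3]; abel

open scoped FourierTransform SchwartzMap in
lemma rk_integral (η : 𝓢(EuclideanSpace ℝ (Fin 3), ℂ)) : ∫ x, rk η x = (η 0).re := by
  have h1 : ∫ x, rk η x = ∫ v, ((𝓕⁻ η : 𝓢(EuclideanSpace ℝ (Fin 3), ℂ)) v).re := by
    exact (PiLp.volume_preserving_toLp (Fin 3)).integral_comp
      (MeasurableEquiv.toLp 2 (Fin 3 → ℝ)).measurableEmbedding
      (fun v => ((𝓕⁻ η : 𝓢(EuclideanSpace ℝ (Fin 3), ℂ)) v).re)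
  have h2 : η 0 = ∫ v, (𝓕⁻ η : 𝓢(EuclideanSpace ℝ (Fin 3), ℂ)) v := by
    have : 𝓕 (𝓕⁻ η) = η := FourierTransform.fourier_fourierInv_eq η
    conv_lhs => rw [← this]
    rw [SchwartzMap.fourier_coe, Real.fourier_eq']
    simp
  rw [h1, h2]
  exact integral_re (𝕜 := ℂ) (SchwartzMap.integrable _)

open scoped FourierTransform SchwartzMap in
lemma cv_dil (η : 𝓢(EuclideanSpace ℝ (Fin 3), ℂ)) (j : ℤ) (G : (Fin 3 → ℝ) → ℝ) (x) :
    cv (rk (dil j η)) G x = ∫ z, rk η z * G (x - (2:ℝ) ^ (-j) • z) := by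
  unfold cv
  rw [← integral_sub_left_eq_self _ volume x]
  have h2 : (0:ℝ) < 2 ^ j := by positivity
  have := Measure.integral_comp_smul_of_nonneg (volume : Measure (Fin 3 → ℝ))
    (fun z => rk η z * G (x - (2:ℝ) ^ (-j) • z)) ((2:ℝ) ^ j) (hR := h2.le)
  have h8 : ((2:ℝ) ^ j) ^ 3 = 8 ^ j := by
    rw [← zpow_natCast, zpow_comm]; norm_num
  simp only [Module.finrank_fin_fun, h8] at this
  have h8p : (0:ℝ) < 8 ^ j := by positivity
  rw [smul_eq_mul, eq_inv_mul_iff_mul_eq₀ h8p.ne', ← integral_const_mul] at this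
  rw [← this]
  congr 1; ext z
  rw [rk_dil, smul_smul, ← zpow_add₀ (by norm_num)]
  simp
  ring

open scoped FourierTransform SchwartzMap in
lemma approx_id (η : 𝓢(EuclideanSpace ℝ (Fin 3), ℂ)) (h1 : η 0 = 1) {G : (Fin 3 → ℝ) → ℝ}
    (hG : Continuous G) (hGc : HasCompactSupport G) :
    ∃ C : ℝ, (∀ (N : ℕ) x, ‖cv (rk (msum N (psi η))) G x‖ ≤ C) ∧
      ∀ x, Filter.Tendsto (fun N : ℕ => cv (rk (msum N (psi η))) G x) Filter.atTop (nhds (G x)) := by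
  obtain ⟨M, hM⟩ := hG.bounded_above_of_compact_support hGc
  obtain ⟨C, hC⟩ : ∃ C : ℝ, ∀ x, ‖rk η x‖ ≤ C := by
    obtain ⟨C, hC⟩ := (rk η).decay 0 0
    exact ⟨C, fun x => by simpa using hC.2 x⟩
  have hGi : Integrable G := hG.integrable_of_hasCompactSupport hGc
  have hbd : ∀ (m : 𝓢(EuclideanSpace ℝ (Fin 3), ℂ)), ∃ C : ℝ, ∀ x, ‖rk m x‖ ≤ C := by
    intro m
    obtain ⟨C, hC⟩ := (rk m).decay 0 0
    exact ⟨C, fun x => by simpa using hC.2 x⟩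
  have hsub : ∀ N x, cv (rk (msum N (psi η))) G x = cv (rk (dil N η)) G x - cv (rk (dil (-N - 1) η)) G x := by
    intro N x
    rw [msum_psi, rk_sub]
    unfold cv
    rw [← integral_sub]
    · congr 1; ext y; rw [sub_apply]; ring
    · obtain ⟨C, hC⟩ := hbd (dil N η)
      exact cv_integrable (rk _).continuous hC x hGi
    · obtain ⟨C, hC⟩ := hbd (dil (-N - 1) η)
      exact cv_integrable (rk _).continuous hC x hGi
  have hb : ∀ (j : ℤ) x, ‖cv (rk (dil j η)) G x‖ ≤ (∫ z, ‖rk η z‖) * M := by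
    intro j x
    rw [cv_dil, ← integral_mul_const]
    refine (norm_integral_le_integral_norm _).trans ?_
    refine integral_mono_of_nonneg (Filter.Eventually.of_forall fun _ => norm_nonneg _)
      ((rk η).integrable.norm.mul_const _) (Filter.Eventually.of_forall fun z => ?_)
    simp only [norm_mul]
    gcongr
    exact hM _
  have hlow : ∀ (j : ℤ) x, ‖cv (rk (dil j η)) G x‖ ≤ (8:ℝ) ^ j * C * ∫ y, ‖G y‖ := by
    intro j x
    refine cv_bdd (fun y => ?_) hGi x
    rw [rk_dil, norm_mul, Real.norm_of_nonneg (by positivity)]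
    gcongr
    exact hC _
  refine ⟨(∫ z, ‖rk η z‖) * M + (∫ z, ‖rk η z‖) * M, fun N x => ?_, fun x => ?_⟩
  · rw [hsub]
    exact (norm_sub_le _ _).trans (add_le_add (hb _ _) (hb _ _))
  · simp_rw [hsub]
    rw [← sub_zero (G x)]
    refine Filter.Tendsto.sub ?_ ?_
    · simp_rw [cv_dil]
      have e : G x = ∫ z, rk η z * G x := by
        rw [integral_mul_const, rk_integral, h1]; simp
      rw [e]
      refine tendsto_integral_of_dominated_convergence (fun z => ‖rk η z‖ * M) (fun N => ?_)
        ((rk η).integrable.norm.mul_const _) (fun N => Filter.Eventually.of_forall fun z => ?_)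
        (Filter.Eventually.of_forall fun z => ?_)
      · exact ((rk η).continuous.mul (hG.comp (by fun_prop))).aestronglyMeasurable
      · simp only [norm_mul]; gcongr; exact hM _
      · refine Filter.Tendsto.const_mul _ ?_
        have t : Filter.Tendsto (fun N : ℕ => x - (2:ℝ) ^ (-(N:ℤ)) • z) Filter.atTop (nhds (x - (0:ℝ) • z)) := by
          refine Filter.Tendsto.sub tendsto_const_nhds (Filter.Tendsto.smul_const ?_ z)
          have := tendsto_pow_atTop_nhds_zero_of_lt_one (r := (1/2:ℝ)) (by norm_num) (by norm_num)
          refine this.congr fun N => ?_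
          simp
        rw [zero_smul, sub_zero] at t
        exact (hG.tendsto x).comp t
    · rw [tendsto_zero_iff_norm_tendsto_zero]
      refine squeeze_zero (fun _ => norm_nonneg _) (fun N => hlow _ x) ?_
      have := (tendsto_pow_atTop_nhds_zero_of_lt_one (r := (1/8:ℝ)) (by norm_num) (by norm_num)).const_mul (8⁻¹ * C * ∫ y, ‖G y‖)
      rw [mul_zero] at this
      refine this.congr fun N => ?_
      rw [zpow_sub₀ (by norm_num), zpow_neg]
      simp
      ring

open scoped FourierTransform SchwartzMap in
lemma approx_pair (η : 𝓢(EuclideanSpace ℝ (Fin 3), ℂ)) (h1 : η 0 = 1) {F G : (Fin 3 → ℝ) → ℝ}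
    (hF : Continuous F) (hFc : HasCompactSupport F) (hG : Continuous G) (hGc : HasCompactSupport G) :
    Filter.Tendsto (fun N : ℕ => ∫ x, F x * cv (rk (msum N (psi η))) G x) Filter.atTop (nhds (∫ x, F x * G x)) := by
  obtain ⟨C, hC, ht⟩ := approx_id η h1 hG hGc
  have hGi : Integrable G := hG.integrable_of_hasCompactSupport hGc
  have hFi : Integrable F := hF.integrable_of_hasCompactSupport hFc
  refine tendsto_integral_of_dominated_convergence (fun x => ‖F x‖ * C) (fun N => ?_)
        (hFi.norm.mul_const _) (fun N => Filter.Eventually.of_forall fun z => ?_)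
        (Filter.Eventually.of_forall fun z => (ht z).const_mul _)
  · obtain ⟨M, hM⟩ := (rk (msum N (psi η))).decay 0 0
    exact (hF.mul (cv_cont (rk _).continuous (fun x => by simpa using hM.2 x) hGi)).aestronglyMeasurable
  · rw [norm_mul]; gcongr; exact hC _ _

open MeasureTheory
open scoped ENNReal

open scoped SchwartzMap in
lemma schw_bdd {E : Type*} [NormedAddCommGroup E] [NormedSpace ℝ E] (f : 𝓢(Fin 3 → ℝ, E)) : ∃ C : ℝ, ∀ x, ‖f x‖ ≤ C := by
  obtain ⟨C, hC⟩ := f.decay 0 0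
  exact ⟨C, fun x => by simpa using hC.2 x⟩

open scoped SchwartzMap in
lemma cv_hasFDeriv (L : 𝓢(Fin 3 → ℝ, ℝ)) {G : (Fin 3 → ℝ) → ℝ} (hG : Integrable G) (x : Fin 3 → ℝ) :
    HasFDerivAt (cv L G) (∫ y, G y • fderiv ℝ L (x - y)) x := by
  obtain ⟨C, hC⟩ := schw_bdd L
  obtain ⟨C', hC'⟩ := schw_bdd (SchwartzMap.fderivCLM ℝ _ _ L)
  have hC'' : ∀ x, ‖fderiv ℝ L x‖ ≤ C' := hC'
  have hcont : Continuous (fderiv ℝ L) := (SchwartzMap.fderivCLM ℝ _ _ L).continuous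
  refine hasFDerivAt_integral_of_dominated_of_fderiv_le (s := Set.univ) (bound := fun y => C' * ‖G y‖)
    (F' := fun x y => G y • fderiv ℝ L (x - y)) Filter.univ_mem
    (Filter.Eventually.of_forall fun x => (cv_integrable L.continuous hC x hG).1)
    (cv_integrable L.continuous hC x hG) ?_ ?_ (hG.norm.const_mul _) ?_
  · exact hG.1.smul (hcont.comp (by fun_prop : Continuous fun y => x - y)).aestronglyMeasurable
  · refine Filter.Eventually.of_forall fun y x _ => ?_
    rw [norm_smul, mul_comm]
    gcongr
    exact hC'' _
  · refine Filter.Eventually.of_forall fun y x _ => ?_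
    have h1 : HasFDerivAt (fun x => L (x - y)) (fderiv ℝ L (x - y)) x := by
      have h2 : HasFDerivAt L (fderiv ℝ L (x - y)) (x - y) := L.differentiableAt.hasFDerivAt
      have h3 := h2.comp x ((hasFDerivAt_id x).sub_const y)
      rw [ContinuousLinearMap.comp_id] at h3
      exact h3
    exact h1.mul_const' (G y) |>.congr_fderiv (by ext; simp)

open scoped SchwartzMap in
lemma cv_contDiff (L : 𝓢(Fin 3 → ℝ, ℝ)) {G : (Fin 3 → ℝ) → ℝ} (hG : Integrable G) : ContDiff ℝ 1 (cv L G) := by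
  obtain ⟨C', hC'⟩ := schw_bdd (SchwartzMap.fderivCLM ℝ _ _ L)
  have hC'' : ∀ x, ‖fderiv ℝ L x‖ ≤ C' := hC'
  have hcont : Continuous (fderiv ℝ L) := (SchwartzMap.fderivCLM ℝ _ _ L).continuous
  rw [contDiff_one_iff_fderiv]
  refine ⟨fun x => (cv_hasFDeriv L hG x).differentiableAt, ?_⟩
  have : fderiv ℝ (cv L G) = fun x => ∫ y, G y • fderiv ℝ L (x - y) := by
    ext1 x; exact (cv_hasFDeriv L hG x).fderiv
  rw [this]
  refine continuous_of_dominated (bound := fun y => C' * ‖G y‖) (fun x => ?_) (fun x => ?_) (hG.norm.const_mul _) ?_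
  · exact hG.1.smul (hcont.comp (by fun_prop : Continuous fun y => x - y)).aestronglyMeasurable
  · refine Filter.Eventually.of_forall fun y => ?_
    rw [norm_smul, mul_comm]
    gcongr
    exact hC'' _
  · refine Filter.Eventually.of_forall fun y => ?_
    have : Continuous fun x => fderiv ℝ L (x - y) := hcont.comp (by fun_prop)
    fun_prop

open scoped SchwartzMap in
lemma pd_cv (c : Fin 3) (L : 𝓢(Fin 3 → ℝ, ℝ)) {G : (Fin 3 → ℝ) → ℝ} (hG : Integrable G) (x : Fin 3 → ℝ) :
    pd c (cv L G) x = cv (fun y => pd c L y) G x := by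
  obtain ⟨C', hC'⟩ := schw_bdd (SchwartzMap.fderivCLM ℝ _ _ L)
  have hC'' : ∀ x, ‖fderiv ℝ L x‖ ≤ C' := hC'
  have hcont : Continuous (fderiv ℝ L) := (SchwartzMap.fderivCLM ℝ _ _ L).continuous
  rw [pd, (cv_hasFDeriv L hG x).fderiv, ContinuousLinearMap.integral_apply]
  · unfold cv pd
    congr 1; ext y; simp [mul_comm]
  · refine Integrable.mono' (hG.norm.const_mul C') ?_ ?_
    · exact hG.1.smul (hcont.comp (by fun_prop : Continuous fun y => x - y)).aestronglyMeasurable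
    · refine Filter.Eventually.of_forall fun y => ?_
      rw [norm_smul, mul_comm]
      gcongr
      exact hC'' _

open scoped SchwartzMap in
/-- The `ℝ`-linear map from symbols to truncated kernels. -/
noncomputable def kT (N : ℕ) : 𝓢(EuclideanSpace ℝ (Fin 3), ℂ) →ₗ[ℝ] 𝓢(Fin 3 → ℝ, ℝ) where
  toFun m := rk (msum N m)
  map_add' m n := by
    rw [← rk_add]; congr 1; ext ξ; rw [add_apply, msum_apply, msum_apply, msum_apply, ← Finset.sum_add_distrib]
    simp
  map_smul' r m := by
    rw [RingHom.id_apply, ← rk_smul]; congr 1; ext ξ; rw [smul_apply, msum_apply, msum_apply, Finset.smul_sum]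
    simp

open scoped SchwartzMap in
lemma kT_apply (N : ℕ) (m : 𝓢(EuclideanSpace ℝ (Fin 3), ℂ)) : kT N m = rk (msum N m) := rfl

open scoped SchwartzMap in
/-- convolution of a Schwartz kernel with a fixed integrable function, evaluated at a point, as a linear map -/
noncomputable def cvT {G : (Fin 3 → ℝ) → ℝ} (hG : Integrable G) (x : Fin 3 → ℝ) : 𝓢(Fin 3 → ℝ, ℝ) →ₗ[ℝ] ℝ where
  toFun K := cv K G x
  map_add' K L := by
    obtain ⟨C, hC⟩ := schw_bdd K
    obtain ⟨C', hC'⟩ := schw_bdd L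
    unfold cv
    rw [← integral_add (cv_integrable K.continuous hC x hG) (cv_integrable L.continuous hC' x hG)]
    congr 1; ext y; rw [add_apply]; ring
  map_smul' r K := by
    unfold cv
    rw [RingHom.id_apply, smul_eq_mul, ← integral_const_mul]
    congr 1; ext y; rw [smul_apply, smul_eq_mul]; ring

lemma map_crl {α β : Type*} [AddCommGroup α] [AddCommGroup β] (f : α →+ β) (D : Fin 3 → Fin 3 → α) (j : Fin 3) :
    f (crl D j) = crl (fun c d => f (D c d)) j := by
  fin_cases j <;> simp [crl]

open scoped SchwartzMap in
lemma kernel_identity {n : ℕ} (B : Fin n → ℝ) (ψ : 𝓢(EuclideanSpace ℝ (Fin 3), ℂ)) (r : ℝ)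
    (k : Fin n → 𝓢(EuclideanSpace ℝ (Fin 3), ℂ)) (l : Fin 3 → 𝓢(EuclideanSpace ℝ (Fin 3), ℂ)) (j : Fin 3)
    (h : r • ψ = ∑ w, B w • k w + crl (fun c d => Dsym c (l d)) j) (N : ℕ)
    {G : (Fin 3 → ℝ) → ℝ} (hG : Integrable G) (x : Fin 3 → ℝ) :
    r * cv (rk (msum N ψ)) G x = ∑ w, B w * cv (rk (msum N (k w))) G x
      + crl (fun c d => pd c (cv (rk (lsum N (l d))) G) x) j := by
  have e : ∀ c d, pd c (cv (rk (lsum N (l d))) G) x = cvT hG x (kT N (Dsym c (l d))) := by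
    intro c d
    rw [pd_cv c _ hG]
    simp_rw [pd_rk_lsum]
    rfl
  simp_rw [e]
  have h2 := congrArg (fun m => cvT hG x (kT N m)) h
  simp only [map_smul, map_add, map_sum] at h2
  have h3 := map_crl ((cvT hG x).toAddMonoidHom.comp (kT N).toAddMonoidHom) (fun c d => Dsym c (l d)) j
  have h4 : cvT hG x (kT N (crl (fun c d => Dsym c (l d)) j)) = crl (fun c d => cvT hG x (kT N (Dsym c (l d)))) j := h3
  rw [h4] at h2
  exact h2

lemma ibp {f g : (Fin 3 → ℝ) → ℝ} (hf : ContDiff ℝ 1 f) (hfc : HasCompactSupport f) (hg : ContDiff ℝ 1 g) (c : Fin 3) :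
    ∫ x, f x * pd c g x = - ∫ x, pd c f x * g x := by
  have hf' : Continuous (fun x => fderiv ℝ f x (Pi.single c 1)) := (hf.continuous_fderiv one_ne_zero).clm_apply continuous_const
  have hg' : Continuous (fun x => fderiv ℝ g x (Pi.single c 1)) := (hg.continuous_fderiv one_ne_zero).clm_apply continuous_const
  have hfc' : HasCompactSupport (fun x => fderiv ℝ f x (Pi.single c 1)) := hfc.fderiv_apply ℝ _
  exact integral_mul_fderiv_eq_neg_fderiv_mul_of_integrable
    ((hf'.mul hg.continuous).integrable_of_hasCompactSupport hfc'.mul_right)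
    ((hf.continuous.mul hg').integrable_of_hasCompactSupport hfc.mul_right)
    ((hf.continuous.mul hg.continuous).integrable_of_hasCompactSupport hfc.mul_right)
    (fun x _ => hf.differentiable one_ne_zero x) (fun x _ => hg.differentiable one_ne_zero x)

open MeasureTheory
open scoped ENNReal

lemma pd_contDiff {f : (Fin 3 → ℝ) → ℝ} (hf : ContDiff ℝ (⊤ : ℕ∞) f) (c : Fin 3) :
    ContDiff ℝ (⊤ : ℕ∞) (pd c f) :=
  (hf.fderiv_right (m := (⊤ : ℕ∞)) (by simp)).clm_apply contDiff_const

lemma pd_compact {f : (Fin 3 → ℝ) → ℝ} (hf : HasCompactSupport f) (c : Fin 3) :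
    HasCompactSupport (pd c f) := hf.fderiv_apply ℝ _

lemma pd_comm {f : (Fin 3 → ℝ) → ℝ} (hf : ContDiff ℝ (⊤ : ℕ∞) f) (c d : Fin 3) (x) :
    pd c (pd d f) x = pd d (pd c f) x := by
  have hs : IsSymmSndFDerivAt ℝ f x := hf.contDiffAt.isSymmSndFDerivAt (by simp only [minSmoothness_of_isRCLikeNormedField]; exact WithTop.coe_le_coe.2 (le_top : (2:ℕ∞) ≤ ⊤))
  have hd : DifferentiableAt ℝ (fderiv ℝ f) x :=
    (hf.fderiv_right (m := (⊤ : ℕ∞)) (by simp)).differentiable (by simp) x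
  have key : ∀ c d, pd c (pd d f) x = fderiv ℝ (fderiv ℝ f) x (Pi.single c 1) (Pi.single d 1) := by
    intro c d
    unfold pd
    rw [fderiv_clm_apply hd (differentiableAt_const _)]
    simp
  rw [key, key]
  exact hs _ _

lemma crl_div {f : Fin 3 → (Fin 3 → ℝ) → ℝ} (hf : ∀ j, ContDiff ℝ (⊤ : ℕ∞) (f j)) (x) :
    ∑ j, fderiv ℝ (fun x => crl (fun c e => pd c (f e) x) j) x (Pi.single j 1) = 0 := by
  have hd : ∀ c e, DifferentiableAt ℝ (pd c (f e)) x := fun c e => (pd_contDiff (hf e) c).differentiable (by simp) x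
  have hk : ∀ p c e d g, fderiv ℝ (fun x => pd c (f e) x - pd d (f g) x) x (Pi.single p 1) =
      pd p (pd c (f e)) x - pd p (pd d (f g)) x := by
    intro p c e d g
    rw [fderiv_fun_sub (hd _ _) (hd _ _)]
    rfl
  rw [Fin.sum_univ_three]
  simp only [crl, Matrix.cons_val_zero, Matrix.cons_val_one, Matrix.cons_val]
  rw [hk, hk, hk, pd_comm (hf 2) 0 1, pd_comm (hf 1) 0 2, pd_comm (hf 0) 1 2]
  ring

lemma crl_smooth {f : Fin 3 → (Fin 3 → ℝ) → ℝ} (hf : ∀ j, ContDiff ℝ (⊤ : ℕ∞) (f j)) (j) :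
    ContDiff ℝ (⊤ : ℕ∞) (fun x => crl (fun c e => pd c (f e) x) j) := by
  have := fun c e => pd_contDiff (hf e) c
  fin_cases j <;> simp [crl] <;> exact (this _ _).sub (this _ _)

lemma crl_compact {f : Fin 3 → (Fin 3 → ℝ) → ℝ} (hf : ∀ j, HasCompactSupport (f j)) (j) :
    HasCompactSupport (fun x => crl (fun c e => pd c (f e) x) j) := by
  have := fun c e => pd_compact (hf e) c
  fin_cases j <;> simp [crl] <;> exact (this _ _).sub (this _ _)

lemma crl_ibp {f φ : Fin 3 → (Fin 3 → ℝ) → ℝ} (hf : ∀ j, ContDiff ℝ (⊤ : ℕ∞) (f j)) (hfc : ∀ j, HasCompactSupport (f j))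
    (hφ : ∀ j, ContDiff ℝ 1 (φ j)) :
    ∑ j, ∫ x, f j x * crl (fun c d => pd c (φ d) x) j = ∑ d, ∫ x, crl (fun c e => pd c (f e) x) d * φ d x := by
  have hφ' : ∀ c d, Continuous (pd c (φ d)) := fun c d => ((hφ d).continuous_fderiv one_ne_zero).clm_apply continuous_const
  have i1 : ∀ j c d, Integrable (fun x => f j x * pd c (φ d) x) := fun j c d =>
    ((hf j).continuous.mul (hφ' c d)).integrable_of_hasCompactSupport (hfc j).mul_right
  have i2 : ∀ j c d, Integrable (fun x => pd c (f j) x * φ d x) := fun j c d =>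
    ((pd_contDiff (hf j) c).continuous.mul (hφ d).continuous).integrable_of_hasCompactSupport (pd_compact (hfc j) c).mul_right
  have i3 : ∀ j c d, ∫ x, f j x * pd c (φ d) x = - ∫ x, pd c (f j) x * φ d x := fun j c d =>
    ibp ((hf j).of_le (by exact_mod_cast le_top)) (hfc j) (hφ d) c
  rw [Fin.sum_univ_three, Fin.sum_univ_three]
  simp only [crl, Matrix.cons_val_zero, Matrix.cons_val_one, Matrix.cons_val, mul_sub, sub_mul]
  rw [integral_sub (i1 _ _ _) (i1 _ _ _), integral_sub (i1 _ _ _) (i1 _ _ _), integral_sub (i1 _ _ _) (i1 _ _ _),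
    integral_sub (i2 _ _ _) (i2 _ _ _), integral_sub (i2 _ _ _) (i2 _ _ _), integral_sub (i2 _ _ _) (i2 _ _ _)]
  simp only [i3]
  ring

open scoped SchwartzMap in
lemma cz_kernel (m : 𝓢(EuclideanSpace ℝ (Fin 3), ℂ)) (h0 : m 0 = 0) :
    ∃ C : ℝ≥0∞, C ≠ ⊤ ∧ ∀ (N : ℕ) (G : (Fin 3 → ℝ) → ℝ), Integrable G →
      ∫⁻ x, ‖cv (rk (msum N m)) G x‖ₑ ^ (3:ℝ) ≤ C * ∫⁻ x, ‖G x‖ₑ ^ (3:ℝ) := by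
  obtain ⟨B, hB, h⟩ := czk_rk_neg m h0
  refine ⟨(3504 * B + 768) ^ (2:ℝ), ?_, fun N G hG => cz_three (h N) hG⟩
  exact ENNReal.rpow_ne_top_of_nonneg (by norm_num) (ENNReal.add_ne_top.2 ⟨ENNReal.mul_ne_top (by norm_num) hB, by norm_num⟩)

lemma opnorm_le (T : (Fin 3 → ℝ) →L[ℝ] ℝ) : ‖T‖ₑ ≤ ∑ c, ‖T (Pi.single c 1)‖ₑ := by
  have h : ‖T‖ ≤ ∑ c, ‖T (Pi.single c 1)‖ := by
    refine T.opNorm_le_bound (by positivity) fun v => ?_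
    have e : T v = ∑ c, v c * T (Pi.single c 1) := by
      conv_lhs => rw [← Finset.univ_sum_single v, map_sum]
      refine Finset.sum_congr rfl fun c _ => ?_
      rw [← smul_eq_mul, ← map_smul, ← Pi.single_smul]; simp
    rw [e, Finset.sum_mul]
    refine (norm_sum_le _ _).trans (Finset.sum_le_sum fun c _ => ?_)
    rw [norm_mul, mul_comm]
    gcongr
    exact norm_le_pi_norm v c
  rw [← ofReal_norm]
  refine (ENNReal.ofReal_le_ofReal h).trans ?_
  rw [ENNReal.ofReal_sum_of_nonneg (fun _ _ => norm_nonneg _)]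
  simp_rw [ofReal_norm]; rfl

open scoped SchwartzMap in
lemma grad_bound (l : 𝓢(EuclideanSpace ℝ (Fin 3), ℂ)) :
    ∃ C : ℝ≥0∞, C ≠ ⊤ ∧ ∀ (N : ℕ) (G : (Fin 3 → ℝ) → ℝ), Integrable G →
      (∫⁻ x, ‖fderiv ℝ (cv (rk (lsum N l)) G) x‖ₑ ^ (3:ℝ)) ^ ((1:ℝ)/3) ≤ C * (∫⁻ x, ‖G x‖ₑ ^ (3:ℝ)) ^ ((1:ℝ)/3) := by
  choose C hC h using fun c => cz_kernel (Dsym c l) (by rw [Dsym_apply]; simp)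
  refine ⟨(9 * ∑ c, C c) ^ ((1:ℝ)/3), ENNReal.rpow_ne_top_of_nonneg (by norm_num)
    (ENNReal.mul_ne_top (by norm_num) (ENNReal.sum_ne_top.2 fun c _ => hC c)), fun N G hG => ?_⟩
  rw [← ENNReal.mul_rpow_of_nonneg _ _ (by norm_num)]
  gcongr
  have hm : ∀ c, Measurable fun x => ‖pd c (cv (rk (lsum N l)) G) x‖ₑ ^ (3:ℝ) := fun c =>
    ((((cv_contDiff (rk (lsum N l)) hG).continuous_fderiv one_ne_zero).clm_apply continuous_const).enorm.measurable).pow_const _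
  calc ∫⁻ x, ‖fderiv ℝ (cv (rk (lsum N l)) G) x‖ₑ ^ (3:ℝ) ≤ ∫⁻ x, 9 * ∑ c, ‖pd c (cv (rk (lsum N l)) G) x‖ₑ ^ (3:ℝ) := by
        refine lintegral_mono fun x => ?_
        refine (ENNReal.rpow_le_rpow (opnorm_le _) (by norm_num)).trans ?_
        refine (ENNReal.rpow_sum_le_const_mul_sum_rpow _ _ (by norm_num)).trans ?_
        simp only [Finset.card_univ, Fintype.card_fin]
        refine le_of_eq ?_
        congr 1
        rw [show (3:ℝ) - 1 = ((2:ℕ):ℝ) by norm_num, ENNReal.rpow_natCast]; norm_num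
    _ = 9 * ∑ c, ∫⁻ x, ‖pd c (cv (rk (lsum N l)) G) x‖ₑ ^ (3:ℝ) := by
        rw [lintegral_const_mul' _ _ (by norm_num), lintegral_finsetSum _ (fun c _ => hm c)]
    _ ≤ 9 * ∑ c, C c * ∫⁻ x, ‖G x‖ₑ ^ (3:ℝ) := by
        gcongr with c
        refine le_trans (le_of_eq ?_) (h c N G hG)
        congr 1; ext x
        rw [pd_cv c _ hG]
        simp_rw [pd_rk_lsum]
    _ = _ := by rw [← Finset.sum_mul, mul_assoc]

open MeasureTheory
open scoped ENNReal

lemma eLp32 {E : Type*} [NormedAddCommGroup E] (f : (Fin 3 → ℝ) → E) :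
    eLpNorm f (ENNReal.ofReal (3/2)) volume = (∫⁻ x, ‖f x‖ₑ ^ (3/2:ℝ)) ^ (1/(3/2:ℝ)) := by
  rw [eLpNorm_eq_lintegral_rpow_enorm_toReal (by simp) (by simp), ENNReal.toReal_ofReal (by norm_num)]

lemma holder32 {f g : (Fin 3 → ℝ) → ℝ} (hf : Continuous f) (hg : Continuous g) :
    ‖∫ x, f x * g x‖ₑ ≤ eLpNorm f (ENNReal.ofReal (3/2)) volume * (∫⁻ x, ‖g x‖ₑ ^ (3:ℝ)) ^ ((1:ℝ)/3) := by
  rw [eLp32]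
  have hpq : (3/2:ℝ).HolderConjugate 3 := by
    rw [Real.holderConjugate_iff]; norm_num
  refine (enorm_integral_le_lintegral_enorm _).trans ?_
  simp_rw [enorm_mul]
  exact ENNReal.lintegral_mul_le_Lp_mul_Lq volume hpq hf.enorm.measurable.aemeasurable hg.enorm.measurable.aemeasurable

lemma pair_bound {n : ℕ} (B : Fin n → Fin 3 → Fin 3 → ℝ)
    (hB : ∀ ξ : EuclideanSpace ℝ (Fin 3), ξ ≠ 0 → ∀ v : Fin 3 → ℝ, (∀ w, ∑ i, v i * sal B w i ξ = 0) → v = 0)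
    (a b : Fin 3) :
    ∃ C : ℝ≥0∞, C ≠ ⊤ ∧ ∀ F : Fin 3 → Fin 3 → (Fin 3 → ℝ) → ℝ,
      (∀ i j, ContDiff ℝ (⊤ : ℕ∞) (F i j)) → (∀ i j, HasCompactSupport (F i j)) →
      ∀ G : (Fin 3 → ℝ) → ℝ, Continuous G → HasCompactSupport G →
      ‖∫ x, F a b x * G x‖ₑ ≤ C * ((∑ w, eLpNorm (fun x => ∑ i, ∑ j, B w i j * F i j x) (ENNReal.ofReal (3/2)) volume) +
        ∑ i, ∫⁻ x, ∑ d, ‖crl (fun c e => pd c (F i e) x) d‖ₑ) * (∫⁻ x, ‖G x‖ₑ ^ (3:ℝ)) ^ ((1:ℝ)/3) := by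
  obtain ⟨η, hηc, hη1⟩ := exists_eta
  obtain ⟨k, l, hk0, hkl⟩ := symbols B hB (psi η) (psi_compact hηc) (psi_zero hη1)
  choose Ck hCk hk using fun w => cz_kernel (k a b w) (hk0 a b w)
  choose Cl hCl hl using fun i d => grad_bound (l a b i d)
  set C1 : ℝ≥0∞ := ∑ w, Ck w ^ ((1:ℝ)/3) with hC1
  set C2 : ℝ≥0∞ := ∑ i, ∑ d, 4 * Cl i d with hC2
  have hC1t : C1 ≠ ⊤ := ENNReal.sum_ne_top.2 fun w _ => ENNReal.rpow_ne_top_of_nonneg (by norm_num) (hCk w)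
  have hC2t : C2 ≠ ⊤ := ENNReal.sum_ne_top.2 fun i _ => ENNReal.sum_ne_top.2 fun d _ =>
    ENNReal.mul_ne_top (by norm_num) (hCl i d)
  refine ⟨C1 + C2, ENNReal.add_ne_top.2 ⟨hC1t, hC2t⟩, fun F hF hFc G hG hGc => ?_⟩
  have hGi : Integrable G := hG.integrable_of_hasCompactSupport hGc
  set Γ := (∫⁻ x, ‖G x‖ₑ ^ (3:ℝ)) ^ ((1:ℝ)/3) with hΓ
  set P := ∑ w, eLpNorm (fun x => ∑ i, ∑ j, B w i j * F i j x) (ENNReal.ofReal (3/2)) volume with hP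
  set Q := ∑ i, ∫⁻ x, ∑ d, ‖crl (fun c e => pd c (F i e) x) d‖ₑ with hQ
  have hlim := (approx_pair η hη1.self_of_nhds (hF a b).continuous (hFc a b) hG hGc).enorm
  refine le_of_tendsto hlim (Filter.Eventually.of_forall fun N => ?_)
  have hKc : ∀ w, Continuous (cv (rk (msum N (k a b w))) G) := fun w => by
    obtain ⟨M, hM⟩ := schw_bdd (rk (msum N (k a b w)))
    exact cv_cont (rk _).continuous hM hGi
  have hLc : ∀ i d, ContDiff ℝ 1 (cv (rk (lsum N (l a b i d))) G) := fun i d => cv_contDiff _ hGi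
  have hLc' : ∀ i j, Continuous fun x => crl (fun c d => pd c (cv (rk (lsum N (l a b i d))) G) x) j := by
    intro i j
    have : ∀ c d, Continuous (pd c (cv (rk (lsum N (l a b i d))) G)) := fun c d =>
      ((hLc i d).continuous_fderiv one_ne_zero).clm_apply continuous_const
    fin_cases j <;> simp [crl] <;> exact (this _ _).sub (this _ _)
  have hpt : ∀ x, F a b x * cv (rk (msum N (psi η))) G x =
      ∑ w, (∑ i, ∑ j, B w i j * F i j x) * cv (rk (msum N (k a b w))) G x +
      ∑ i, ∑ j, F i j x * crl (fun c d => pd c (cv (rk (lsum N (l a b i d))) G) x) j := by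
    intro x
    have h1 : F a b x * cv (rk (msum N (psi η))) G x =
        ∑ i, ∑ j, F i j x * ((if i = a ∧ j = b then 1 else 0) * cv (rk (msum N (psi η))) G x) := by
      rw [Finset.sum_eq_single a, Finset.sum_eq_single b]
      · simp
      · intro j _ hj; simp [hj]
      · simp
      · intro i _ hi; simp [hi]
      · simp
    rw [h1]
    simp_rw [fun i j => kernel_identity (fun w => B w i j) (psi η) _ (k a b) (l a b i) j (hkl a b i j) N hGi x]
    simp_rw [mul_add, Finset.sum_add_distrib]
    congr 1
    simp_rw [Finset.sum_mul, Finset.mul_sum]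
    symm
    rw [Finset.sum_comm]
    refine Finset.sum_congr rfl fun i _ => ?_
    rw [Finset.sum_comm]
    exact Finset.sum_congr rfl fun j _ => Finset.sum_congr rfl fun w _ => by ring
  have hAc : ∀ w, Continuous (fun x => ∑ i, ∑ j, B w i j * F i j x) := fun w => by
    have := fun i j => (hF i j).continuous
    fun_prop
  have hAcs : ∀ w, HasCompactSupport (fun x => ∑ i, ∑ j, B w i j * F i j x) := fun w => by
    have h : ∀ i j, HasCompactSupport (fun x => B w i j * F i j x) := fun i j => (hFc i j).mul_left
    have h' : ∀ i, HasCompactSupport (fun x => B w i 0 * F i 0 x + B w i 1 * F i 1 x + B w i 2 * F i 2 x) :=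
      fun i => ((h i 0).add (h i 1)).add (h i 2)
    simp only [Fin.sum_univ_three]
    exact ((h' 0).add (h' 1)).add (h' 2)
  have hIntg : ∫ x, F a b x * cv (rk (msum N (psi η))) G x =
      (∑ w, ∫ x, (∑ i, ∑ j, B w i j * F i j x) * cv (rk (msum N (k a b w))) G x) +
      ∑ i, ∑ d, ∫ x, crl (fun c e => pd c (F i e) x) d * cv (rk (lsum N (l a b i d))) G x := by
    simp_rw [hpt]
    have i1 : ∀ w, Integrable (fun x => (∑ i, ∑ j, B w i j * F i j x) * cv (rk (msum N (k a b w))) G x) := fun w =>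
      ((hAc w).mul (hKc w)).integrable_of_hasCompactSupport (hAcs w).mul_right
    have i2 : ∀ i j, Integrable (fun x => F i j x * crl (fun c d => pd c (cv (rk (lsum N (l a b i d))) G) x) j) := fun i j =>
      ((hF i j).continuous.mul (hLc' i j)).integrable_of_hasCompactSupport (hFc i j).mul_right
    rw [integral_add (integrable_finsetSum _ fun w _ => i1 w)
      (integrable_finsetSum _ fun i _ => integrable_finsetSum _ fun j _ => i2 i j)]
    rw [integral_finsetSum _ fun w _ => i1 w, integral_finsetSum _ fun i _ => integrable_finsetSum _ fun j _ => i2 i j]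
    congr 1
    refine Finset.sum_congr rfl fun i _ => ?_
    rw [integral_finsetSum _ fun j _ => i2 i j]
    exact crl_ibp (hF i) (hFc i) (hLc i)
  rw [hIntg]
  have b1 : ∀ w, ‖∫ x, (∑ i, ∑ j, B w i j * F i j x) * cv (rk (msum N (k a b w))) G x‖ₑ ≤ P * (Ck w ^ ((1:ℝ)/3) * Γ) := by
    intro w
    refine (holder32 (hAc w) (hKc w)).trans ?_
    refine mul_le_mul' (Finset.single_le_sum (f := fun w => eLpNorm (fun x => ∑ i, ∑ j, B w i j * F i j x) (ENNReal.ofReal (3/2)) volume) (fun _ _ => zero_le) (Finset.mem_univ w)) ?_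
    rw [hΓ, ← ENNReal.mul_rpow_of_nonneg _ _ (by norm_num)]
    exact ENNReal.rpow_le_rpow (hk w N G hGi) (by norm_num)
  have b2 : ∀ i d, ‖∫ x, crl (fun c e => pd c (F i e) x) d * cv (rk (lsum N (l a b i d))) G x‖ₑ ≤ Q * (4 * Cl i d * Γ) := by
    intro i d
    have := van_schaftingen d (f := fun d x => crl (fun c e => pd c (F i e) x) d)
      (fun j => (crl_smooth (hF i) j).of_le (by exact_mod_cast le_top)) (crl_compact (hFc i)) (crl_div (hF i)) (hLc i d)
    refine this.trans ?_
    have q1 : ∫⁻ x, ∑ d, ‖crl (fun c e => pd c (F i e) x) d‖ₑ ≤ Q :=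
      Finset.single_le_sum (f := fun i => ∫⁻ x, ∑ d, ‖crl (fun c e => pd c (F i e) x) d‖ₑ) (fun _ _ => zero_le) (Finset.mem_univ i)
    calc _ ≤ 4 * Q * (Cl i d * Γ) := by gcongr; exact hl i d N G hGi
      _ = _ := by ring
  calc _ ≤ ∑ w, P * (Ck w ^ ((1:ℝ)/3) * Γ) + ∑ i, ∑ d, Q * (4 * Cl i d * Γ) := by
        refine (enorm_add_le _ _).trans (add_le_add ?_ ?_)
        · exact (enorm_sum_le _ _).trans (Finset.sum_le_sum fun w _ => b1 w)
        · exact (enorm_sum_le _ _).trans (Finset.sum_le_sum fun i _ =>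
            (enorm_sum_le _ _).trans (Finset.sum_le_sum fun d _ => b2 i d))
    _ = P * (C1 * Γ) + Q * (C2 * Γ) := by
        simp_rw [hC1, hC2, Finset.sum_mul, Finset.mul_sum]
    _ ≤ (C1 + C2) * P * Γ + (C1 + C2) * Q * Γ := by
        refine add_le_add ?_ ?_
        · calc P * (C1 * Γ) = C1 * P * Γ := by ring
            _ ≤ _ := by gcongr; exact le_self_add
        · calc Q * (C2 * Γ) = C2 * Q * Γ := by ring
            _ ≤ _ := by gcongr; exact le_add_self
    _ = _ := by ring

open MeasureTheory
open scoped ENNReal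

noncomputable def sg (t : ℝ) : ℝ := Real.sqrt (max t 0) - Real.sqrt (max (-t) 0)

lemma sg_abs (t : ℝ) : |sg t| = Real.sqrt |t| := by
  unfold sg
  rcases le_total 0 t with h | h
  · simp [max_eq_left h, max_eq_right (neg_nonpos.2 h), abs_of_nonneg h]
  · simp [max_eq_right h, max_eq_left (neg_nonneg.2 h), abs_of_nonpos h]

lemma sg_mul (t : ℝ) : t * sg t = |t| * Real.sqrt |t| := by
  unfold sg
  rcases le_total 0 t with h | h
  · simp [max_eq_left h, max_eq_right (neg_nonpos.2 h), abs_of_nonneg h]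
  · simp [max_eq_right h, max_eq_left (neg_nonneg.2 h), abs_of_nonpos h]

lemma sg_enorm3 (t : ℝ) : ‖sg t‖ₑ ^ (3:ℝ) = ‖t‖ₑ ^ (3/2:ℝ) := by
  have : ‖sg t‖ₑ = ‖t‖ₑ ^ (1/2:ℝ) := by
    rw [← ofReal_norm, ← ofReal_norm, Real.norm_eq_abs, sg_abs, Real.sqrt_eq_rpow, Real.norm_eq_abs,
      ENNReal.ofReal_rpow_of_nonneg (abs_nonneg t) (by norm_num)]
  rw [this, ← ENNReal.rpow_mul]; norm_num

lemma sg_enorm_mul (t : ℝ) : ‖t * sg t‖ₑ = ‖t‖ₑ ^ (3/2:ℝ) := by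
  have : ‖sg t‖ₑ = ‖t‖ₑ ^ (1/2:ℝ) := by
    rw [← ofReal_norm, ← ofReal_norm, Real.norm_eq_abs, sg_abs, Real.sqrt_eq_rpow, Real.norm_eq_abs,
      ENNReal.ofReal_rpow_of_nonneg (abs_nonneg t) (by norm_num)]
  rw [enorm_mul, this]
  nth_rw 1 [← ENNReal.rpow_one ‖t‖ₑ]
  rw [← ENNReal.rpow_add_of_nonneg _ _ (by norm_num) (by norm_num)]; norm_num

lemma dual32 {f : (Fin 3 → ℝ) → ℝ} (hf : Continuous f) (hfc : HasCompactSupport f) {R : ℝ≥0∞}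
    (h : ∀ G : (Fin 3 → ℝ) → ℝ, Continuous G → HasCompactSupport G →
      ‖∫ x, f x * G x‖ₑ ≤ R * (∫⁻ x, ‖G x‖ₑ ^ (3:ℝ)) ^ ((1:ℝ)/3)) :
    eLpNorm f (ENNReal.ofReal (3/2)) volume ≤ R := by
  have hsg : Continuous sg := by unfold sg; fun_prop
  have hGc : Continuous fun x => sg (f x) := hsg.comp hf
  have hGs : HasCompactSupport fun x => sg (f x) := hfc.comp_left (g := sg) (by simp [sg])
  have hIntg : Integrable fun x => f x * sg (f x) :=
    (hf.mul hGc).integrable_of_hasCompactSupport hfc.mul_right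
  have h1 := h _ hGc hGs
  simp_rw [sg_enorm3] at h1
  set S := ∫⁻ x, ‖f x‖ₑ ^ (3/2:ℝ) with hS
  have h2 : ‖∫ x, f x * sg (f x)‖ₑ = S := by
    have hn : ∀ x, 0 ≤ f x * sg (f x) := fun x => by rw [sg_mul]; positivity
    rw [← ofReal_norm, Real.norm_of_nonneg (integral_nonneg hn), ofReal_integral_eq_lintegral_ofReal hIntg
      (Filter.Eventually.of_forall hn)]
    refine lintegral_congr fun x => ?_
    rw [← sg_enorm_mul, ← ofReal_norm, Real.norm_of_nonneg (hn x)]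
  have hfin : S ≠ ⊤ := by
    rw [← h2]; exact enorm_ne_top
  rw [h2] at h1
  rw [eLp32, ← hS]
  by_cases hS0 : S = 0
  · rw [hS0]; simp
  have hne : S ^ ((1:ℝ)/3) ≠ 0 := by simp [ENNReal.rpow_eq_zero_iff, hS0, hfin]
  have hnt : S ^ ((1:ℝ)/3) ≠ ⊤ := ENNReal.rpow_ne_top_of_nonneg (by norm_num) hfin
  have e : S = S ^ (1/(3/2:ℝ)) * S ^ ((1:ℝ)/3) := by
    rw [← ENNReal.rpow_add _ _ hS0 hfin]; norm_num
  nth_rw 1 [e] at h1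
  exact (ENNReal.mul_le_mul_iff_left hne hnt).1 h1

lemma A_expand {n : ℕ} (A : (Fin 3 → Fin 3 → ℝ) →ₗ[ℝ] (Fin n → ℝ)) (M : Fin 3 → Fin 3 → ℝ) (w : Fin n) :
    A M w = ∑ i, ∑ j, A (fun i' j' => if i' = i ∧ j' = j then 1 else 0) w * M i j := by
  have h : M = ∑ i, ∑ j, M i j • (fun i' j' => if i' = i ∧ j' = j then (1:ℝ) else 0 : Fin 3 → Fin 3 → ℝ) := by
    ext p q
    simp only [Finset.sum_apply, Pi.smul_apply, smul_eq_mul]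
    rw [Finset.sum_eq_single p, Finset.sum_eq_single q]
    · simp
    · intro j _ hj; simp [hj.symm]
    · simp
    · intro i _ hi; simp [hi.symm]
    · simp
  conv_lhs => rw [h]
  simp only [map_sum, map_smul, Finset.sum_apply, Pi.smul_apply, smul_eq_mul]
  exact Finset.sum_congr rfl fun i _ => Finset.sum_congr rfl fun j _ => by ring

theorem korn_maxwell_sobolev_p_one (N : ℕ)
    (A : (Fin 3 → Fin 3 → ℝ) →ₗ[ℝ] (Fin N → ℝ)) (hA : IsElliptic A) :
    ∃ c : ℝ, 0 < c ∧
      ∀ F : (Fin 3 → ℝ) → Fin 3 → Fin 3 → ℝ,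
        ContDiff ℝ (⊤ : ℕ∞) F → HasCompactSupport F →
          eLpNorm F (ENNReal.ofReal (3 / 2)) volume ≤
            ENNReal.ofReal c *
              (eLpNorm (fun x => A (F x)) (ENNReal.ofReal (3 / 2)) volume +
                eLpNorm (fun x => mcurl F x) 1 volume) := by
  set B : Fin N → Fin 3 → Fin 3 → ℝ := fun w i j => A (fun i' j' => if i' = i ∧ j' = j then 1 else 0) w with hBdef
  have hB : ∀ ξ : EuclideanSpace ℝ (Fin 3), ξ ≠ 0 → ∀ v : Fin 3 → ℝ, (∀ w, ∑ i, v i * sal B w i ξ = 0) → v = 0 := by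
    intro ξ hξ v hv
    have hξ' : (fun i => ξ i) ≠ 0 := fun h => hξ (by ext i; exact congrFun h i)
    refine hA _ hξ' ?_
    ext w
    simp only
    rw [A_expand A (fun i j => v i * ξ j) w, A_expand A (fun i j => (0 : Fin 3 → ℝ) i * ξ j) w]
    rw [show ∑ i, ∑ j, A (fun i' j' => if i' = i ∧ j' = j then 1 else 0) w * (v i * ξ j) = ∑ i, v i * sal B w i ξ from ?_]
    · rw [hv w]; simp
    · refine Finset.sum_congr rfl fun i _ => ?_
      rw [sal, Finset.mul_sum]
      exact Finset.sum_congr rfl fun j _ => by simp only [hBdef]; ring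
  choose C hC hCb using fun a b => pair_bound B hB a b
  set K : ℝ≥0∞ := (∑ p : Fin 3 × Fin 3, C p.1 p.2) * (N + 9) with hK
  have hKt : K ≠ ⊤ := ENNReal.mul_ne_top (ENNReal.sum_ne_top.2 fun p _ => hC _ _) (by simp)
  refine ⟨K.toReal + 1, by positivity, fun F hF hFc => ?_⟩
  have hFs : ∀ i j, ContDiff ℝ (⊤ : ℕ∞) (fun x => F x i j) := fun i j => contDiff_pi.1 (contDiff_pi.1 hF i) j
  have hFcs : ∀ i j, HasCompactSupport (fun x => F x i j) := fun i j =>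
    hFc.comp_left (g := fun M : Fin 3 → Fin 3 → ℝ => M i j) rfl
  set P := eLpNorm (fun x => A (F x)) (ENNReal.ofReal (3 / 2)) volume with hP
  set Q := eLpNorm (fun x => mcurl F x) 1 volume with hQ
  have hP1 : ∑ w, eLpNorm (fun x => ∑ i, ∑ j, B w i j * F x i j) (ENNReal.ofReal (3/2)) volume ≤ N * P := by
    have : ∀ w, eLpNorm (fun x => ∑ i, ∑ j, B w i j * F x i j) (ENNReal.ofReal (3/2)) volume ≤ P := by
      intro w
      refine eLpNorm_mono fun x => ?_
      rw [← A_expand A (F x) w]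
      exact norm_le_pi_norm (A (F x)) w
    refine (Finset.sum_le_sum fun w _ => this w).trans ?_
    simp
  have hQ1 : ∑ i, ∫⁻ x, ∑ d, ‖crl (fun c e => pd c (fun x => F x i e) x) d‖ₑ ≤ 9 * Q := by
    have : ∀ i, ∫⁻ x, ∑ d, ‖crl (fun c e => pd c (fun x => F x i e) x) d‖ₑ ≤ 3 * Q := by
      intro i
      rw [hQ, eLpNorm_one_eq_lintegral_enorm, ← lintegral_const_mul' _ _ (by norm_num)]
      refine lintegral_mono fun x => ?_
      have : ∀ d, ‖crl (fun c e => pd c (fun x => F x i e) x) d‖ₑ ≤ ‖mcurl F x‖ₑ := by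
        intro d
        rw [← ofReal_norm, ← ofReal_norm]
        exact ENNReal.ofReal_le_ofReal ((norm_le_pi_norm (mcurl F x i) d).trans (norm_le_pi_norm (mcurl F x) i))
      refine (Finset.sum_le_sum fun d _ => this d).trans ?_
      simp
    refine (Finset.sum_le_sum fun i _ => this i).trans ?_
    simp only [Finset.sum_const, Finset.card_univ, Fintype.card_fin, nsmul_eq_mul, ← mul_assoc]
    norm_num
  have hcomp : ∀ a b, eLpNorm (fun x => F x a b) (ENNReal.ofReal (3/2)) volume ≤ C a b * ((N + 9) * (P + Q)) := by
    intro a b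
    refine dual32 (hFs a b).continuous (hFcs a b) fun G hG hGc => ?_
    refine (hCb a b (fun i j x => F x i j) hFs hFcs G hG hGc).trans ?_
    gcongr
    refine (add_le_add hP1 hQ1).trans ?_
    calc (N:ℝ≥0∞) * P + 9 * Q ≤ (N + 9) * P + (N + 9) * Q := by
          gcongr
          · exact le_self_add
          · exact le_add_self
      _ = _ := by ring
  have hsum : eLpNorm F (ENNReal.ofReal (3/2)) volume ≤
      ∑ p : Fin 3 × Fin 3, eLpNorm (fun x => F x p.1 p.2) (ENNReal.ofReal (3/2)) volume := by
    have h1 : eLpNorm F (ENNReal.ofReal (3/2)) volume ≤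
        eLpNorm (∑ p : Fin 3 × Fin 3, fun x => ‖F x p.1 p.2‖) (ENNReal.ofReal (3/2)) volume := by
      refine eLpNorm_mono fun x => ?_
      rw [Finset.sum_apply, Real.norm_of_nonneg (Finset.sum_nonneg fun _ _ => norm_nonneg _)]
      have hs : 0 ≤ ∑ p : Fin 3 × Fin 3, ‖F x p.1 p.2‖ := Finset.sum_nonneg fun _ _ => norm_nonneg _
      refine (pi_norm_le_iff_of_nonneg hs).2 fun i => (pi_norm_le_iff_of_nonneg hs).2 fun j => ?_
      exact Finset.single_le_sum (f := fun p : Fin 3 × Fin 3 => ‖F x p.1 p.2‖) (fun _ _ => norm_nonneg _) (Finset.mem_univ (i, j))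
    refine h1.trans ?_
    refine (eLpNorm_sum_le (fun p _ => (hFs p.1 p.2).continuous.norm.aestronglyMeasurable) ?_).trans ?_
    · rw [← ENNReal.ofReal_one]; exact ENNReal.ofReal_le_ofReal (by norm_num)
    · simp_rw [eLpNorm_norm]; rfl
  calc _ ≤ ∑ p : Fin 3 × Fin 3, C p.1 p.2 * ((N + 9) * (P + Q)) := hsum.trans (Finset.sum_le_sum fun p _ => hcomp _ _)
    _ = K * (P + Q) := by rw [← Finset.sum_mul, hK, mul_assoc]
    _ ≤ _ := by
      gcongr
      rw [← ENNReal.ofReal_toReal hKt]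
      exact ENNReal.ofReal_le_ofReal (by simp)
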